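/- arXiv:1508.03086 — 2 statements merged into one kernel-verified Lean document; each statement's English description precedes it below -/
import Mathlib

section
/- Let K be a field and q ∈ K^× not a root of unity. The algebra of quantum matrices R_q[M_{m×n}] is a symmetric quantum nilpotent algebra of dimension N = mn with respect to the presentation x_{(i−1)n+j} = t_{ij} and the action of the torus H = (K^×)^{m+n} given by (ξ_1, …, ξ_{m+n}) · t_{ij} = ξ_i ξ_{m+j}^{−1} t_{ij}; in particular each δ_k is locally nilpotent, and the elements h_{ij} := (1, …, 1, q^{−1}, 1, …, 1, q, 1, …, 1) ∈ H (with q^{−1} in position i and q in position m+j) satisfy σ_{(i−1)n+j} = (h_{ij} ·) and h_{ij} · t_{ij} = q^{−2} t_{ij}. -/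
open scoped BigOperators

noncomputable section

universe u v

/-- The group of `K`-points of a split torus of rank `r`. -/
abbrev Torus (K : Type u) [Field K] (r : ℕ) : Type u := Fin r → Kˣ

section Core

variable (K : Type u) [Field K] {R : Type v} [Ring R] [Algebra K R] {r N : ℕ}

/-- `a` is an eigenvector of the torus action `act` with (integral) character `f`. -/
def IsEigenWith (act : Torus K r →* (R ≃ₐ[K] R)) (f : Fin r → ℤ) (a : R) : Prop :=
  ∀ ξ : Torus K r, act ξ a = ((∏ i, ξ i ^ f i : Kˣ) : K) • a

/-- The torus action `act` is rational: every element is a finite sum of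
eigenvectors whose eigenvalues are given by integral characters of the torus. -/
def IsRationalAction (act : Torus K r →* (R ≃ₐ[K] R)) : Prop :=
  ∀ a : R, ∃ (s : Finset (Fin r → ℤ)) (c : (Fin r → ℤ) → R),
    a = ∑ f ∈ s, c f ∧ ∀ f ∈ s, IsEigenWith K act f (c f)

/-- The ordered monomial `x 0 ^ m 0 * x 1 ^ m 1 * ⋯ * x (N-1) ^ m (N-1)`. -/
def ordMonomial (x : Fin N → R) (m : Fin N → ℕ) : R :=
  ((List.finRange N).map fun k => x k ^ m k).prod

/-- The ordered monomial in the reversed order of the generators. -/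
def revOrdMonomial (x : Fin N → R) (m : Fin N → ℕ) : R :=
  ((List.finRange N).reverse.map fun k => x k ^ m k).prod

/-- The subalgebra generated by the first `m` of the elements `x 0, …, x (N-1)`. -/
def Rsub (x : Fin N → R) (m : ℕ) : Subalgebra K R :=
  Algebra.adjoin K (x '' {l : Fin N | (l : ℕ) < m})

/-- The subalgebra generated by the elements `x l` with `m < l` (for the reversed order). -/
def RsubRev (x : Fin N → R) (m : ℕ) : Subalgebra K R :=
  Algebra.adjoin K (x '' {l : Fin N | m < (l : ℕ)})

/-- The skew derivation `δ_k : a ↦ x_k a − (h_k · a) x_k` attached to the `k`-th generator. -/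
def skewDelta (act : Torus K r →* (R ≃ₐ[K] R)) (x : Fin N → R) (h : Fin N → Torus K r)
    (k : Fin N) : R → R :=
  fun a => x k * a - act (h k) a * x k

end Core

/-- A quantum nilpotent algebra (CGL extension) of dimension `N`:  an iterated skew
polynomial extension `R = K[x_1][x_2; σ_2, δ_2]⋯[x_N; σ_N, δ_N]` equipped with a rational
action of a torus `H = (Kˣ)^r` by `K`-algebra automorphisms such that the `x_k` are
`H`-eigenvectors, each `δ_k` is a locally nilpotent `σ_k`-derivation of the subalgebra
generated by `x_1, …, x_{k-1}`, and each `σ_k` is given by the action of a torus element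
`h_k` whose eigenvalue `λ_k` on `x_k` is not a root of unity.  The iterated skew polynomial
presentation is encoded by the generation, linear independence of ordered monomials
(PBW basis) and the skew commutation conditions. -/
structure QNA (K : Type u) [Field K] (R : Type v) [Ring R] [Algebra K R] (N r : ℕ) where
  x : Fin N → R
  act : Torus K r →* (R ≃ₐ[K] R)
  h : Fin N → Torus K r
  lam : Fin N → K
  rational : IsRationalAction K act
  gen : Algebra.adjoin K (Set.range x) = ⊤
  pbw : LinearIndependent K (ordMonomial (R := R) x)
  eigenvec : ∀ k : Fin N, ∃ f : Fin r → ℤ, IsEigenWith K act f (x k)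
  stable : ∀ k : Fin N, ∀ a ∈ Rsub K x (k : ℕ), skewDelta K act x h k a ∈ Rsub K x (k : ℕ)
  locnil : ∀ k : Fin N, ∀ a ∈ Rsub K x (k : ℕ), ∃ n : ℕ, (skewDelta K act x h k)^[n] a = 0
  hx : ∀ k, act (h k) (x k) = lam k • x k
  lam_not_root : ∀ k, ∀ n : ℕ, n ≠ 0 → lam k ^ n ≠ 1

/-- A symmetric quantum nilpotent algebra: a quantum nilpotent algebra which admits an
iterated skew polynomial presentation, satisfying the same axioms, also for the reversed
order `x_N, x_{N-1}, …, x_1` of the generators, with respect to torus elements `h*_k`. -/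
structure SymQNA (K : Type u) [Field K] (R : Type v) [Ring R] [Algebra K R] (N r : ℕ)
    extends QNA K R N r where
  hstar : Fin N → Torus K r
  lamstar : Fin N → K
  pbwRev : LinearIndependent K (revOrdMonomial (R := R) x)
  stableRev : ∀ k : Fin N, ∀ a ∈ RsubRev K x (k : ℕ),
    skewDelta K act x hstar k a ∈ RsubRev K x (k : ℕ)
  locnilRev : ∀ k : Fin N, ∀ a ∈ RsubRev K x (k : ℕ),
    ∃ n : ℕ, (skewDelta K act x hstar k)^[n] a = 0
  hxstar : ∀ k, act (hstar k) (x k) = lamstar k • x k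
  lamstar_not_root : ∀ k, ∀ n : ℕ, n ≠ 0 → lamstar k ^ n ≠ 1

section Prime

variable (K : Type u) [Field K] {R : Type v} [Ring R] [Algebra K R] {r N : ℕ}

/-- The skew derivation `δ_k` of the `k`-th step of the presentation vanishes. -/
def deltaZero (Q : QNA K R N r) (k : Fin N) : Prop :=
  ∀ a ∈ Rsub K Q.x (k : ℕ), skewDelta K Q.act Q.x Q.h k a = 0

/-- `p` is a prime element of the subalgebra `A`:  `p` is a nonzero noninvertible normal
element of `A` (`pA = Ap`) such that `A/Ap` is a domain. -/
def IsPrimeIn (A : Subalgebra K R) (p : R) : Prop :=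
  p ∈ A ∧ p ≠ 0 ∧ (¬ ∃ u ∈ A, p * u = 1 ∧ u * p = 1) ∧
  (∀ a ∈ A, ∃ b ∈ A, a * p = p * b) ∧
  (∀ a ∈ A, ∃ b ∈ A, p * a = b * p) ∧
  (∀ a ∈ A, ∀ b ∈ A, (∃ d ∈ A, a * b = p * d) → (∃ d ∈ A, a = p * d) ∨ (∃ d ∈ A, b = p * d))

/-- The predecessor function of the level sets of `η`:  `p(k)` is the largest `l < k`
with `η l = η k`, and `⊥` (i.e. `−∞`) if there is no such `l`. -/
def predIdx {α : Type*} [DecidableEq α] (η : Fin N → α) (k : Fin N) : WithBot (Fin N) :=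
  (Finset.univ.filter fun l => l < k ∧ η l = η k).max

/-- The successor function of the level sets of `η`:  `s(k)` is the smallest `l > k`
with `η l = η k`, and `⊤` (i.e. `+∞`) if there is no such `l`. -/
def succIdx {α : Type*} [DecidableEq α] (η : Fin N → α) (k : Fin N) : WithTop (Fin N) :=
  (Finset.univ.filter fun l => k < l ∧ η l = η k).min

/-- `(η, c, y)` is a sequence of homogeneous prime elements for the quantum nilpotent
algebra `Q` in the sense of the prime element theorem:  `y` is defined by the recursion
`y_k = y_{p(k)} x_k − c_k` (if `δ_k ≠ 0`; `y_k = x_k` if `δ_k = 0`), the `y_k` are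
`H`-eigenvectors, and for every `k` the homogeneous prime elements of the subalgebra
`R_k` generated by `x_1, …, x_k` are precisely the nonzero scalar multiples of the
`y_l` with `l ≤ k` and `s(l) > k`. -/
structure IsPrimeSeq (Q : QNA K R N r) (η : Fin N → ℤ) (c : Fin N → R) (y : Fin N → R) :
    Prop where
  c_mem : ∀ k : Fin N, ¬ deltaZero K Q k → c k ∈ Rsub K Q.x (k : ℕ)
  rec_delta_zero : ∀ k : Fin N, deltaZero K Q k → y k = Q.x k
  rec_delta_ne : ∀ k : Fin N, ¬ deltaZero K Q k →
    y k = (WithBot.recBotCoe (1 : R) (fun l => y l) (predIdx η k)) * Q.x k - c k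
  homog : ∀ k : Fin N, ∃ f : Fin r → ℤ, IsEigenWith K Q.act f (y k)
  prime_iff : ∀ k : Fin N, ∀ u : R,
    (IsPrimeIn K (Rsub K Q.x ((k : ℕ) + 1)) u ∧ ∃ f : Fin r → ℤ, IsEigenWith K Q.act f u) ↔
    (∃ l : Fin N, l ≤ k ∧ (∀ l' : Fin N, l < l' → l' ≤ k → η l' ≠ η l) ∧
      ∃ t : Kˣ, u = (t : K) • y l)

/-- The vector `ē_k = e_k + e_{p(k)} + e_{p²(k)} + ⋯ ∈ ℤ^N`. -/
def ebar (η : Fin N → ℤ) (k : Fin N) : Fin N → ℤ :=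
  fun l => if l ≤ k ∧ η l = η k then 1 else 0

/-- The multiplicatively skewsymmetric matrix of eigenvalues:  `1` on the diagonal,
`λ_{kl}` below it and `λ_{lk}⁻¹` above it. -/
def omegaEntry (lam2 : Fin N → Fin N → Kˣ) (k l : Fin N) : Kˣ :=
  if k = l then 1 else if l < k then lam2 k l else (lam2 l k)⁻¹

/-- The unique group bicharacter `Ω : ℤ^N × ℤ^N → Kˣ` with `Ω(e_k, e_l)` equal to `1`,
`λ_{kl}`, `λ_{lk}⁻¹` according as `k = l`, `k > l`, `k < l`. -/
def Omega (lam2 : Fin N → Fin N → Kˣ) (f g : Fin N → ℤ) : Kˣ :=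
  ∏ k, ∏ l, (omegaEntry K lam2 k l) ^ (f k * g l)

/-- The set of exchangeable indices: those `k` with `s(k) ≠ +∞`. -/
def exSet (η : Fin N → ℤ) : Finset (Fin N) :=
  Finset.univ.filter fun k => ∃ l, k < l ∧ η l = η k

/-- Condition (A): `K` contains square roots of the scalars `λ_{kl}` such that the
subgroup of `Kˣ` generated by all of them contains no elements of order 2. -/
def CondA (lam2 : Fin N → Fin N → Kˣ) : Prop :=
  ∃ sq : Fin N → Fin N → Kˣ, (∀ k l : Fin N, l < k → sq k l ^ 2 = lam2 k l) ∧
    ∀ g ∈ Subgroup.closure {u : Kˣ | ∃ k l : Fin N, l < k ∧ u = sq k l}, g ^ 2 = 1 → g = 1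

/-- Condition (B): there exist positive integers `d_n`, `n ∈ range η`, such that
`(λ*_k)^{d_{η(l)}} = (λ*_l)^{d_{η(k)}}` for all exchangeable `k, l`. -/
def CondB (η : Fin N → ℤ) (lamstar : Fin N → K) : Prop :=
  ∃ d : ℤ → ℕ, (∀ n ∈ Set.range η, 0 < d n) ∧
    ∀ k ∈ exSet η, ∀ l ∈ exSet η, lamstar k ^ d (η l) = lamstar l ^ d (η k)

/-- The defining conditions for the exchange matrix `B̃ ∈ M_{N×ex}(ℤ)`:  columns indexed
outside `ex` vanish; `Ω(Σ_l b_{lk} ē_l, ē_n)` equals `λ*_n` for `k = n` and `1` otherwise;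
and the products `y_1^{b_{1k}} ⋯ y_N^{b_{Nk}}` are fixed under `H`, i.e. the characters
`χ_{y_l}` of the `y_l` satisfy `Σ_l b_{lk} χ_{y_l} = 0`. -/
def IsExchangeMatrix (lam2 : Fin N → Fin N → Kˣ) (η : Fin N → ℤ) (lamstar : Fin N → K)
    (chiy : Fin N → Fin r → ℤ) (B : Fin N → Fin N → ℤ) : Prop :=
  (∀ k : Fin N, k ∉ exSet η → ∀ l, B l k = 0) ∧
  (∀ k ∈ exSet η, ∀ n : Fin N,
    ((Omega K lam2 (fun j => ∑ l, B l k * ebar η l j) (ebar η n) : Kˣ) : K) =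
      (if k = n then lamstar n else 1)) ∧
  (∀ k ∈ exSet η, ∀ i : Fin r, (∑ l, B l k * chiy l i) = 0)

/-- `ι : R →ₐ[K] D` realizes the division ring `D` as the division ring of fractions
`Fract R`:  `ι` is injective and every element of `D` is a right fraction `ι(a) ι(b)⁻¹`. -/
def IsFractionEmb {D : Type v} [DivisionRing D] [Algebra K D] (ι : R →ₐ[K] D) : Prop :=
  Function.Injective ι ∧ ∀ d : D, ∃ a b : R, b ≠ 0 ∧ d * ι b = ι a

end Prime
section QMat

variable (K : Type u) [Field K] (q : Kˣ) (m n : ℕ)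

/-- The defining relations of the algebra of quantum matrices `R_q[M_{m×n}]`. -/
inductive qMatRel : FreeAlgebra K (Fin m × Fin n) → FreeAlgebra K (Fin m × Fin n) → Prop
  | col : ∀ (i k : Fin m) (j : Fin n), i < k →
      qMatRel (FreeAlgebra.ι K (i, j) * FreeAlgebra.ι K (k, j))
        ((q : K) • (FreeAlgebra.ι K (k, j) * FreeAlgebra.ι K (i, j)))
  | row : ∀ (i : Fin m) (j l : Fin n), j < l →
      qMatRel (FreeAlgebra.ι K (i, j) * FreeAlgebra.ι K (i, l))
        ((q : K) • (FreeAlgebra.ι K (i, l) * FreeAlgebra.ι K (i, j)))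
  | comm : ∀ (i k : Fin m) (j l : Fin n), i < k → l < j →
      qMatRel (FreeAlgebra.ι K (i, j) * FreeAlgebra.ι K (k, l))
        (FreeAlgebra.ι K (k, l) * FreeAlgebra.ι K (i, j))
  | serp : ∀ (i k : Fin m) (j l : Fin n), i < k → j < l →
      qMatRel (FreeAlgebra.ι K (i, j) * FreeAlgebra.ι K (k, l))
        (FreeAlgebra.ι K (k, l) * FreeAlgebra.ι K (i, j) +
          ((q : K) - (q : K)⁻¹) • (FreeAlgebra.ι K (i, l) * FreeAlgebra.ι K (k, j)))

/-- The algebra of quantum matrices `R_q[M_{m×n}]`, presented by the generators `t_{ij}`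
and the standard quantum matrix relations. -/
def RqMat : Type u := RingQuot (qMatRel K q m n)

instance : Ring (RqMat K q m n) := inferInstanceAs (Ring (RingQuot (qMatRel K q m n)))

instance : Algebra K (RqMat K q m n) :=
  inferInstanceAs (Algebra K (RingQuot (qMatRel K q m n)))

/-- The generator `t_{ij}` of `R_q[M_{m×n}]`. -/
def tGen (i : Fin m) (j : Fin n) : RqMat K q m n :=
  RingQuot.mkAlgHom K (qMatRel K q m n) (FreeAlgebra.ι K (i, j))

/-- The torus element `h_{ij} = (1,…,1,q⁻¹,1,…,1,q,1,…,1) ∈ (Kˣ)^{m+n}`, with `q⁻¹` in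
position `i` and `q` in position `m+j`. -/
def hMat (i : Fin m) (j : Fin n) : Torus K (m + n) :=
  fun s => if s = Fin.castAdd n i then q⁻¹ else if s = Fin.natAdd m j then q else 1

/-- The number of inversions (the length) of a permutation of `Fin k`. -/
def invCount {k : ℕ} (σ : Equiv.Perm (Fin k)) : ℕ :=
  (Finset.univ.filter fun p : Fin k × Fin k => p.1 < p.2 ∧ σ p.2 < σ p.1).card

/-- The quantum minor `Δ_{I,J} = Σ_{σ ∈ S_k} (−q)^{ℓ(σ)} t_{i_1 j_{σ(1)}} ⋯ t_{i_k j_{σ(k)}}`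
associated to row indices `I` and column indices `J`. -/
def qMinor (k : ℕ) (I : Fin k → Fin m) (J : Fin k → Fin n) : RqMat K q m n :=
  ∑ σ : Equiv.Perm (Fin k), (-(q : K)) ^ invCount σ •
    ((List.finRange k).map fun a => tGen K q m n (I a) (J (σ a))).prod

/-- The solid quantum minor `Δ_{[i−min(i,j)+1, i], [j−min(i,j)+1, j]}` (here `i, j` are
0-based, so the minor has size `min i j + 1` and lower-right corner `(i, j)`). -/
def solidMinor (i : Fin m) (j : Fin n) : RqMat K q m n :=
  qMinor K q m n (min (i : ℕ) (j : ℕ) + 1)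
    (fun a => ⟨(i : ℕ) - min (i : ℕ) (j : ℕ) + (a : ℕ), by
      have := a.isLt; have := i.isLt; omega⟩)
    (fun a => ⟨(j : ℕ) - min (i : ℕ) (j : ℕ) + (a : ℕ), by
      have := a.isLt; have := j.isLt; omega⟩)

end QMat

section Overlap
variable {K : Type*} [Field K] {A : Type*} [Ring A] [Algebra K A] {m n : ℕ}

/-- The scalar by which `σ_c` acts on `t_a`. -/
def sg (q : K) (c a : Fin m × Fin n) : K :=
  (if a.1 = c.1 then q⁻¹ else 1) * (if a.2 = c.2 then q⁻¹ else 1)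

/-- The value of `δ_c` on `t_a`. -/
def dl (q : K) (t : Fin m → Fin n → A) (c a : Fin m × Fin n) : A :=
  if a.1 < c.1 ∧ a.2 < c.2 then -((q - q⁻¹) • (t a.1 c.2 * t c.1 a.2)) else 0

/-- The quantum matrix relations among pairs whose lower right member satisfies `P`. -/
structure RelBelow (q : K) (t : Fin m → Fin n → A) (P : Fin m → Fin n → Prop) : Prop where
  col : ∀ (i k : Fin m) (j : Fin n), i < k → P k j → t i j * t k j = q • (t k j * t i j)
  row : ∀ (i : Fin m) (j l : Fin n), j < l → P i l → t i j * t i l = q • (t i l * t i j)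
  comm : ∀ (i k : Fin m) (j l : Fin n), i < k → l < j → P k l → t i j * t k l = t k l * t i j
  serp : ∀ (i k : Fin m) (j l : Fin n), i < k → j < l → P k l →
    t i j * t k l = t k l * t i j + (q - q⁻¹) • (t i l * t k j)

/-- `(i, j)` is lexicographically smaller than `c`. -/
def ltc (c : Fin m × Fin n) (i : Fin m) (j : Fin n) : Prop :=
  i < c.1 ∨ (i = c.1 ∧ j < c.2)

variable {q : K} {t : Fin m → Fin n → A} {k : Fin m} {l : Fin n}

theorem nf_col (hq : q ≠ 0) (H : RelBelow q t (ltc (k, l)))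
    (i i' : Fin m) (j : Fin n) (h : i < i') (h' : i' < k ∨ (i' = k ∧ j < l)) :
    t i' j * t i j = q⁻¹ • (t i j * t i' j) := by
  rw [H.col i i' j h h', smul_smul, inv_mul_cancel₀ hq, one_smul]

theorem nf_row (hq : q ≠ 0) (H : RelBelow q t (ltc (k, l)))
    (i : Fin m) (j j' : Fin n) (h : j < j') (h' : i < k ∨ (i = k ∧ j' < l)) :
    t i j' * t i j = q⁻¹ • (t i j * t i j') := by
  rw [H.row i j j' h h', smul_smul, inv_mul_cancel₀ hq, one_smul]

theorem nf_comm (H : RelBelow q t (ltc (k, l)))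
    (i i' : Fin m) (j j' : Fin n) (h : i < i') (h2 : j' < j)
    (h' : i' < k ∨ (i' = k ∧ j' < l)) :
    t i' j' * t i j = (1 : K) • (t i j * t i' j') := by
  rw [one_smul, H.comm i i' j j' h h2 h']

theorem nf_serp (H : RelBelow q t (ltc (k, l)))
    (i i' : Fin m) (j j' : Fin n) (h : i < i') (h2 : j < j')
    (h' : i' < k ∨ (i' = k ∧ j' < l)) :
    t i' j' * t i j = t i j * t i' j' - (q - q⁻¹) • (t i j' * t i' j) := by
  rw [H.serp i i' j j' h h2 h']; abel

theorem nf_col' (hq : q ≠ 0) (H : RelBelow q t (ltc (k, l)))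
    (i i' : Fin m) (j : Fin n) (h : i < i') (h' : i' < k ∨ (i' = k ∧ j < l)) (z : A) :
    t i' j * (t i j * z) = q⁻¹ • (t i j * (t i' j * z)) := by
  rw [← mul_assoc, nf_col hq H i i' j h h', smul_mul_assoc, mul_assoc]

theorem nf_row' (hq : q ≠ 0) (H : RelBelow q t (ltc (k, l)))
    (i : Fin m) (j j' : Fin n) (h : j < j') (h' : i < k ∨ (i = k ∧ j' < l)) (z : A) :
    t i j' * (t i j * z) = q⁻¹ • (t i j * (t i j' * z)) := by
  rw [← mul_assoc, nf_row hq H i j j' h h', smul_mul_assoc, mul_assoc]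

theorem nf_comm' (H : RelBelow q t (ltc (k, l)))
    (i i' : Fin m) (j j' : Fin n) (h : i < i') (h2 : j' < j)
    (h' : i' < k ∨ (i' = k ∧ j' < l)) (z : A) :
    t i' j' * (t i j * z) = (1 : K) • (t i j * (t i' j' * z)) := by
  rw [← mul_assoc, nf_comm H i i' j j' h h2 h', smul_mul_assoc, mul_assoc]

theorem nf_serp' (H : RelBelow q t (ltc (k, l)))
    (i i' : Fin m) (j j' : Fin n) (h : i < i') (h2 : j < j')
    (h' : i' < k ∨ (i' = k ∧ j' < l)) (z : A) :
    t i' j' * (t i j * z) = t i j * (t i' j' * z) - (q - q⁻¹) • (t i j' * (t i' j * z)) := by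
  rw [← mul_assoc, nf_serp H i i' j j' h h2 h', sub_mul, smul_mul_assoc, mul_assoc, mul_assoc]

set_option linter.unusedSimpArgs false

set_option maxHeartbeats 4000000 in
theorem ov_col (hq : q ≠ 0) (H : RelBelow q t (ltc (k, l)))
    (i i' : Fin m) (j : Fin n) (h : i < i') (h' : ltc (k, l) i' j) :
    (sg q (k, l) (i, j) • t i j) * dl q t (k, l) (i', j) +
      dl q t (k, l) (i, j) * t i' j =
    q • ((sg q (k, l) (i', j) • t i' j) * dl q t (k, l) (i, j) +
      dl q t (k, l) (i', j) * t i j) := by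
  simp only [ltc] at h'
  rcases lt_trichotomy i' k with h1 | h1 | h1 <;>
    rcases lt_trichotomy j l with h2 | h2 | h2 <;>
    try (exfalso; omega)
  all_goals try subst h1
  all_goals try subst h2
  all_goals try subst h3
  all_goals
    simp (disch := omega) only [sg, dl, if_pos, if_neg, mul_zero, zero_mul, add_zero, zero_add,
      smul_zero, if_true, true_and, and_true]
  all_goals
    simp (disch := omega) only [mul_assoc, nf_col hq H, nf_row hq H, nf_comm H, nf_serp H,
      nf_col' hq H, nf_row' hq H, nf_comm' H, nf_serp' H, mul_smul_comm, smul_mul_assoc,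
      mul_neg, neg_mul, mul_sub, sub_mul]
  all_goals (match_scalars <;> field_simp <;> ring1)

set_option maxHeartbeats 4000000 in
theorem ov_row (hq : q ≠ 0) (H : RelBelow q t (ltc (k, l)))
    (i : Fin m) (j j' : Fin n) (h : j < j') (h' : ltc (k, l) i j') :
    (sg q (k, l) (i, j) • t i j) * dl q t (k, l) (i, j') +
      dl q t (k, l) (i, j) * t i j' =
    q • ((sg q (k, l) (i, j') • t i j') * dl q t (k, l) (i, j) +
      dl q t (k, l) (i, j') * t i j) := by
  simp only [ltc] at h'
  rcases lt_trichotomy i k with h1 | h1 | h1 <;>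
    rcases lt_trichotomy j l with h2 | h2 | h2 <;>
    rcases lt_trichotomy j' l with h3 | h3 | h3 <;>
    try (exfalso; omega)
  all_goals try subst h1
  all_goals try subst h2
  all_goals try subst h3
  all_goals
    simp (disch := omega) only [sg, dl, if_pos, if_neg, mul_zero, zero_mul, add_zero, zero_add,
      smul_zero, if_true, true_and, and_true]
  all_goals
    simp (disch := omega) only [mul_assoc, nf_col hq H, nf_row hq H, nf_comm H, nf_serp H,
      nf_col' hq H, nf_row' hq H, nf_comm' H, nf_serp' H, mul_smul_comm, smul_mul_assoc,
      mul_neg, neg_mul, mul_sub, sub_mul]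
  all_goals (match_scalars <;> field_simp <;> ring1)

set_option maxHeartbeats 4000000 in
theorem ov_comm (hq : q ≠ 0) (H : RelBelow q t (ltc (k, l)))
    (i i' : Fin m) (j j' : Fin n) (h : i < i') (h0 : j' < j) (h' : ltc (k, l) i' j') :
    (sg q (k, l) (i, j) • t i j) * dl q t (k, l) (i', j') +
      dl q t (k, l) (i, j) * t i' j' =
    (sg q (k, l) (i', j') • t i' j') * dl q t (k, l) (i, j) +
      dl q t (k, l) (i', j') * t i j := by
  simp only [ltc] at h'
  rcases lt_trichotomy i' k with h1 | h1 | h1 <;>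
    rcases lt_trichotomy j l with h2 | h2 | h2 <;>
    rcases lt_trichotomy j' l with h3 | h3 | h3 <;>
    try (exfalso; omega)
  all_goals try subst h1
  all_goals try subst h2
  all_goals try subst h3
  all_goals
    simp (disch := omega) only [sg, dl, if_pos, if_neg, mul_zero, zero_mul, add_zero, zero_add,
      smul_zero, if_true, true_and, and_true]
  all_goals
    simp (disch := omega) only [mul_assoc, nf_col hq H, nf_row hq H, nf_comm H, nf_serp H,
      nf_col' hq H, nf_row' hq H, nf_comm' H, nf_serp' H, mul_smul_comm, smul_mul_assoc,
      mul_neg, neg_mul, mul_sub, sub_mul]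
  all_goals (match_scalars <;> field_simp <;> ring1)

set_option maxHeartbeats 4000000 in
theorem ov_serp (hq : q ≠ 0) (H : RelBelow q t (ltc (k, l)))
    (i i' : Fin m) (j j' : Fin n) (h : i < i') (h0 : j < j') (h' : ltc (k, l) i' j') :
    (sg q (k, l) (i, j) • t i j) * dl q t (k, l) (i', j') +
      dl q t (k, l) (i, j) * t i' j' =
    (sg q (k, l) (i', j') • t i' j') * dl q t (k, l) (i, j) +
      dl q t (k, l) (i', j') * t i j +
    (q - q⁻¹) • ((sg q (k, l) (i, j') • t i j') * dl q t (k, l) (i', j) +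
      dl q t (k, l) (i, j') * t i' j) := by
  simp only [ltc] at h'
  rcases lt_trichotomy i' k with h1 | h1 | h1 <;>
    rcases lt_trichotomy j l with h2 | h2 | h2 <;>
    rcases lt_trichotomy j' l with h3 | h3 | h3 <;>
    try (exfalso; omega)
  all_goals try subst h1
  all_goals try subst h2
  all_goals try subst h3
  all_goals
    simp (disch := omega) only [sg, dl, if_pos, if_neg, mul_zero, zero_mul, add_zero, zero_add,
      smul_zero, if_true, true_and, and_true]
  all_goals
    simp (disch := omega) only [mul_assoc, nf_col hq H, nf_row hq H, nf_comm H, nf_serp H,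
      nf_col' hq H, nf_row' hq H, nf_comm' H, nf_serp' H, mul_smul_comm, smul_mul_assoc,
      mul_neg, neg_mul, mul_sub, sub_mul]
  all_goals (match_scalars <;> field_simp <;> ring1)

end Overlap

noncomputable section OreStep
universe u1 v1
variable {K : Type u1} [Field K] {A : Type v1} [Ring A] [Algebra K A]

/-- Left multiplication by `A` on the free left `A`-module with basis `1, x, x ^ 2, …`. -/
def oreL (K : Type u1) [Field K] (A : Type v1) [Ring A] [Algebra K A] :
    A →ₐ[K] Module.End K (ℕ →₀ A) :=
  AlgHom.ofLinearMap
    { toFun := fun a => Finsupp.mapRange.linearMap (LinearMap.mulLeft K a)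
      map_add' := by
        intro a b; exact LinearMap.ext fun v => Finsupp.ext fun j => by simp [add_mul]
      map_smul' := by
        intro a b; exact LinearMap.ext fun v => Finsupp.ext fun j => by simp }
    (LinearMap.ext fun v => Finsupp.ext fun j => by simp)
    (fun a b => LinearMap.ext fun v => Finsupp.ext fun j => by simp [mul_assoc])

theorem oreL_single (a b : A) (i : ℕ) :
    oreL K A a (Finsupp.single i b) = Finsupp.single i (a * b) := by
  simp [oreL]

/-- Left multiplication by the Ore variable `x`. -/
def oreX (σ δ : A →ₗ[K] A) : Module.End K (ℕ →₀ A) :=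
  Finsupp.lmapDomain A K Nat.succ ∘ₗ Finsupp.mapRange.linearMap σ +
    Finsupp.mapRange.linearMap δ

theorem oreX_single (σ δ : A →ₗ[K] A) (b : A) (i : ℕ) :
    oreX σ δ (Finsupp.single i b) =
      Finsupp.single (i + 1) (σ b) + Finsupp.single i (δ b) := by
  simp [oreX]

theorem oreX_oreL (σ δ : A →ₗ[K] A) (hσ : ∀ a b, σ (a * b) = σ a * σ b)
    (hδ : ∀ a b, δ (a * b) = σ a * δ b + δ a * b) (a : A) :
    oreX σ δ * oreL K A a = oreL K A (σ a) * oreX σ δ + oreL K A (δ a) := by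
  refine Finsupp.lhom_ext fun i b => ?_
  simp only [Module.End.mul_apply, LinearMap.add_apply, oreL_single, oreX_single, map_add,
    hσ, hδ, Finsupp.single_add]
  abel

theorem oreX_pow (σ δ : A →ₗ[K] A) (hσ : σ 1 = 1) (hδ : δ 1 = 0) (j : ℕ) :
    (oreX σ δ ^ j) (Finsupp.single 0 1) = Finsupp.single j 1 := by
  induction j with
  | zero => simp
  | succ j ih => rw [pow_succ', Module.End.mul_apply, ih, oreX_single, hσ, hδ]; simp

end OreStep

noncomputable section PAlg
universe u1 v1

/-- Quantum matrix relations restricted to a predicate. -/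
inductive PRel {K : Type u1} [Field K] (q : K) {m n : ℕ} (P : Fin m → Fin n → Prop) :
    FreeAlgebra K (Fin m × Fin n) → FreeAlgebra K (Fin m × Fin n) → Prop
  | col : ∀ (i k : Fin m) (j : Fin n), i < k → P k j →
      PRel q P (FreeAlgebra.ι K (i, j) * FreeAlgebra.ι K (k, j))
        (q • (FreeAlgebra.ι K (k, j) * FreeAlgebra.ι K (i, j)))
  | row : ∀ (i : Fin m) (j l : Fin n), j < l → P i l →
      PRel q P (FreeAlgebra.ι K (i, j) * FreeAlgebra.ι K (i, l))
        (q • (FreeAlgebra.ι K (i, l) * FreeAlgebra.ι K (i, j)))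
  | comm : ∀ (i k : Fin m) (j l : Fin n), i < k → l < j → P k l →
      PRel q P (FreeAlgebra.ι K (i, j) * FreeAlgebra.ι K (k, l))
        (FreeAlgebra.ι K (k, l) * FreeAlgebra.ι K (i, j))
  | serp : ∀ (i k : Fin m) (j l : Fin n), i < k → j < l → P k l →
      PRel q P (FreeAlgebra.ι K (i, j) * FreeAlgebra.ι K (k, l))
        (FreeAlgebra.ι K (k, l) * FreeAlgebra.ι K (i, j) +
          (q - q⁻¹) • (FreeAlgebra.ι K (i, l) * FreeAlgebra.ι K (k, j)))

variable {K : Type u1} [Field K] (q : K) {m n : ℕ} (P : Fin m → Fin n → Prop)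

/-- The algebra with the restricted relations. -/
def PAlg : Type u1 := RingQuot (PRel q P)

instance : Ring (PAlg q P) := inferInstanceAs (Ring (RingQuot (PRel q P)))

instance : Algebra K (PAlg q P) := inferInstanceAs (Algebra K (RingQuot (PRel q P)))

/-- The quotient map. -/
def pmk : FreeAlgebra K (Fin m × Fin n) →ₐ[K] PAlg q P := RingQuot.mkAlgHom K (PRel q P)

theorem pmk_rel {x y : FreeAlgebra K (Fin m × Fin n)} (h : PRel q P x y) :
    pmk q P x = pmk q P y := RingQuot.mkAlgHom_rel K h

theorem pmk_surj : Function.Surjective (pmk q P) := RingQuot.mkAlgHom_surjective K (PRel q P)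

/-- Its generators. -/
def pg (i : Fin m) (j : Fin n) : PAlg q P := pmk q P (FreeAlgebra.ι K (i, j))

theorem pg_rel : RelBelow q (pg q P) P where
  col i k j h h' := by
    simpa only [pg, map_mul, map_add, map_smul] using
      pmk_rel q P (PRel.col (q := q) (P := P) i k j h h')
  row i j l h h' := by
    simpa only [pg, map_mul, map_add, map_smul] using
      pmk_rel q P (PRel.row (q := q) (P := P) i j l h h')
  comm i k j l h h0 h' := by
    simpa only [pg, map_mul, map_add, map_smul] using
      pmk_rel q P (PRel.comm (q := q) (P := P) i k j l h h0 h')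
  serp i k j l h h0 h' := by
    simpa only [pg, map_mul, map_add, map_smul] using
      pmk_rel q P (PRel.serp (q := q) (P := P) i k j l h h0 h')

variable {q P}

theorem PAlg.exists_lift {B : Type v1} [Ring B] [Algebra K B] {t : Fin m → Fin n → B}
    (H : RelBelow q t P) : ∃ f : PAlg q P →ₐ[K] B, ∀ i j, f (pg q P i j) = t i j := by
  have h0 : ∀ ⦃x y⦄, PRel q P x y →
      FreeAlgebra.lift K (fun a : Fin m × Fin n => t a.1 a.2) x =
        FreeAlgebra.lift K (fun a : Fin m × Fin n => t a.1 a.2) y := by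
    intro x y h
    induction h with
    | col i k j h h' => simpa using H.col i k j h h'
    | row i j l h h' => simpa using H.row i j l h h'
    | comm i k j l h h0 h' => simpa using H.comm i k j l h h0 h'
    | serp i k j l h h0 h' =>
      simpa only [map_mul, map_add, map_smul, FreeAlgebra.lift_ι_apply] using
        H.serp i k j l h h0 h'
  refine ⟨RingQuot.liftAlgHom K ⟨FreeAlgebra.lift K fun a => t a.1 a.2, h0⟩, ?_⟩
  intro i j
  refine (RingQuot.liftAlgHom_mkAlgHom_apply K _ h0 _).trans ?_
  simp

theorem PAlg.induction {C : PAlg q P → Prop} (hg : ∀ i j, C (pg q P i j))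
    (hs : ∀ r : K, C (algebraMap K _ r)) (hadd : ∀ a b, C a → C b → C (a + b))
    (hmul : ∀ a b, C a → C b → C (a * b)) (a : PAlg q P) : C a := by
  obtain ⟨a, rfl⟩ := pmk_surj q P a
  induction a using FreeAlgebra.induction with
  | grade0 r => rw [AlgHom.commutes]; exact hs r
  | grade1 x => exact hg x.1 x.2
  | mul a b ha hb => rw [map_mul]; exact hmul _ _ ha hb
  | add a b ha hb => rw [map_add]; exact hadd _ _ ha hb

/-- The skew derivation of one Ore step. -/
theorem exists_sigma_delta (hq : q ≠ 0) (c : Fin m × Fin n) (hP : ∀ i j, P i j ↔ ltc c i j) :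
    ∃ σ δ : PAlg q P →ₗ[K] PAlg q P, (∀ a b, σ (a * b) = σ a * σ b) ∧
      (∀ a b, δ (a * b) = σ a * δ b + δ a * b) ∧ σ 1 = 1 ∧ δ 1 = 0 ∧
      (∀ i j, σ (pg q P i j) = sg q c (i, j) • pg q P i j) ∧
      (∀ i j, δ (pg q P i j) = dl q (pg q P) c (i, j)) := by
  obtain rfl : P = ltc c := by ext i j; exact hP i j
  set t := pg q (ltc c) with ht
  have H : RelBelow q t (ltc c) := pg_rel q _
  have hsg : ∀ i i' j j', sg q c (i, j) * sg q c (i', j') = sg q c (i', j) * sg q c (i, j') := by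
    intro i i' j j'; simp only [sg]; ring
  have HM : RelBelow (A := Matrix (Fin 2) (Fin 2) (PAlg q (ltc c))) q
      (fun i j => !![sg q c (i, j) • t i j, dl q t c (i, j); 0, t i j]) (ltc c) := by
    constructor
    · intro i i' j h h'
      have h1 := H.col i i' j h h'
      have h2 := ov_col hq H i i' j h h'
      ext a b
      fin_cases a <;> fin_cases b
      · simp [h1, smul_smul, mul_comm, mul_left_comm]
      · simpa using h2
      · simp
      · simpa using h1
    · intro i j j' h h'
      have h1 := H.row i j j' h h'
      have h2 := ov_row hq H i j j' h h'
      ext a b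
      fin_cases a <;> fin_cases b
      · simp [h1, smul_smul, mul_comm, mul_left_comm]
      · simpa using h2
      · simp
      · simpa using h1
    · intro i i' j j' h h0 h'
      have h1 := H.comm i i' j j' h h0 h'
      have h2 := ov_comm hq H i i' j j' h h0 h'
      ext a b
      fin_cases a <;> fin_cases b
      · simp [h1, smul_smul, mul_comm, mul_left_comm]
      · simpa using h2
      · simp
      · simpa using h1
    · intro i i' j j' h h0 h'
      have h1 := H.serp i i' j j' h h0 h'
      have h2 := ov_serp hq H i i' j j' h h0 h'
      ext a b
      fin_cases a <;> fin_cases b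
      · have h3 := hsg i i' j j'
        simp only [Fin.zero_eta, Matrix.mul_apply, Fin.sum_univ_two, Matrix.add_apply,
          Matrix.smul_apply]
        simp only [Matrix.of_apply, Matrix.cons_val_zero, Matrix.cons_val_one, mul_zero,
          add_zero, smul_mul_smul_comm, h1, smul_add]
        rw [mul_comm (sg q c (i', j')), mul_comm (sg q c (i, j')), ← h3]
        module
      · simpa using h2
      · simp
      · simpa using h1
  obtain ⟨τ, hτ⟩ := PAlg.exists_lift HM
  have hτ' : ∀ a, τ a 1 0 = 0 ∧ τ a 1 1 = a := by
    intro a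
    induction a using PAlg.induction with
    | hg i j => simp [hτ, ht]
    | hs r => simp [Matrix.algebraMap_matrix_apply]
    | hadd a b ha hb => simp [ha, hb]
    | hmul a b ha hb => simp [Matrix.mul_apply, ha, hb]
  refine ⟨(Matrix.entryLinearMap K _ 0 0) ∘ₗ τ.toLinearMap,
    (Matrix.entryLinearMap K _ 0 1) ∘ₗ τ.toLinearMap, ?_, ?_, ?_, ?_, ?_, ?_⟩
  · intro a b; simp [Matrix.mul_apply, hτ']
  · intro a b; simp [Matrix.mul_apply, hτ']
  · simp
  · simp
  · intro i j; simp [hτ, ht]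
  · intro i j; simp [hτ, ht]

end PAlg

noncomputable section PBWStep
universe u1
variable {K : Type u1} [Field K] {q : K} {m n : ℕ}

/-- The predicate: index below `k`. -/
def Pk (m n k : ℕ) (i : Fin m) (j : Fin n) : Prop := (finProdFinEquiv (i, j) : ℕ) < k

theorem Pk_iff_ltc {k : ℕ} (hk : k < m * n) (i : Fin m) (j : Fin n) :
    Pk m n k i j ↔ ltc (finProdFinEquiv.symm ⟨k, hk⟩) i j := by
  obtain ⟨⟨a, b⟩, h⟩ := finProdFinEquiv.surjective (⟨k, hk⟩ : Fin (m * n))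
  rw [← h, Equiv.symm_apply_apply]
  have hk' : k = (finProdFinEquiv (a, b) : ℕ) := by rw [h]
  simp only [Pk, ltc, hk', finProdFinEquiv_apply_val, Fin.lt_def, Fin.ext_iff]
  have := j.isLt
  have := b.isLt
  rcases lt_trichotomy (i : ℕ) a with h1 | h1 | h1
  · have : n * ((i : ℕ) + 1) ≤ n * a := Nat.mul_le_mul_left n h1
    rw [Nat.mul_add] at this
    constructor <;> intro h2 <;> omega
  · rw [h1]
    constructor <;> intro h2 <;> omega
  · have : n * ((a : ℕ) + 1) ≤ n * i := Nat.mul_le_mul_left n h1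
    rw [Nat.mul_add] at this
    constructor <;> intro h2 <;> omega

/-- Generators listed by natural numbers. -/
def gx {A : Type*} [Ring A] (t : Fin m → Fin n → A) (l : ℕ) : A :=
  if h : l < m * n then t (finProdFinEquiv.symm ⟨l, h⟩).1 (finProdFinEquiv.symm ⟨l, h⟩).2 else 0

/-- Ordered monomials in the first `k` generators. -/
def gmono {A : Type*} [Ring A] (t : Fin m → Fin n → A) (k : ℕ) (e : Fin k → ℕ) : A :=
  ((List.finRange k).map fun l : Fin k => gx t (l : ℕ) ^ e l).prod

theorem gmono_succ {A : Type*} [Ring A] (t : Fin m → Fin n → A) (k : ℕ) (e : Fin (k + 1) → ℕ) :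
    gmono t (k + 1) e = gmono t k (fun l => e l.castSucc) * gx t k ^ e (Fin.last k) := by
  simp [gmono, List.finRange_succ_last, Function.comp_def]

theorem gmono_map {A B : Type*} [Ring A] [Ring B] [Algebra K A] [Algebra K B] (f : A →ₐ[K] B)
    (t : Fin m → Fin n → A) (k : ℕ) (e : Fin k → ℕ) :
    f (gmono t k e) = gmono (fun i j => f (t i j)) k e := by
  simp only [gmono, map_list_prod, List.map_map, Function.comp_def, map_pow]
  congr 2; ext l; simp only [gx]; split <;> simp

theorem gmono_congr {A : Type*} [Ring A] (t t' : Fin m → Fin n → A) (k : ℕ)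
    (h : ∀ i j, Pk m n k i j → t i j = t' i j) (e : Fin k → ℕ) : gmono t k e = gmono t' k e := by
  simp only [gmono]
  congr 2; ext l
  have : gx t l = gx t' l := by
    simp only [gx]
    split
    · apply h
      rw [Pk, Prod.mk.eta, Equiv.apply_symm_apply]
      exact l.isLt
    · rfl
  rw [this]

theorem pbw_zero : LinearIndependent K (gmono (pg q (Pk m n 0)) 0) := by
  have H : RelBelow (A := K) q (fun (_ : Fin m) (_ : Fin n) => (0 : K)) (Pk m n 0) := by
    constructor <;> intros <;> simp
  obtain ⟨f, -⟩ := PAlg.exists_lift H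
  have h1 : (1 : PAlg q (Pk m n 0)) ≠ 0 := by
    intro h
    have := congrArg f h
    simp at this
  rw [linearIndependent_unique_iff]
  simpa [gmono] using h1

theorem pbw_step (hq : q ≠ 0) {k : ℕ} (hk : k < m * n)
    (ih : LinearIndependent K (gmono (pg q (Pk m n k)) k)) :
    LinearIndependent K (gmono (pg q (Pk m n (k + 1))) (k + 1)) := by
  set c := finProdFinEquiv.symm (⟨k, hk⟩ : Fin (m * n)) with hc
  have hP := Pk_iff_ltc (m := m) (n := n) hk
  rw [← hc] at hP
  obtain ⟨σ, δ, hσ, hδ, hσ1, hδ1, hσt, hδt⟩ := exists_sigma_delta hq c hP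
  set t := pg q (Pk m n k) with ht
  have H : RelBelow q t (Pk m n k) := pg_rel q _
  have hX := oreX_oreL σ δ hσ hδ
  set L := oreL K (PAlg q (Pk m n k)) with hL
  set X := oreX σ δ with hXd
  have hck : ∀ i j, (finProdFinEquiv (i, j) : ℕ) = k ↔ (i, j) = c := by
    intro i j
    rw [hc, Equiv.eq_symm_apply, Fin.ext_iff]
  have hP1 : ∀ i j, Pk m n (k + 1) i j ↔ (Pk m n k i j ∨ (i, j) = c) := by
    intro i j
    rw [← hck]; simp only [Pk]; omega
  let T : Fin m → Fin n → Module.End K (ℕ →₀ PAlg q (Pk m n k)) := fun i j =>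
    if (i, j) = c then X else L (t i j)
  have hT1 : ∀ i j, ltc c i j → T i j = L (t i j) := by
    intro i j h
    refine if_neg ?_
    intro h2
    rw [← h2] at h
    simp [ltc] at h
  have hT2 : T c.1 c.2 = X := if_pos rfl
  have hXt : ∀ i j, X * L (t i j) = sg q c (i, j) • (L (t i j) * X) +
      L (dl q t c (i, j)) := by
    intro i j
    rw [hX, hσt, hδt, map_smul, smul_mul_assoc]
  have HT : RelBelow q T (Pk m n (k + 1)) := by
    constructor
    · intro i i' j h h'
      rcases (hP1 _ _).1 h' with h1 | h1
      · have h2 := (hP _ _).1 h1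
        rw [hT1 i' j h2, hT1 i j (by unfold ltc at h2 ⊢; omega), ← map_mul, ← map_mul,
          H.col i i' j h h1, map_smul]
      · rw [Prod.ext_iff] at h1
        obtain ⟨rfl, rfl⟩ := h1
        rw [hT2, hT1 i c.2 (by unfold ltc; omega), hXt]
        simp [sg, dl, h.ne, smul_smul, hq]
    · intro i j j' h h'
      rcases (hP1 _ _).1 h' with h1 | h1
      · have h2 := (hP _ _).1 h1
        rw [hT1 i j' h2, hT1 i j (by unfold ltc at h2 ⊢; omega), ← map_mul, ← map_mul,
          H.row i j j' h h1, map_smul]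
      · rw [Prod.ext_iff] at h1
        obtain ⟨rfl, rfl⟩ := h1
        rw [hT2, hT1 c.1 j (by unfold ltc; omega), hXt]
        simp [sg, dl, h.ne, smul_smul, hq]
    · intro i i' j j' h h0 h'
      rcases (hP1 _ _).1 h' with h1 | h1
      · have h2 := (hP _ _).1 h1
        rw [hT1 i' j' h2, hT1 i j (by unfold ltc at h2 ⊢; omega), ← map_mul, ← map_mul,
          H.comm i i' j j' h h0 h1]
      · rw [Prod.ext_iff] at h1
        obtain ⟨rfl, rfl⟩ := h1
        rw [hT2, hT1 i j (by unfold ltc; omega), hXt]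
        simp [sg, dl, h.ne, h0.ne', h0.not_gt]
    · intro i i' j j' h h0 h'
      rcases (hP1 _ _).1 h' with h1 | h1
      · have h2 := (hP _ _).1 h1
        rw [hT1 i' j' h2, hT1 i j (by unfold ltc at h2 ⊢; omega),
          hT1 i j' (by unfold ltc at h2 ⊢; omega),
          hT1 i' j (by unfold ltc at h2 ⊢; omega), ← map_mul, ← map_mul,
          H.serp i i' j j' h h0 h1, map_add, map_smul, map_mul L (t i j')]
      · rw [Prod.ext_iff] at h1
        obtain ⟨rfl, rfl⟩ := h1
        rw [hT2, hT1 i j (by unfold ltc; omega), hT1 i c.2 (by unfold ltc; omega),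
          hT1 c.1 j (by unfold ltc; omega), hXt]
        simp only [sg, dl, h.ne, h0.ne, h, h0, if_false, if_true, and_self, mul_one, one_smul,
          map_neg, map_smul, map_mul]
        abel
  obtain ⟨f, hf⟩ := PAlg.exists_lift HT
  let ev : PAlg q (Pk m n (k + 1)) →ₗ[K] (ℕ →₀ PAlg q (Pk m n k)) :=
    (LinearMap.applyₗ (Finsupp.single 0 1 : ℕ →₀ PAlg q (Pk m n k))) ∘ₗ f.toLinearMap
  refine LinearIndependent.of_comp ev ?_
  have hgk : gx T k = X := by
    simp only [gx, dif_pos hk]; rw [← hc]; exact hT2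
  have key : (⇑ev ∘ gmono (pg q (Pk m n (k + 1))) (k + 1)) =
      (fun ix : Σ _ : ℕ, (Fin k → ℕ) => Finsupp.single ix.1 (gmono t k ix.2)) ∘
        (fun e : Fin (k + 1) → ℕ => (⟨e (Fin.last k), fun l => e l.castSucc⟩ :
          Σ _ : ℕ, (Fin k → ℕ))) := by
    funext e
    have h1 : f (gmono (pg q (Pk m n (k + 1))) (k + 1) e) =
        L (gmono t k (fun l => e l.castSucc)) * X ^ e (Fin.last k) := by
      refine (gmono_map (K := K) (B := Module.End K (ℕ →₀ PAlg q (Pk m n k))) f _ _ _).trans ?_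
      simp only [hf]
      rw [show (fun i j => T i j) = T from rfl, gmono_succ, hgk]
      congr 1
      refine (gmono_congr _ _ _ (fun i j h => hT1 i j ((hP i j).1 h)) _).trans ?_
      exact (gmono_map (K := K) (B := Module.End K (ℕ →₀ PAlg q (Pk m n k))) L _ _ _).symm
    simp only [ev, Function.comp_apply, LinearMap.comp_apply, AlgHom.toLinearMap_apply, h1,
      LinearMap.applyₗ_apply_apply, Module.End.mul_apply]
    rw [oreX_pow σ δ hσ1 hδ1, oreL_single, mul_one]
  rw [key]
  refine LinearIndependent.comp (Finsupp.linearIndependent_single (fun _ => gmono t k) fun _ => ih) _ ?_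
  intro e e' h
  simp only [Sigma.mk.injEq, heq_eq_eq] at h
  funext l
  refine Fin.lastCases h.1 (fun l => congrFun h.2 l) l

theorem pbw_all (hq : q ≠ 0) {k : ℕ} (hk : k ≤ m * n) :
    LinearIndependent K (gmono (pg q (Pk m n k)) k) := by
  induction k with
  | zero => exact pbw_zero
  | succ k ih => exact pbw_step hq hk (ih (Nat.le_of_succ_le hk))

end PBWStep

section SkewGeneral
universe u1 v1
variable {K : Type u1} [Field K] {R : Type v1} [Ring R] [Algebra K R]

/-- The skew derivation `a ↦ x a - σ(a) x` as a linear map. -/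
def skD (σ : R ≃ₐ[K] R) (x : R) : Module.End K R :=
  LinearMap.mulLeft K x - LinearMap.mulRight K x ∘ₗ σ.toLinearMap

theorem skD_apply (σ : R ≃ₐ[K] R) (x a : R) : skD σ x a = x * a - σ a * x := by
  simp [skD]

theorem skD_mul (σ : R ≃ₐ[K] R) (x a b : R) :
    skD σ x (a * b) = σ a * skD σ x b + skD σ x a * b := by
  simp only [skD_apply, map_mul]; noncomm_ring

theorem skD_one (σ : R ≃ₐ[K] R) (x : R) (r : K) : skD σ x (algebraMap K R r) = 0 := by
  simp [skD_apply, Algebra.commutes]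

theorem skD_sigma {σ : R ≃ₐ[K] R} {x : R} {lam : K} (hx : σ x = lam • x) (p : ℕ) (a : R) :
    σ ((skD σ x ^ p) a) = lam ^ p • (skD σ x ^ p) (σ a) := by
  induction p generalizing a with
  | zero => simp
  | succ p ih =>
    rw [pow_succ, Module.End.mul_apply, Module.End.mul_apply, ih]
    have : σ (skD σ x a) = lam • skD σ x (σ a) := by
      simp only [skD_apply, map_sub, map_mul, hx, smul_sub, smul_mul_assoc, mul_smul_comm]
    rw [this, map_smul, smul_smul, pow_succ]

theorem skD_nil_mul {σ : R ≃ₐ[K] R} {x : R} {lam : K} (hx : σ x = lam • x) (hl : lam ≠ 0)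
    (s : ℕ) : ∀ (p r : ℕ) (a b : R), p + r = s → (skD σ x ^ p) a = 0 → (skD σ x ^ r) b = 0 →
      (skD σ x ^ s) (a * b) = 0 := by
  induction s with
  | zero =>
    intro p r a b h ha hb
    obtain rfl : p = 0 := by omega
    have : a = 0 := by simpa using ha
    simp [this]
  | succ s ih =>
    intro p r a b h ha hb
    rcases p with _ | p
    · have : a = 0 := by simpa using ha
      simp [this]
    rcases r with _ | r
    · have : b = 0 := by simpa using hb
      simp [this]
    rw [pow_succ, Module.End.mul_apply, skD_mul, map_add, ih (p + 1) r, ih p (r + 1), add_zero]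
    · omega
    · rwa [pow_succ, Module.End.mul_apply] at ha
    · exact hb
    · omega
    · have := skD_sigma hx (p + 1) a
      rw [ha, map_zero] at this
      exact (smul_eq_zero.1 this.symm).resolve_left (pow_ne_zero _ hl)
    · rwa [pow_succ, Module.End.mul_apply] at hb

theorem skD_nil {σ : R ≃ₐ[K] R} {x : R} {lam : K} (hx : σ x = lam • x) (hl : lam ≠ 0)
    {S : Set R} (hS : ∀ s ∈ S, ∃ p : ℕ, (skD σ x ^ p) s = 0) :
    ∀ a ∈ Algebra.adjoin K S, ∃ p : ℕ, (skD σ x ^ p) a = 0 := by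
  intro a ha
  induction ha using Algebra.adjoin_induction with
  | mem s hs => exact hS s hs
  | algebraMap r => exact ⟨1, by rw [pow_one, skD_one]⟩
  | add a b _ _ iha ihb =>
    obtain ⟨p, hp⟩ := iha
    obtain ⟨r, hr⟩ := ihb
    refine ⟨p + r, ?_⟩
    rw [map_add, pow_add, Module.End.mul_apply _ _ b, hr, ← pow_add, add_comm p r, pow_add,
      Module.End.mul_apply _ _ a, hp]
    simp
  | mul a b _ _ iha ihb =>
    obtain ⟨p, hp⟩ := iha
    obtain ⟨r, hr⟩ := ihb
    exact ⟨p + r, skD_nil_mul hx hl _ p r a b rfl hp hr⟩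

theorem skD_stable {σ : R ≃ₐ[K] R} {x : R}
    {S : Set R} (hS : ∀ s ∈ S, σ s ∈ Algebra.adjoin K S)
    (hS' : ∀ s ∈ S, skD σ x s ∈ Algebra.adjoin K S) :
    ∀ a ∈ Algebra.adjoin K S, skD σ x a ∈ Algebra.adjoin K S := by
  have hσ : ∀ a ∈ Algebra.adjoin K S, σ a ∈ Algebra.adjoin K S := by
    intro a ha
    induction ha using Algebra.adjoin_induction with
    | mem s hs => exact hS s hs
    | algebraMap r => rw [AlgEquiv.commutes]; exact Subalgebra.algebraMap_mem _ r
    | add a b _ _ iha ihb => rw [map_add]; exact add_mem iha ihb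
    | mul a b _ _ iha ihb => rw [map_mul]; exact mul_mem iha ihb
  intro a ha
  induction ha using Algebra.adjoin_induction with
  | mem s hs => exact hS' s hs
  | algebraMap r => rw [skD_one]; exact zero_mem _
  | add a b _ _ iha ihb => rw [map_add]; exact add_mem iha ihb
  | mul a b ha hb iha ihb =>
    rw [skD_mul]; exact add_mem (mul_mem (hσ a ha) ihb) (mul_mem iha hb)

theorem rational_of_gen {r : ℕ} (act : Torus K r →* (R ≃ₐ[K] R)) (S : Set R)
    (hS : Algebra.adjoin K S = ⊤) (h : ∀ s ∈ S, ∃ f, IsEigenWith K act f s) :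
    IsRationalAction K act := by
  let E : (Fin r → ℤ) → Submodule K R := fun f =>
    { carrier := {a | IsEigenWith K act f a}
      add_mem' := by
        intro a b ha hb ξ
        rw [map_add, ha ξ, hb ξ, smul_add]
      zero_mem' := by intro ξ; simp
      smul_mem' := by
        intro c a ha ξ
        rw [map_smul, ha ξ, smul_comm] }
  have hall : ∀ a : R, a ∈ ⨆ f, E f := by
    intro a
    have ha : a ∈ Algebra.adjoin K S := by rw [hS]; trivial
    induction ha using Algebra.adjoin_induction with
    | mem s hs =>
      obtain ⟨f, hf⟩ := h s hs
      exact Submodule.mem_iSup_of_mem f hf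
    | algebraMap r =>
      refine Submodule.mem_iSup_of_mem 0 ?_
      intro ξ
      simp
    | add a b _ _ iha ihb => exact add_mem iha ihb
    | mul a b _ _ iha ihb =>
      have key : (⨆ f, E f) * (⨆ f, E f) ≤ ⨆ f, E f := by
        rw [Submodule.iSup_mul]
        refine iSup_le fun f => ?_
        rw [Submodule.mul_iSup]
        refine iSup_le fun g => ?_
        rw [Submodule.mul_le]
        intro a ha b hb
        refine Submodule.mem_iSup_of_mem (f + g) ?_
        intro ξ
        rw [map_mul, ha ξ, hb ξ, smul_mul_smul_comm, ← Units.val_mul, ← Finset.prod_mul_distrib]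
        simp only [Pi.add_apply, zpow_add]
      exact key (Submodule.mul_mem_mul iha ihb)
  intro a
  obtain ⟨c, hc, hsum⟩ := (Submodule.mem_iSup_iff_exists_finsupp E a).1 (hall a)
  exact ⟨c.support, c, hsum.symm, fun f _ => hc f⟩

end SkewGeneral

section RqFacts
universe u1 v1
variable {K : Type u1} [Field K] (q : Kˣ) (m n : ℕ)

/-- The quotient map onto `RqMat`. -/
def rmk : FreeAlgebra K (Fin m × Fin n) →ₐ[K] RqMat K q m n :=
  RingQuot.mkAlgHom K (qMatRel K q m n)

theorem rmk_rel {x y : FreeAlgebra K (Fin m × Fin n)} (h : qMatRel K q m n x y) :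
    rmk q m n x = rmk q m n y := RingQuot.mkAlgHom_rel K h

theorem rmk_surj : Function.Surjective (rmk (K := K) q m n) :=
  RingQuot.mkAlgHom_surjective K (qMatRel K q m n)

theorem tGen_eq (i : Fin m) (j : Fin n) :
    tGen K q m n i j = rmk q m n (FreeAlgebra.ι K (i, j)) := rfl

theorem tGen_rel : RelBelow (q : K) (tGen K q m n) (fun _ _ => True) where
  col i k j h _ := by
    simpa only [tGen_eq, map_mul, map_add, map_smul] using
      rmk_rel q m n (qMatRel.col i k j h)
  row i j l h _ := by
    simpa only [tGen_eq, map_mul, map_add, map_smul] using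
      rmk_rel q m n (qMatRel.row i j l h)
  comm i k j l h h0 _ := by
    simpa only [tGen_eq, map_mul, map_add, map_smul] using
      rmk_rel q m n (qMatRel.comm i k j l h h0)
  serp i k j l h h0 _ := by
    simpa only [tGen_eq, map_mul, map_add, map_smul] using
      rmk_rel q m n (qMatRel.serp i k j l h h0)

variable {q m n}

theorem Rq_exists_lift {B : Type v1} [Ring B] [Algebra K B] {t : Fin m → Fin n → B}
    (H : RelBelow (q : K) t (fun _ _ => True)) :
    ∃ f : RqMat K q m n →ₐ[K] B, ∀ i j, f (tGen K q m n i j) = t i j := by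
  have h0 : ∀ ⦃x y⦄, qMatRel K q m n x y →
      FreeAlgebra.lift K (fun a : Fin m × Fin n => t a.1 a.2) x =
        FreeAlgebra.lift K (fun a : Fin m × Fin n => t a.1 a.2) y := by
    intro x y h
    induction h with
    | col i k j h => simpa using H.col i k j h trivial
    | row i j l h => simpa using H.row i j l h trivial
    | comm i k j l h h0 => simpa using H.comm i k j l h h0 trivial
    | serp i k j l h h0 =>
      simpa only [map_mul, map_add, map_smul, FreeAlgebra.lift_ι_apply] using
        H.serp i k j l h h0 trivial
  refine ⟨RingQuot.liftAlgHom K ⟨FreeAlgebra.lift K fun a => t a.1 a.2, h0⟩, ?_⟩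
  intro i j
  refine (RingQuot.liftAlgHom_mkAlgHom_apply K _ h0 _).trans ?_
  simp

theorem Rq_hom_ext {B : Type v1} [Ring B] [Algebra K B] {f g : RqMat K q m n →ₐ[K] B}
    (h : ∀ i j, f (tGen K q m n i j) = g (tGen K q m n i j)) : f = g := by
  have h1 : f.comp (rmk q m n) = g.comp (rmk q m n) := by
    refine FreeAlgebra.hom_ext ?_
    funext a
    exact h a.1 a.2
  ext a
  obtain ⟨a, rfl⟩ := rmk_surj q m n a
  exact DFunLike.congr_fun h1 a

variable (q m n) in
/-- The generators in the order of the presentation. -/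
def xq (l : Fin (m * n)) : RqMat K q m n :=
  tGen K q m n (finProdFinEquiv.symm l).1 (finProdFinEquiv.symm l).2

theorem xq_gen : Algebra.adjoin K (Set.range (xq (K := K) q m n)) = ⊤ := by
  rw [eq_top_iff]
  rintro a -
  obtain ⟨a, rfl⟩ := rmk_surj q m n a
  induction a using FreeAlgebra.induction with
  | grade0 r => rw [AlgHom.commutes]; exact Subalgebra.algebraMap_mem _ r
  | grade1 x =>
    refine Algebra.subset_adjoin ⟨finProdFinEquiv x, ?_⟩
    simp only [xq, Equiv.symm_apply_apply]; rfl
  | mul a b ha hb => rw [map_mul]; exact mul_mem ha hb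
  | add a b ha hb => rw [map_add]; exact add_mem ha hb

theorem xq_pbw : LinearIndependent K (ordMonomial (xq (K := K) q m n)) := by
  have H : RelBelow (q : K) (pg (q : K) (Pk m n (m * n))) (fun _ _ => True) := by
    have h := pg_rel (q : K) (Pk m n (m * n))
    have hP : ∀ i j, Pk m n (m * n) i j := fun i j => Fin.isLt _
    exact ⟨fun i k j h1 _ => h.col i k j h1 (hP _ _), fun i k j h1 _ => h.row i k j h1 (hP _ _),
      fun i k j l h1 h2 _ => h.comm i k j l h1 h2 (hP _ _),
      fun i k j l h1 h2 _ => h.serp i k j l h1 h2 (hP _ _)⟩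
  obtain ⟨f, hf⟩ := Rq_exists_lift H
  refine LinearIndependent.of_comp f.toLinearMap ?_
  convert pbw_all (q := (q : K)) (m := m) (n := n) q.ne_zero le_rfl using 1
  funext e
  simp only [Function.comp_apply, AlgHom.toLinearMap_apply, ordMonomial, gmono, map_list_prod,
    List.map_map]
  congr 2
  funext l
  simp [gx, xq, hf]

theorem xq_pbwRev : LinearIndependent K (revOrdMonomial (xq (K := K) q m n)) := by
  have H' := tGen_rel (K := K) q⁻¹ m n
  have H : RelBelow (A := (RqMat K q⁻¹ m n)ᵐᵒᵖ) (q : K)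
      (fun i j => MulOpposite.op (tGen K q⁻¹ m n i j)) (fun _ _ => True) := by
    constructor
    · intro i k j h h'
      rw [← MulOpposite.op_mul, ← MulOpposite.op_mul, H'.col i k j h h', ← MulOpposite.op_smul,
        smul_smul]
      simp
    · intro i k j h h'
      rw [← MulOpposite.op_mul, ← MulOpposite.op_mul, H'.row i k j h h', ← MulOpposite.op_smul,
        smul_smul]
      simp
    · intro i k j l h h0 h'
      rw [← MulOpposite.op_mul, ← MulOpposite.op_mul, H'.comm i k j l h h0 h']
    · intro i k j l h h0 h'
      rw [← MulOpposite.op_mul, ← MulOpposite.op_mul, ← MulOpposite.op_mul,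
        H'.serp i k j l h h0 h', ← MulOpposite.op_smul, ← MulOpposite.op_add,
        ← H'.comm i k l j h h0 h']
      congr 1
      rw [Units.val_inv_eq_inv_val, inv_inv]
      module
  obtain ⟨f, hf⟩ := Rq_exists_lift H
  refine LinearIndependent.of_comp
    ((MulOpposite.opLinearEquiv K).symm.toLinearMap ∘ₗ f.toLinearMap) ?_
  have key : (((MulOpposite.opLinearEquiv K).symm.toLinearMap ∘ₗ f.toLinearMap) ∘
      revOrdMonomial (xq (K := K) q m n)) = ordMonomial (xq (K := K) q⁻¹ m n) := by
    funext e
    simp only [Function.comp_apply, LinearMap.comp_apply, AlgHom.toLinearMap_apply, ordMonomial,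
      revOrdMonomial, map_list_prod, List.map_map]
    simp only [LinearEquiv.coe_coe, MulOpposite.coe_opLinearEquiv_symm,
      MulOpposite.unop_list_prod,
      List.map_map, List.map_reverse, List.reverse_reverse]
    congr 2
    funext l
    simp [xq, hf]
  rw [key]
  exact xq_pbw

/-- The character of `t_{ij}`. -/
def chi (ξ : Torus K (m + n)) (i : Fin m) (j : Fin n) : Kˣ :=
  ξ (Fin.castAdd n i) * (ξ (Fin.natAdd m j))⁻¹

theorem chi_rel (ξ : Torus K (m + n)) :
    RelBelow (q : K) (fun i j => (chi ξ i j : K) • tGen K q m n i j) (fun _ _ => True) := by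
  have H := tGen_rel (K := K) q m n
  constructor
  · intro i k j h h'
    simp only [smul_mul_smul_comm, H.col i k j h h']
    module
  · intro i k j h h'
    simp only [smul_mul_smul_comm, H.row i k j h h']
    module
  · intro i k j l h h0 h'
    simp only [smul_mul_smul_comm, H.comm i k j l h h0 h']
    module
  · intro i k j l h h0 h'
    have : (chi ξ i l * chi ξ k j : K) = chi ξ i j * chi ξ k l := by
      simp only [chi, Units.val_mul]; ring
    simp only [smul_mul_smul_comm, H.serp i k j l h h0 h', this]
    module

variable (q m n) in
theorem exists_act : ∃ act : Torus K (m + n) →* (RqMat K q m n ≃ₐ[K] RqMat K q m n),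
    ∀ ξ i j, act ξ (tGen K q m n i j) = (chi ξ i j : K) • tGen K q m n i j := by
  choose φ hφ using fun ξ : Torus K (m + n) => Rq_exists_lift (q := q) (chi_rel (q := q) ξ)
  have hmul : ∀ ξ η, (φ ξ).comp (φ η) = φ (ξ * η) := by
    intro ξ η
    refine Rq_hom_ext fun i j => ?_
    simp only [AlgHom.comp_apply, hφ, map_smul, smul_smul, ← Units.val_mul]
    congr 2
    simp only [chi, Pi.mul_apply, mul_inv]
    exact (mul_comm _ _).trans (mul_mul_mul_comm _ _ _ _)
  have hone : φ 1 = AlgHom.id K _ := by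
    refine Rq_hom_ext fun i j => ?_
    simp [hφ, chi]
  refine ⟨{ toFun := fun ξ => AlgEquiv.ofAlgHom (φ ξ) (φ ξ⁻¹) (by rw [hmul]; simp [hone])
              (by rw [hmul]; simp [hone]), map_one' := ?_, map_mul' := ?_ }, ?_⟩
  · ext a; simp [hone]
  · intro ξ η; ext a
    simp [← hmul]
  · intro ξ i j
    exact hφ ξ i j

theorem lt_iff_ltc (l k : Fin (m * n)) :
    (l : ℕ) < k ↔ ltc (finProdFinEquiv.symm k) (finProdFinEquiv.symm l).1
      (finProdFinEquiv.symm l).2 := by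
  have := Pk_iff_ltc k.isLt (finProdFinEquiv.symm l).1 (finProdFinEquiv.symm l).2
  rw [← this, Pk]
  simp only [Prod.mk.eta, Equiv.apply_symm_apply]

theorem chi_hMat (c : Fin m × Fin n) (i : Fin m) (j : Fin n) :
    (chi (hMat K q m n c.1 c.2) i j : K) = sg (q : K) c (i, j) := by
  have h1 : (Fin.natAdd m j : Fin (m + n)) ≠ Fin.castAdd n c.1 := by
    intro h
    have := congrArg Fin.val h
    have := c.1.isLt
    simp at *
    omega
  simp only [chi, hMat, sg, Fin.castAdd_inj, h1, if_false]
  have h2 : ∀ i : Fin m, (Fin.castAdd n i : Fin (m + n)) ≠ Fin.natAdd m c.2 := by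
    intro i h
    have := congrArg Fin.val h
    have := i.isLt
    simp at *
    omega
  simp only [h2, if_false, Fin.natAdd_inj]
  split <;> split <;> simp

theorem chi_inv (ξ : Torus K (m + n)) (i : Fin m) (j : Fin n) :
    (chi ξ⁻¹ i j : K) = (chi ξ i j : K)⁻¹ := by
  simp [chi, mul_comm]

theorem fwd_delta (c : Fin m × Fin n) (i : Fin m) (j : Fin n) (h : ltc c i j) :
    tGen K q m n c.1 c.2 * tGen K q m n i j -
      (sg (q : K) c (i, j) • tGen K q m n i j) * tGen K q m n c.1 c.2 =
      dl (q : K) (tGen K q m n) c (i, j) := by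
  have H := tGen_rel (K := K) q m n
  obtain ⟨k, l⟩ := c
  simp only [ltc] at h ⊢
  rcases h with h | ⟨rfl, h⟩
  · rcases lt_trichotomy j l with h2 | rfl | h2
    · rw [smul_mul_assoc, H.serp i k j l h h2 trivial]
      simp [sg, dl, h.ne, h2.ne, h, h2]
    · rw [smul_mul_assoc, H.col i k j h trivial]
      simp [sg, dl, h.ne, smul_smul]
    · rw [smul_mul_assoc, H.comm i k j l h h2 trivial]
      simp [sg, dl, h.ne, h2.ne', h2.not_gt]
  · rw [smul_mul_assoc, H.row i j l h trivial]
    simp [sg, dl, h.ne, smul_smul]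

theorem rev_delta (c : Fin m × Fin n) (i : Fin m) (j : Fin n) (h : ltc (i, j) c.1 c.2) :
    tGen K q m n c.1 c.2 * tGen K q m n i j -
      ((sg (q : K) c (i, j))⁻¹ • tGen K q m n i j) * tGen K q m n c.1 c.2 =
      if c.1 < i ∧ c.2 < j then
        ((q : K) - (q : K)⁻¹) • (tGen K q m n c.1 j * tGen K q m n i c.2) else 0 := by
  have H := tGen_rel (K := K) q m n
  obtain ⟨k, l⟩ := c
  simp only [ltc] at h ⊢
  rcases h with h | ⟨rfl, h⟩
  · rcases lt_trichotomy l j with h2 | rfl | h2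
    · rw [smul_mul_assoc, H.serp k i l j h h2 trivial]
      simp [sg, h.ne', h2.ne', h, h2]
    · rw [smul_mul_assoc, H.col k i l h trivial]
      simp [sg, h.ne']
    · rw [smul_mul_assoc, H.comm k i l j h h2 trivial]
      simp [sg, h.ne', h2.ne, h2.not_gt]
  · rw [smul_mul_assoc, H.row k l j h trivial]
    simp [sg, h.ne']

end RqFacts


section Final
universe u1 v1

theorem skD_both {K : Type u1} [Field K] {R : Type v1} [Ring R] [Algebra K R]
    {σ : R ≃ₐ[K] R} {x : R} {lam : K} (hx : σ x = lam • x) (hl : lam ≠ 0) {S : Set R}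
    (h1 : ∀ s ∈ S, ∃ μ : K, σ s = μ • s)
    (h2 : ∀ s ∈ S, skD σ x s = 0 ∨ ∃ r : K, ∃ a ∈ S, ∃ b ∈ S,
      skD σ x a = 0 ∧ skD σ x b = 0 ∧ skD σ x s = r • (a * b)) :
    (∀ a ∈ Algebra.adjoin K S, skD σ x a ∈ Algebra.adjoin K S) ∧
      ∀ a ∈ Algebra.adjoin K S, ∃ p : ℕ, (skD σ x)^[p] a = 0 := by
  constructor
  · refine skD_stable ?_ ?_
    · intro s hs
      obtain ⟨μ, hμ⟩ := h1 s hs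
      rw [hμ]
      exact Subalgebra.smul_mem _ (Algebra.subset_adjoin hs) μ
    · intro s hs
      rcases h2 s hs with h | ⟨r, a, ha, b, hb, -, -, h⟩
      · rw [h]; exact zero_mem _
      · rw [h]
        exact Subalgebra.smul_mem _
          (mul_mem (Algebra.subset_adjoin ha) (Algebra.subset_adjoin hb)) r
  · intro a ha
    obtain ⟨p, hp⟩ := skD_nil hx hl (S := S) (fun s hs => by
      rcases h2 s hs with h | ⟨r, a, ha, b, hb, h3, h4, h⟩
      · exact ⟨1, by rw [pow_one, h]⟩
      · refine ⟨2, ?_⟩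
        rw [pow_two, Module.End.mul_apply, h, map_smul, skD_mul, h3, h4]
        simp) a ha
    exact ⟨p, by rw [← Module.End.pow_apply]; exact hp⟩

variable {K : Type u1} [Field K] {q : Kˣ} {m n : ℕ}

theorem tGen_eigen {act : Torus K (m + n) →* (RqMat K q m n ≃ₐ[K] RqMat K q m n)}
    (hact : ∀ ξ i j, act ξ (tGen K q m n i j) = (chi ξ i j : K) • tGen K q m n i j)
    (i : Fin m) (j : Fin n) : ∃ f, IsEigenWith K act f (tGen K q m n i j) := by
  refine ⟨fun s => Fin.addCases (fun a => if a = i then 1 else 0)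
    (fun b => if b = j then -1 else 0) s, ?_⟩
  intro ξ
  rw [hact]
  congr 2
  rw [Fin.prod_univ_add, Finset.prod_eq_single i, Finset.prod_eq_single j]
  · simp [chi]
  · intro b _ hb; simp [hb]
  · simp
  · intro b _ hb; simp [hb]
  · simp

theorem xq_mem {P : Fin (m * n) → Prop} {i : Fin m} {j : Fin n}
    (h : P (finProdFinEquiv (i, j))) :
    tGen K q m n i j ∈ xq q m n '' {l | P l} :=
  ⟨finProdFinEquiv (i, j), h, by simp [xq]⟩

theorem sg_self (c : Fin m × Fin n) : sg (q : K) c c = ((q ^ (-2 : ℤ) : Kˣ) : K) := by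
  simp [sg, zpow_neg, pow_two]

theorem sg_ne (c a : Fin m × Fin n) : sg (q : K) c a ≠ 0 := by
  unfold sg
  split <;> split <;> simp

theorem fwd_both {act : Torus K (m + n) →* (RqMat K q m n ≃ₐ[K] RqMat K q m n)}
    (hact : ∀ ξ i j, act ξ (tGen K q m n i j) = (chi ξ i j : K) • tGen K q m n i j)
    (k : Fin (m * n)) (c : Fin m × Fin n) (hc : c = finProdFinEquiv.symm k) :
    (∀ a ∈ Rsub K (xq q m n) k, skD (act (hMat K q m n c.1 c.2)) (xq q m n k) a ∈
      Rsub K (xq q m n) k) ∧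
    ∀ a ∈ Rsub K (xq q m n) k, ∃ p : ℕ,
      (skD (act (hMat K q m n c.1 c.2)) (xq q m n k))^[p] a = 0 := by
  have hs : ∀ i j, act (hMat K q m n c.1 c.2) (tGen K q m n i j) =
      sg (q : K) c (i, j) • tGen K q m n i j := fun i j => by rw [hact, chi_hMat]
  have hxk : xq q m n k = tGen K q m n c.1 c.2 := by rw [hc]; rfl
  have hlt : ∀ i j, ((finProdFinEquiv (i, j) : Fin (m * n)) : ℕ) < k ↔ ltc c i j := by
    intro i j
    rw [lt_iff_ltc, hc]; simp
  have hD : ∀ i j, ltc c i j → skD (act (hMat K q m n c.1 c.2)) (xq q m n k)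
      (tGen K q m n i j) = dl (q : K) (tGen K q m n) c (i, j) := by
    intro i j h
    rw [skD_apply, hs, hxk, fwd_delta c i j h]
  refine skD_both (lam := sg (q : K) c c) (by rw [hxk, hs]) (sg_ne _ _) ?_ ?_
  · rintro _ ⟨l, -, rfl⟩
    exact ⟨_, hs _ _⟩
  · rintro _ ⟨l, hl, rfl⟩
    have hl' := (lt_iff_ltc l k).1 hl
    rw [← hc] at hl'
    by_cases h : (finProdFinEquiv.symm l).1 < c.1 ∧ (finProdFinEquiv.symm l).2 < c.2
    · right
      have h1 : ltc c (finProdFinEquiv.symm l).1 c.2 := Or.inl h.1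
      have h2 : ltc c c.1 (finProdFinEquiv.symm l).2 := Or.inr ⟨rfl, h.2⟩
      refine ⟨-((q : K) - (q : K)⁻¹), tGen K q m n (finProdFinEquiv.symm l).1 c.2,
        xq_mem ((hlt _ _).2 h1), tGen K q m n c.1 (finProdFinEquiv.symm l).2,
        xq_mem ((hlt _ _).2 h2), ?_, ?_, ?_⟩
      · rw [hD _ _ h1]; simp [dl]
      · rw [hD _ _ h2]; simp [dl]
      · rw [show xq q m n l = tGen K q m n (finProdFinEquiv.symm l).1 (finProdFinEquiv.symm l).2
          from rfl, hD (finProdFinEquiv.symm l).1 (finProdFinEquiv.symm l).2 hl', dl, if_pos h, neg_smul]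
    · left
      rw [show xq q m n l = tGen K q m n (finProdFinEquiv.symm l).1 (finProdFinEquiv.symm l).2
          from rfl, hD (finProdFinEquiv.symm l).1 (finProdFinEquiv.symm l).2 hl', dl, if_neg h]

theorem rev_both {act : Torus K (m + n) →* (RqMat K q m n ≃ₐ[K] RqMat K q m n)}
    (hact : ∀ ξ i j, act ξ (tGen K q m n i j) = (chi ξ i j : K) • tGen K q m n i j)
    (k : Fin (m * n)) (c : Fin m × Fin n) (hc : c = finProdFinEquiv.symm k) :
    (∀ a ∈ RsubRev K (xq q m n) k, skD (act (hMat K q m n c.1 c.2)⁻¹) (xq q m n k) a ∈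
      RsubRev K (xq q m n) k) ∧
    ∀ a ∈ RsubRev K (xq q m n) k, ∃ p : ℕ,
      (skD (act (hMat K q m n c.1 c.2)⁻¹) (xq q m n k))^[p] a = 0 := by
  have hs : ∀ i j, act (hMat K q m n c.1 c.2)⁻¹ (tGen K q m n i j) =
      (sg (q : K) c (i, j))⁻¹ • tGen K q m n i j := fun i j => by
    rw [hact, chi_inv, chi_hMat]
  have hxk : xq q m n k = tGen K q m n c.1 c.2 := by rw [hc]; rfl
  have hlt : ∀ i j, (k : ℕ) < ((finProdFinEquiv (i, j) : Fin (m * n)) : ℕ) ↔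
      ltc (i, j) c.1 c.2 := by
    intro i j
    rw [lt_iff_ltc, hc]; simp
  have hD : ∀ i j, ltc (i, j) c.1 c.2 → skD (act (hMat K q m n c.1 c.2)⁻¹) (xq q m n k)
      (tGen K q m n i j) = if c.1 < i ∧ c.2 < j then
        ((q : K) - (q : K)⁻¹) • (tGen K q m n c.1 j * tGen K q m n i c.2) else 0 := by
    intro i j h
    rw [skD_apply, hs, hxk, rev_delta c i j h]
  refine skD_both (lam := (sg (q : K) c c)⁻¹) (by rw [hxk, hs])
    (inv_ne_zero (sg_ne _ _)) ?_ ?_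
  · rintro _ ⟨l, -, rfl⟩
    exact ⟨_, hs _ _⟩
  · rintro _ ⟨l, hl, rfl⟩
    have hl' := (lt_iff_ltc k l).1 hl
    rw [← hc] at hl'
    by_cases h : c.1 < (finProdFinEquiv.symm l).1 ∧ c.2 < (finProdFinEquiv.symm l).2
    · right
      have h1 : ltc (c.1, (finProdFinEquiv.symm l).2) c.1 c.2 := Or.inr ⟨rfl, h.2⟩
      have h2 : ltc ((finProdFinEquiv.symm l).1, c.2) c.1 c.2 := Or.inl h.1
      refine ⟨(q : K) - (q : K)⁻¹, tGen K q m n c.1 (finProdFinEquiv.symm l).2,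
        xq_mem (P := fun l => (k : ℕ) < l) ((hlt _ _).2 h1),
        tGen K q m n (finProdFinEquiv.symm l).1 c.2,
        xq_mem (P := fun l => (k : ℕ) < l) ((hlt _ _).2 h2), ?_, ?_, ?_⟩
      · rw [hD _ _ h1]; simp
      · rw [hD _ _ h2]; simp
      · rw [show xq q m n l = tGen K q m n (finProdFinEquiv.symm l).1 (finProdFinEquiv.symm l).2
          from rfl, hD (finProdFinEquiv.symm l).1 (finProdFinEquiv.symm l).2 hl', if_pos h]
    · left
      rw [show xq q m n l = tGen K q m n (finProdFinEquiv.symm l).1 (finProdFinEquiv.symm l).2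
          from rfl, hD (finProdFinEquiv.symm l).1 (finProdFinEquiv.symm l).2 hl', if_neg h]

end Final

/-- **Quantum matrices are symmetric quantum nilpotent algebras.**
For `q ∈ Kˣ` not a root of unity, the algebra `R_q[M_{m×n}]` of quantum matrices is a
symmetric quantum nilpotent algebra of dimension `N = mn` with respect to the presentation
`x_{(i-1)n+j} = t_{ij}` and the rational action of the torus `H = (Kˣ)^{m+n}` given by
`(ξ_1, …, ξ_{m+n}) · t_{ij} = ξ_i ξ_{m+j}⁻¹ t_{ij}` (in particular each `δ_k` is locally
nilpotent), with the elements `h_{ij} = (1,…,1,q⁻¹,1,…,1,q,1,…,1)` satisfying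
`σ_{(i-1)n+j} = (h_{ij} ·)` and `h_{ij} · t_{ij} = q⁻² t_{ij}`. -/
theorem quantum_matrices_symQNA
    {K : Type u} [Field K] (q : Kˣ) (hq : ∀ s : ℕ, s ≠ 0 → (q : K) ^ s ≠ 1)
    (m n : ℕ) (hm : 0 < m) (hn : 0 < n) :
    ∃ act : Torus K (m + n) →* (RqMat K q m n ≃ₐ[K] RqMat K q m n),
      (∀ (ξ : Torus K (m + n)) (i : Fin m) (j : Fin n),
        act ξ (tGen K q m n i j) =
          ((ξ (Fin.castAdd n i) * (ξ (Fin.natAdd m j))⁻¹ : Kˣ) : K) • tGen K q m n i j) ∧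
      ∃ S : SymQNA K (RqMat K q m n) (m * n) (m + n),
        S.act = act ∧
        (∀ (i : Fin m) (j : Fin n), S.x (finProdFinEquiv (i, j)) = tGen K q m n i j) ∧
        (∀ (i : Fin m) (j : Fin n), S.h (finProdFinEquiv (i, j)) = hMat K q m n i j) ∧
        (∀ (i : Fin m) (j : Fin n),
          act (hMat K q m n i j) (tGen K q m n i j) =
            ((q ^ (-2 : ℤ) : Kˣ) : K) • tGen K q m n i j) := by
  obtain ⟨act, hact⟩ := exists_act q m n
  have hself : ∀ (i : Fin m) (j : Fin n), act (hMat K q m n i j) (tGen K q m n i j) =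
      ((q ^ (-2 : ℤ) : Kˣ) : K) • tGen K q m n i j := by
    intro i j
    rw [hact, chi_hMat (i, j) i j, sg_self]
  have hself' : ∀ (i : Fin m) (j : Fin n), act (hMat K q m n i j)⁻¹ (tGen K q m n i j) =
      ((q : K) ^ 2) • tGen K q m n i j := by
    intro i j
    rw [hact, chi_inv, chi_hMat (i, j) i j, sg_self]
    simp [zpow_neg]
  have hroot : ∀ s : ℕ, s ≠ 0 → ((q : K) ^ 2) ^ s ≠ 1 := by
    intro s hs
    rw [← pow_mul]
    exact hq _ (by omega)
  have hsk : ∀ (h : Fin (m * n) → Torus K (m + n)) (k : Fin (m * n)),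
      skewDelta K act (xq q m n) h k = ⇑(skD (act (h k)) (xq q m n k)) := by
    intro h k
    funext a
    rw [skD_apply]; rfl
  refine ⟨act, hact, ⟨⟨xq q m n, act,
    fun l => hMat K q m n (finProdFinEquiv.symm l).1 (finProdFinEquiv.symm l).2,
    fun _ => ((q ^ (-2 : ℤ) : Kˣ) : K), ?_, xq_gen, xq_pbw, ?_, ?_, ?_, ?_, ?_⟩,
    fun l => (hMat K q m n (finProdFinEquiv.symm l).1 (finProdFinEquiv.symm l).2)⁻¹,
    fun _ => (q : K) ^ 2, xq_pbwRev, ?_, ?_, ?_, ?_⟩, rfl, ?_, ?_, hself⟩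
  · refine rational_of_gen act _ xq_gen ?_
    rintro _ ⟨l, rfl⟩
    exact tGen_eigen hact _ _
  · intro k
    exact tGen_eigen hact _ _
  · intro k
    rw [hsk]
    exact (fwd_both hact k _ rfl).1
  · intro k
    rw [hsk]
    exact (fwd_both hact k _ rfl).2
  · intro k
    exact hself _ _
  · intro k s hs h
    apply hroot s hs
    have h1 : (((q : K) ^ 2)⁻¹) ^ s = 1 := by simpa [zpow_neg] using h
    rwa [inv_pow, inv_eq_one] at h1
  · intro k
    rw [hsk]
    exact (rev_both hact k _ rfl).1
  · intro k
    rw [hsk]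
    exact (rev_both hact k _ rfl).2
  · intro k
    exact hself' _ _
  · intro k s hs
    exact hroot s hs
  · intro i j
    simp [xq]
  · intro i j
    simp
end
end

section
/- For the algebra of quantum matrices R_q[M_{m×n}] over a field K with q ∈ K^× not a root of unity, viewed as a quantum nilpotent algebra of dimension mn via x_{(i−1)n+j} = t_{ij}, the canonical sequence of homogeneous prime elements from the prime element theorem consists of solid quantum minors: y_{(i−1)n+j} = Δ_{[i−min(i,j)+1, i], [j−min(i,j)+1, j]} for all 1 ≤ i ≤ m, 1 ≤ j ≤ n; the function η : [1,mn] → ℤ can be chosen as η((i−1)n+j) = j − i; and consequently the rank of R_q[M_{m×n}] (the cardinality of the range of η) equals m + n − 1. -/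
open scoped BigOperators

noncomputable section

universe u v

section OreFil

variable {K : Type u} [Field K] {R : Type v} [Ring R] [Algebra K R]

/-- The filtration `A + A x + ⋯ + A x^(n-1)`. -/
def Fil (A : Subalgebra K R) (x : R) : ℕ → Submodule K R
  | 0 => ⊥
  | n + 1 => (Subalgebra.toSubmodule A).map (LinearMap.mulRight K (x ^ n)) ⊔ Fil A x n

theorem mem_Fil_succ {A : Subalgebra K R} {x : R} {n : ℕ} {z : R} :
    z ∈ Fil A x (n + 1) ↔ ∃ a ∈ A, ∃ f ∈ Fil A x n, z = a * x ^ n + f := by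
  rw [Fil, Submodule.mem_sup]
  constructor
  · rintro ⟨y, hy, f, hf, rfl⟩
    obtain ⟨a, ha, rfl⟩ := hy
    exact ⟨a, ha, f, hf, rfl⟩
  · rintro ⟨a, ha, f, hf, rfl⟩
    exact ⟨a * x ^ n, ⟨a, ha, rfl⟩, f, hf, rfl⟩

theorem mul_pow_mem_Fil {A : Subalgebra K R} {x a : R} (ha : a ∈ A) (n : ℕ) :
    a * x ^ n ∈ Fil A x (n + 1) :=
  mem_Fil_succ.2 ⟨a, ha, 0, Submodule.zero_mem _, by simp⟩

theorem mem_Fil_one {A : Subalgebra K R} {x z : R} : z ∈ Fil A x 1 ↔ z ∈ A := by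
  rw [mem_Fil_succ]
  constructor
  · rintro ⟨a, ha, f, hf, rfl⟩
    have : f = 0 := by simpa [Fil] using hf
    simpa [this] using ha
  · intro h
    exact ⟨z, h, 0, Submodule.zero_mem _, by simp⟩

theorem Fil_le_succ (A : Subalgebra K R) (x : R) (n : ℕ) : Fil A x n ≤ Fil A x (n + 1) := by
  rw [Fil]; exact le_sup_right

theorem Fil_mono (A : Subalgebra K R) (x : R) : Monotone (Fil A x) :=
  monotone_nat_of_le_succ (Fil_le_succ A x)

theorem A_mul_Fil {A : Subalgebra K R} {x a : R} (ha : a ∈ A) {n : ℕ} {z : R}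
    (hz : z ∈ Fil A x n) : a * z ∈ Fil A x n := by
  induction n generalizing z with
  | zero => 
    have : z = 0 := by simpa [Fil] using hz
    simp [this]
  | succ n ih =>
    obtain ⟨b, hb, f, hf, rfl⟩ := mem_Fil_succ.1 hz
    exact mem_Fil_succ.2 ⟨a * b, A.mul_mem ha hb, a * f, ih hf, by rw [mul_add, mul_assoc]⟩

theorem Fil_mul_x {A : Subalgebra K R} {x : R} {n : ℕ} {z : R}
    (hz : z ∈ Fil A x n) : z * x ∈ Fil A x (n + 1) := by
  induction n generalizing z with
  | zero => 
    have : z = 0 := by simpa [Fil] using hz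
    simp [this]
  | succ n ih =>
    obtain ⟨b, hb, f, hf, rfl⟩ := mem_Fil_succ.1 hz
    exact mem_Fil_succ.2 ⟨b, hb, f * x, ih hf, by rw [add_mul, mul_assoc, pow_succ]⟩

theorem Fil_mul_xpow {A : Subalgebra K R} {x : R} {n : ℕ} {z : R}
    (hz : z ∈ Fil A x n) (k : ℕ) : z * x ^ k ∈ Fil A x (n + k) := by
  induction k with
  | zero => simpa using hz
  | succ k ih => rw [pow_succ, ← mul_assoc, ← add_assoc]; exact Fil_mul_x ih

/-- One step of an iterated Ore extension (without freeness). -/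
structure OrePre (A B : Subalgebra K R) (x : R) (σ : R ≃ₐ[K] R) : Prop where
  hAB : A ≤ B
  xB : x ∈ B
  hB : B ≤ Algebra.adjoin K (A ∪ {x})
  σA : ∀ a ∈ A, σ a ∈ A
  σA' : ∀ a ∈ A, σ.symm a ∈ A
  comm : ∀ a ∈ A, x * a - σ a * x ∈ A

/-- One step of an iterated Ore extension. -/
structure OreData (A B : Subalgebra K R) (x : R) (σ : R ≃ₐ[K] R) : Prop
    extends OrePre A B x σ where
  indep : ∀ n, ∀ a ∈ A, a * x ^ n ∈ Fil A x n → a = 0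

namespace OrePre

variable {A B : Subalgebra K R} {x : R} {σ : R ≃ₐ[K] R}

theorem powA (h : OrePre A B x σ) (n : ℕ) {a : R} (ha : a ∈ A) : (σ ^ n) a ∈ A := by
  induction n with
  | zero => simpa using ha
  | succ n ih => rw [pow_succ']; exact h.σA _ ih

theorem x_mul_Fil (h : OrePre A B x σ) {n : ℕ} {z : R} (hz : z ∈ Fil A x n) : x * z ∈ Fil A x (n + 1) := by
  induction n generalizing z with
  | zero => 
    have : z = 0 := by simpa [Fil] using hz
    simp [this]
  | succ n ih =>
    obtain ⟨b, hb, f, hf, rfl⟩ := mem_Fil_succ.1 hz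
    refine mem_Fil_succ.2 ⟨σ b, h.σA b hb, (x * b - σ b * x) * x ^ n + x * f, ?_, ?_⟩
    · exact Submodule.add_mem _ (mul_pow_mem_Fil (h.comm b hb) n) (ih hf)
    · rw [pow_succ']; noncomm_ring

theorem xpow_mul_Fil (h : OrePre A B x σ) (k : ℕ) {n : ℕ} {z : R} (hz : z ∈ Fil A x n) :
    x ^ k * z ∈ Fil A x (n + k) := by
  induction k with
  | zero => simpa using hz
  | succ k ih => rw [pow_succ', mul_assoc, ← add_assoc]; exact h.x_mul_Fil ih

theorem xpow_mul (h : OrePre A B x σ) (n : ℕ) {a : R} (ha : a ∈ A) :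
    x ^ n * a - (σ ^ n) a * x ^ n ∈ Fil A x n := by
  induction n with
  | zero => simp
  | succ n ih =>
    have h1 := h.x_mul_Fil ih
    have h2 := mul_pow_mem_Fil (x := x) (h.comm _ (h.powA n ha)) n
    have := Submodule.add_mem _ h1 h2
    convert this using 1
    rw [pow_succ' σ, AlgEquiv.mul_apply, pow_succ']
    noncomm_ring

theorem Fil_mul_A (h : OrePre A B x σ) {a : R} (ha : a ∈ A) {n : ℕ} {z : R} (hz : z ∈ Fil A x n) :
    z * a ∈ Fil A x n := by
  induction n generalizing z with
  | zero => 
    have : z = 0 := by simpa [Fil] using hz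
    simp [this]
  | succ n ih =>
    obtain ⟨b, hb, f, hf, rfl⟩ := mem_Fil_succ.1 hz
    have h1 := A_mul_Fil hb (h.xpow_mul n ha)
    refine mem_Fil_succ.2 ⟨b * (σ ^ n) a, A.mul_mem hb (h.powA n ha),
      b * (x ^ n * a - (σ ^ n) a * x ^ n) + f * a, Submodule.add_mem _ h1 (ih hf), ?_⟩
    noncomm_ring

theorem Fil_mul_Fil (h : OrePre A B x σ) {n k : ℕ} {z w : R} (hz : z ∈ Fil A x n) (hw : w ∈ Fil A x k) :
    z * w ∈ Fil A x (n + k) := by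
  induction n generalizing z with
  | zero => 
    have : z = 0 := by simpa [Fil] using hz
    simp [this]
  | succ n ih =>
    obtain ⟨b, hb, f, hf, rfl⟩ := mem_Fil_succ.1 hz
    rw [add_mul, mul_assoc]
    refine Submodule.add_mem _ (A_mul_Fil hb ?_) ?_
    · exact Fil_mono A x (by omega) (h.xpow_mul_Fil n hw)
    · exact Fil_mono A x (by omega) (ih hf)

theorem lead_mul (h : OrePre A B x σ) {n k : ℕ} {a b f g : R} (ha : a ∈ A) (hb : b ∈ A) (hf : f ∈ Fil A x n)
    (hg : g ∈ Fil A x k) : ∃ e ∈ Fil A x (n + k),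
    (a * x ^ n + f) * (b * x ^ k + g) = a * (σ ^ n) b * x ^ (n + k) + e := by
  refine ⟨a * (x ^ n * b - (σ ^ n) b * x ^ n) * x ^ k + a * (x ^ n * g) + f * b * x ^ k + f * g,
    ?_, ?_⟩
  · refine Submodule.add_mem _ (Submodule.add_mem _ (Submodule.add_mem _ ?_ ?_) ?_) ?_
    · exact Fil_mul_xpow (A_mul_Fil ha (h.xpow_mul n hb)) k
    · rw [add_comm n k]; exact A_mul_Fil ha (h.xpow_mul_Fil n hg)
    · exact Fil_mul_xpow (h.Fil_mul_A hb hf) k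
    · exact h.Fil_mul_Fil hf hg
  · rw [pow_add]; noncomm_ring

theorem exists_Fil (h : OrePre A B x σ) {z : R} (hz : z ∈ B) : ∃ n, z ∈ Fil A x n := by
  have hz' := h.hB hz
  clear hz
  induction hz' using Algebra.adjoin_induction with
  | mem z hz =>
    rcases hz with hz | hz
    · exact ⟨1, mem_Fil_one.2 hz⟩
    · refine ⟨2, ?_⟩
      rw [Set.mem_singleton_iff] at hz
      subst hz
      simpa using mul_pow_mem_Fil (x := z) A.one_mem 1
  | algebraMap r => exact ⟨1, mem_Fil_one.2 (A.algebraMap_mem r)⟩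
  | add z w _ _ ihz ihw =>
    obtain ⟨n, hn⟩ := ihz
    obtain ⟨k, hk⟩ := ihw
    exact ⟨max n k, Submodule.add_mem _ (Fil_mono A x (le_max_left _ _) hn)
      (Fil_mono A x (le_max_right _ _) hk)⟩
  | mul z w _ _ ihz ihw =>
    obtain ⟨n, hn⟩ := ihz
    obtain ⟨k, hk⟩ := ihw
    exact ⟨n + k, h.Fil_mul_Fil hn hk⟩

theorem Fil_le_B (h : OrePre A B x σ) {n : ℕ} {z : R} (hz : z ∈ Fil A x n) : z ∈ B := by
  induction n generalizing z with
  | zero => 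
    have : z = 0 := by simpa [Fil] using hz
    simp [this, B.zero_mem]
  | succ n ih =>
    obtain ⟨b, hb, f, hf, rfl⟩ := mem_Fil_succ.1 hz
    exact B.add_mem (B.mul_mem (h.hAB hb) (B.pow_mem h.xB n)) (ih hf)

end OrePre

theorem exists_lead {A : Subalgebra K R} {x : R} {n : ℕ} {z : R} (hz : z ∈ Fil A x n)
    (h0 : z ≠ 0) : ∃ k, ∃ a ∈ A, a ≠ 0 ∧ ∃ f ∈ Fil A x k, z = a * x ^ k + f := by
  induction n with
  | zero => exact absurd (by simpa [Fil] using hz) h0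
  | succ n ih =>
    obtain ⟨b, hb, f, hf, hz'⟩ := mem_Fil_succ.1 hz
    by_cases hb0 : b = 0
    · apply ih
      rw [hz', hb0]; simpa using hf
    · exact ⟨n, b, hb, hb0, f, hf, hz'⟩

/-- A subalgebra without zero divisors. -/
def NZD (A : Subalgebra K R) : Prop := ∀ a ∈ A, ∀ b ∈ A, a * b = 0 → a = 0 ∨ b = 0

namespace OreData

variable {A B : Subalgebra K R} {x : R} {σ : R ≃ₐ[K] R}

theorem lead_unique (h : OreData A B x σ) {n : ℕ} {a b f g : R} (ha : a ∈ A) (hb : b ∈ A) (hf : f ∈ Fil A x n)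
    (hg : g ∈ Fil A x n) (e : a * x ^ n + f = b * x ^ n + g) : a = b ∧ f = g := by
  have h1 : (a - b) * x ^ n = g - f := by
    rw [sub_mul]; rw [sub_eq_sub_iff_add_eq_add, e, add_comm]
  have h2 := h.indep n (a - b) (A.sub_mem ha hb) (by rw [h1]; exact Submodule.sub_mem _ hg hf)
  have h3 : a = b := sub_eq_zero.1 h2
  subst h3
  exact ⟨rfl, add_left_cancel e⟩

theorem nzd (h : OreData A B x σ) (hA : NZD A) : NZD B := by
  intro z hz w hw e
  by_contra! hne
  obtain ⟨n, hn⟩ := h.exists_Fil hz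
  obtain ⟨k, hk⟩ := h.exists_Fil hw
  obtain ⟨n', a, ha, ha0, f, hf, rfl⟩ := exists_lead hn hne.1
  obtain ⟨k', b, hb, hb0, g, hg, rfl⟩ := exists_lead hk hne.2
  obtain ⟨r, hr, hr'⟩ := h.lead_mul ha hb hf hg
  rw [e] at hr'
  have := h.indep (n' + k') (a * (σ ^ n') b) (A.mul_mem ha (h.powA _ hb)) (by
    rw [← neg_eq_of_add_eq_zero_left hr'.symm]; exact Submodule.neg_mem _ hr)
  rcases hA _ ha _ (h.powA _ hb) this with h1 | h1
  · exact ha0 h1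
  · exact hb0 ((map_eq_zero_iff _ (σ ^ n').injective).1 h1)

/-- If `p d` has small degree then so does `d`. -/
theorem deg_of_mul (h : OreData A B x σ) (hA : NZD A) {p : R} (hp : p ∈ A) (hp0 : p ≠ 0) {d : R} (hd : d ∈ B) {N : ℕ}
    (hN : p * d ∈ Fil A x N) : d ∈ Fil A x N := by
  obtain ⟨n, hn⟩ := h.exists_Fil hd
  induction n with
  | zero => exact Fil_mono A x (Nat.zero_le _) hn
  | succ n ih =>
    by_cases hle : n + 1 ≤ N
    · exact Fil_mono A x hle hn
    · apply ih
      obtain ⟨b, hb, f, hf, rfl⟩ := mem_Fil_succ.1 hn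
      have h1 : p * b * x ^ n ∈ Fil A x n := by
        have : p * b * x ^ n = p * (b * x ^ n + f) - p * f := by noncomm_ring
        rw [this]
        exact Submodule.sub_mem _ (Fil_mono A x (by omega) hN) (A_mul_Fil hp hf)
      have h2 := h.indep n _ (A.mul_mem hp hb) h1
      rcases hA _ hp _ hb h2 with h3 | h3
      · exact absurd h3 hp0
      · simpa [h3] using hf

theorem prime_lift (h : OreData A B x σ) (hA : NZD A) {p : R} (hp : IsPrimeIn K A p)
    (hδ : ∀ a ∈ A, x * a = σ a * x) {κ : Kˣ} (hσ : σ p = (κ : K) • p) : IsPrimeIn K B p := by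
  obtain ⟨hpA, hp0, hnu, hn1, hn2, hprime⟩ := hp
  have hxp : x * p = (κ : K) • (p * x) := by rw [hδ p hpA, hσ, smul_mul_assoc]
  have N1 : ∀ b ∈ B, ∃ d ∈ B, b * p = p * d := by
    intro b hb
    have hb' := h.hB hb
    clear hb
    induction hb' using Algebra.adjoin_induction with
    | mem z hz =>
      rcases hz with hz | hz
      · obtain ⟨d, hd, e⟩ := hn1 z hz
        exact ⟨d, h.hAB hd, e⟩
      · rw [Set.mem_singleton_iff] at hz
        subst hz
        exact ⟨(κ : K) • z, B.smul_mem h.xB _, by rw [hxp, mul_smul_comm]⟩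
    | algebraMap r => exact ⟨algebraMap K R r, B.algebraMap_mem r, Algebra.commutes r p⟩
    | add z w _ _ ihz ihw =>
      obtain ⟨d, hd, e⟩ := ihz
      obtain ⟨d', hd', e'⟩ := ihw
      exact ⟨d + d', B.add_mem hd hd', by rw [add_mul, mul_add, e, e']⟩
    | mul z w _ _ ihz ihw =>
      obtain ⟨d, hd, e⟩ := ihz
      obtain ⟨d', hd', e'⟩ := ihw
      exact ⟨d * d', B.mul_mem hd hd', by rw [mul_assoc, e', ← mul_assoc, e, mul_assoc]⟩
  have N2 : ∀ b ∈ B, ∃ d ∈ B, p * b = d * p := by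
    intro b hb
    have hb' := h.hB hb
    clear hb
    induction hb' using Algebra.adjoin_induction with
    | mem z hz =>
      rcases hz with hz | hz
      · obtain ⟨d, hd, e⟩ := hn2 z hz
        exact ⟨d, h.hAB hd, e⟩
      · rw [Set.mem_singleton_iff] at hz
        subst hz
        exact ⟨(κ : K)⁻¹ • z, B.smul_mem h.xB _, by
          rw [smul_mul_assoc, hxp, smul_smul, inv_mul_cancel₀ κ.ne_zero, one_smul]⟩
    | algebraMap r => exact ⟨algebraMap K R r, B.algebraMap_mem r, (Algebra.commutes r p).symm⟩
    | add z w _ _ ihz ihw =>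
      obtain ⟨d, hd, e⟩ := ihz
      obtain ⟨d', hd', e'⟩ := ihw
      exact ⟨d + d', B.add_mem hd hd', by rw [add_mul, mul_add, e, e']⟩
    | mul z w _ _ ihz ihw =>
      obtain ⟨d, hd, e⟩ := ihz
      obtain ⟨d', hd', e'⟩ := ihw
      exact ⟨d * d', B.mul_mem hd hd', by rw [← mul_assoc, e, mul_assoc, e', mul_assoc]⟩
  have lead : ∀ b ∈ B, (¬ ∃ d ∈ B, b = p * d) → ∃ n, ∃ a ∈ A, (¬ ∃ d ∈ A, a = p * d) ∧
      ∃ f ∈ Fil A x n, ∃ d ∈ B, b = (a * x ^ n + f) + p * d := by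
    intro b hb hnb
    obtain ⟨n, hn⟩ := h.exists_Fil hb
    have key : ∀ n, ∀ b0 ∈ Fil A x n, ∀ d0 ∈ B, b = b0 + p * d0 →
        ∃ n, ∃ a ∈ A, (¬ ∃ d ∈ A, a = p * d) ∧
          ∃ f ∈ Fil A x n, ∃ d ∈ B, b = (a * x ^ n + f) + p * d := by
      intro n
      induction n with
      | zero =>
        intro b0 hb0 d0 hd0 e
        have : b0 = 0 := by simpa [Fil] using hb0
        exact absurd ⟨d0, hd0, by rw [e, this, zero_add]⟩ hnb
      | succ n ih =>
        intro b0 hb0 d0 hd0 e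
        obtain ⟨a, ha, f, hf, rfl⟩ := mem_Fil_succ.1 hb0
        by_cases hdiv : ∃ d ∈ A, a = p * d
        · obtain ⟨d, hd, rfl⟩ := hdiv
          refine ih f hf (d * x ^ n + d0)
            (B.add_mem (B.mul_mem (h.hAB hd) (B.pow_mem h.xB n)) hd0) ?_
          rw [e]; noncomm_ring
        · exact ⟨n, a, ha, hdiv, f, hf, d0, hd0, e⟩
    exact key n b hn 0 B.zero_mem (by simp)
  have hσn : ∀ n : ℕ, (σ ^ n) p = ((κ ^ n : Kˣ) : K) • p := by
    intro n
    induction n with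
    | zero => simp
    | succ n ih =>
      rw [pow_succ', AlgEquiv.mul_apply, ih, map_smul, hσ, smul_smul, pow_succ, Units.val_mul]
  have hσs : ∀ n : ℕ, ∀ a ∈ A, ((σ ^ n).symm) a ∈ A := by
    intro n
    induction n with
    | zero => intro a ha; exact ha
    | succ n ih =>
      intro a ha
      have e : (σ ^ (n + 1)).symm a = σ.symm ((σ ^ n).symm a) := by
        rw [AlgEquiv.symm_apply_eq, pow_succ, AlgEquiv.mul_apply]
        simp
      rw [e]
      exact h.σA' _ (ih a ha)
  refine ⟨h.hAB hpA, hp0, ?_, N1, N2, ?_⟩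
  · rintro ⟨u, hu, e1, e2⟩
    refine hnu ⟨u, ?_, e1, e2⟩
    rw [← mem_Fil_one (x := x)]
    apply h.deg_of_mul hA hpA hp0 hu
    rw [e1, mem_Fil_one]; exact A.one_mem
  · rintro b hb b' hb' ⟨d, hd, e⟩
    by_contra! hcon
    obtain ⟨n, a, ha, hna, f, hf, d1, hd1, e1⟩ := lead b hb (by push Not; exact hcon.1)
    obtain ⟨k, a', ha', hna', f', hf', d2, hd2, e2⟩ := lead b' hb' (by push Not; exact hcon.2)
    obtain ⟨r, hr, hr'⟩ := h.lead_mul ha ha' hf hf'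
    -- the product of the reduced elements is divisible by `p`
    obtain ⟨d3, hd3, e3⟩ := N1 (a * x ^ n + f)
      (h.Fil_le_B (mem_Fil_succ.2 ⟨a, ha, f, hf, rfl⟩))
    have hdiv : a * (σ ^ n) a' * x ^ (n + k) + r = p * (d - d1 * b' - d3 * d2) := by
      rw [← hr', mul_sub, mul_sub, ← e, ← mul_assoc p d3 d2, ← e3]
      rw [e1, e2]
      noncomm_ring
    have hD : d - d1 * b' - d3 * d2 ∈ B :=
      B.sub_mem (B.sub_mem hd (B.mul_mem hd1 hb')) (B.mul_mem hd3 hd2)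
    have hD' := h.deg_of_mul hA hpA hp0 hD (N := n + k + 1) (by
      rw [← hdiv]; exact mem_Fil_succ.2 ⟨_, A.mul_mem ha (h.powA n ha'), r, hr, rfl⟩)
    obtain ⟨g, hg, s, hs, e4⟩ := mem_Fil_succ.1 hD'
    rw [e4, mul_add, ← mul_assoc] at hdiv
    have h5 := (h.lead_unique (A.mul_mem ha (h.powA n ha')) (A.mul_mem hpA hg) hr
      (A_mul_Fil hpA hs) hdiv).1
    rcases hprime a ha _ (h.powA n ha') ⟨g, hg, h5⟩ with h6 | ⟨t, ht, h6⟩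
    · exact hna h6
    · refine hna' ⟨(((κ ^ n : Kˣ) : K)⁻¹) • (σ ^ n).symm t, A.smul_mem (hσs n t ht) _, ?_⟩
      apply (σ ^ n).injective
      rw [h6, map_mul, map_smul, hσn, AlgEquiv.apply_symm_apply, smul_mul_assoc, mul_smul_comm,
        smul_smul, mul_inv_cancel₀ (Units.ne_zero _), one_smul]

end OreData

end OreFil

section QNAStructure

variable {K : Type u} [Field K] {R : Type v} [Ring R] [Algebra K R] {r N : ℕ}

theorem x_mem_Rsub (x : Fin N → R) (l : Fin N) {k : ℕ} (h : (l : ℕ) < k) : x l ∈ Rsub K x k :=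
  Algebra.subset_adjoin ⟨l, h, rfl⟩

theorem Rsub_mono (x : Fin N → R) {k l : ℕ} (h : k ≤ l) : Rsub K x k ≤ Rsub K x l := by
  apply Algebra.adjoin_mono
  apply Set.image_mono
  intro a ha
  exact lt_of_lt_of_le ha h

theorem act_mem_Rsub (Q : QNA K R N r) (ξ : Torus K r) (k : ℕ) {a : R} (ha : a ∈ Rsub K Q.x k) :
    Q.act ξ a ∈ Rsub K Q.x k := by
  unfold Rsub at ha
  induction ha using Algebra.adjoin_induction with
  | mem z hz =>
    obtain ⟨l, hl, rfl⟩ := hz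
    obtain ⟨f, hf⟩ := Q.eigenvec l
    rw [hf ξ]
    exact Subalgebra.smul_mem _ (x_mem_Rsub Q.x l hl) _
  | algebraMap s => rw [AlgEquiv.commutes]; exact Subalgebra.algebraMap_mem _ _
  | add z w _ _ hz hw => rw [map_add]; exact Subalgebra.add_mem _ hz hw
  | mul z w _ _ hz hw => rw [map_mul]; exact Subalgebra.mul_mem _ hz hw

theorem orePre (Q : QNA K R N r) (k : Fin N) :
    OrePre (Rsub K Q.x k) (Rsub K Q.x (k + 1)) (Q.x k) (Q.act (Q.h k)) where
  hAB := Rsub_mono _ (Nat.le_succ _)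
  xB := x_mem_Rsub _ _ (Nat.lt_succ_self _)
  hB := by
    apply Algebra.adjoin_le
    rintro _ ⟨l, hl, rfl⟩
    rcases Nat.lt_succ_iff_lt_or_eq.1 hl with h | h
    · exact Algebra.subset_adjoin (Or.inl (x_mem_Rsub _ _ h))
    · have : l = k := Fin.ext h
      subst this
      exact Algebra.subset_adjoin (Or.inr rfl)
  σA := fun a ha => act_mem_Rsub Q _ _ ha
  σA' := fun a ha => by
    have : (Q.act (Q.h k)).symm a = Q.act (Q.h k)⁻¹ a := by rw [map_inv]; rfl
    rw [this]
    exact act_mem_Rsub Q _ _ ha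
  comm := fun a ha => Q.stable k a ha

theorem ordMonomial_mul (x : Fin N → R) (k : Fin N) (f : Fin N → ℕ)
    (hf : ∀ l : Fin N, (k : ℕ) ≤ l → f l = 0) (n : ℕ) :
    ordMonomial x f * x k ^ n = ordMonomial x (Function.update f k n) := by
  have key : ∀ g : Fin N → ℕ, (∀ l : Fin N, k < l → g l = 0) →
      ordMonomial x g = (((List.finRange N).map fun l => x l ^ g l).take k).prod * x k ^ g k := by
    intro g hg
    unfold ordMonomial
    rw [← List.take_append_drop (k + 1) ((List.finRange N).map fun l => x l ^ g l),
      List.prod_append]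
    have h1 : (((List.finRange N).map fun l => x l ^ g l).drop (k + 1)).prod = 1 := by
      apply List.prod_eq_one
      intro z hz
      rw [List.mem_iff_getElem] at hz
      obtain ⟨i, hi, rfl⟩ := hz
      rw [List.getElem_drop, List.getElem_map, List.getElem_finRange, hg, pow_zero]
      rw [Fin.lt_def]
      simp
      omega
    rw [h1, mul_one, List.prod_take_succ _ _ (by simp)]
    simp
  rw [key f (fun l hl => hf l hl.le), key (Function.update f k n) (fun l hl => by
    rw [Function.update_of_ne hl.ne']; exact hf l hl.le)]
  rw [hf k le_rfl, pow_zero, mul_one, Function.update_self]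
  congr 2
  apply List.ext_getElem
  · simp
  · intro i h1 h2
    simp only [List.getElem_take, List.getElem_map, List.getElem_finRange]
    rw [Function.update_of_ne]
    intro e
    have := congrArg Fin.val e
    simp at this h1
    omega

theorem Fil_le_span (Q : QNA K R N r) (k : Fin N)
    (ih : Subalgebra.toSubmodule (Rsub K Q.x k) ≤
      Submodule.span K (ordMonomial Q.x '' {f | ∀ l : Fin N, (k : ℕ) ≤ l → f l = 0})) (n : ℕ) :
    (∀ a ∈ Rsub K Q.x k, a * Q.x k ^ n ∈ Submodule.span K
      (ordMonomial Q.x '' {f | (∀ l : Fin N, (k : ℕ) + 1 ≤ l → f l = 0) ∧ f k = n})) ∧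
    Fil (Rsub K Q.x k) (Q.x k) n ≤
      Submodule.span K
        (ordMonomial Q.x '' {f | (∀ l : Fin N, (k : ℕ) + 1 ≤ l → f l = 0) ∧ f k < n}) := by
  have h1 : ∀ n, (∀ a ∈ Rsub K Q.x k, a * Q.x k ^ n ∈ Submodule.span K
      (ordMonomial Q.x '' {f | (∀ l : Fin N, (k : ℕ) + 1 ≤ l → f l = 0) ∧ f k = n})) := by
    intro n a ha
    have ha' := ih ha
    clear ha
    induction ha' using Submodule.span_induction with
    | mem z hz =>
      obtain ⟨f, hf, rfl⟩ := hz
      rw [ordMonomial_mul _ _ _ hf]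
      apply Submodule.subset_span
      refine ⟨_, ⟨?_, ?_⟩, rfl⟩
      · intro l hl
        rw [Function.update_of_ne]
        · exact hf l (by omega)
        · rintro rfl; omega
      · simp
    | zero => rw [zero_mul]; exact Submodule.zero_mem _
    | add z w hz hw ihz ihw => rw [add_mul]; exact Submodule.add_mem _ ihz ihw
    | smul c z hz ihz => rw [smul_mul_assoc]; exact Submodule.smul_mem _ _ ihz
  refine ⟨h1 n, ?_⟩
  induction n with
  | zero => simp [Fil]
  | succ n ihn =>
    intro z hz
    obtain ⟨a, ha, f, hf, rfl⟩ := mem_Fil_succ.1 hz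
    refine Submodule.add_mem _ ?_ ?_
    · refine Submodule.span_mono (Set.image_mono ?_) (h1 n a ha)
      intro f hf
      exact ⟨hf.1, by rw [hf.2]; omega⟩
    · refine Submodule.span_mono (Set.image_mono ?_) (ihn hf)
      intro f hf
      exact ⟨hf.1, by have := hf.2; omega⟩

theorem Rsub_le_span (Q : QNA K R N r) (k : ℕ) (hk : k ≤ N) :
    Subalgebra.toSubmodule (Rsub K Q.x k) ≤
      Submodule.span K (ordMonomial Q.x '' {f | ∀ l : Fin N, k ≤ l → f l = 0}) := by
  induction k with
  | zero =>
    intro z hz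
    have h0 : Rsub K Q.x 0 = ⊥ := by simp [Rsub]
    rw [h0, Subalgebra.mem_toSubmodule, Algebra.mem_bot] at hz
    obtain ⟨c, rfl⟩ := hz
    rw [Algebra.algebraMap_eq_smul_one]
    apply Submodule.smul_mem
    apply Submodule.subset_span
    refine ⟨0, by simp, ?_⟩
    unfold ordMonomial
    apply List.prod_eq_one
    simp
  | succ k ih =>
    intro z hz
    have h := orePre Q ⟨k, hk⟩
    obtain ⟨n, hn⟩ := h.exists_Fil hz
    have := (Fil_le_span Q ⟨k, hk⟩ (ih (by omega)) n).2 hn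
    exact Submodule.span_mono (Set.image_mono fun f hf => hf.1) this

theorem oreData (Q : QNA K R N r) (k : Fin N) :
    OreData (Rsub K Q.x k) (Rsub K Q.x (k + 1)) (Q.x k) (Q.act (Q.h k)) where
  toOrePre := orePre Q k
  indep := by
    intro n a ha hmem
    have ih := Rsub_le_span Q k k.2.le
    obtain ⟨h1, h2⟩ := Fil_le_span Q k ih n
    have hdisj : Disjoint
        (Submodule.span K (ordMonomial Q.x ''
          {f | (∀ l : Fin N, (k : ℕ) + 1 ≤ l → f l = 0) ∧ f k = n}))
        (Submodule.span K (ordMonomial Q.x ''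
          {f | (∀ l : Fin N, (k : ℕ) + 1 ≤ l → f l = 0) ∧ f k < n})) := by
      apply Q.pbw.disjoint_span_image
      rw [Set.disjoint_left]
      rintro f ⟨_, hf⟩ ⟨_, hf'⟩
      omega
    have h0 : a * Q.x k ^ n = 0 := Submodule.disjoint_def.1 hdisj _ (h1 a ha) (h2 hmem)
    have ha' := ih ha
    rw [Finsupp.mem_span_image_iff_linearCombination] at ha'
    obtain ⟨c, hc, rfl⟩ := ha'
    have h3 : Finsupp.linearCombination K (ordMonomial Q.x)
        (Finsupp.mapDomain (fun f => Function.update f k n) c) = 0 := by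
      rw [Finsupp.linearCombination_mapDomain, ← h0, Finsupp.linearCombination_apply,
        Finsupp.linearCombination_apply, Finsupp.sum, Finsupp.sum, Finset.sum_mul]
      refine Finset.sum_congr rfl fun f hf => ?_
      rw [smul_mul_assoc, ordMonomial_mul _ _ _ (hc hf)]
      rfl
    have h4 := (linearIndependent_iff.1 Q.pbw) _ h3
    have h5 : c = 0 := by
      refine Finsupp.mapDomain_injOn (M := K)
        {f : Fin N → ℕ | ∀ l : Fin N, (k : ℕ) ≤ l → f l = 0}
        (f := fun f => Function.update f k n) ?_ hc (by simp) (by simpa using h4)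
      intro f hf g hg e
      funext l
      by_cases hl : l = k
      · subst hl; rw [hf l le_rfl, hg l le_rfl]
      · have := congrFun e l
        simpa [Function.update_of_ne hl] using this
    rw [h5, map_zero]

theorem one_ne_zero_QNA (Q : QNA K R N r) : (1 : R) ≠ 0 := by
  intro h
  have := Q.pbw.ne_zero 0
  apply this
  rw [← mul_one (ordMonomial Q.x 0), h, mul_zero]

theorem nzd_Rsub (Q : QNA K R N r) (k : ℕ) (hk : k ≤ N) : NZD (Rsub K Q.x k) := by
  induction k with
  | zero =>
    have h0 : Rsub K Q.x 0 = ⊥ := by simp [Rsub]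
    have : Nontrivial R := ⟨⟨1, 0, one_ne_zero_QNA Q⟩⟩
    rw [h0]
    intro a ha b hb e
    obtain ⟨c, rfl⟩ := Algebra.mem_bot.1 ha
    obtain ⟨d, rfl⟩ := Algebra.mem_bot.1 hb
    rw [← map_mul] at e
    have := (FaithfulSMul.algebraMap_injective K R) (e.trans (map_zero _).symm)
    rcases mul_eq_zero.1 this with h | h
    · left; rw [h, map_zero]
    · right; rw [h, map_zero]
  | succ k ih => exact (oreData Q ⟨k, hk⟩).nzd (ih (by omega))

theorem Rsub_top (Q : QNA K R N r) : Rsub K Q.x N = ⊤ := by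
  rw [← Q.gen]
  unfold Rsub
  congr 1
  ext z
  constructor
  · rintro ⟨l, _, rfl⟩; exact ⟨l, rfl⟩
  · rintro ⟨l, rfl⟩; exact ⟨l, l.2, rfl⟩

theorem noZeroDiv (Q : QNA K R N r) {a b : R} (h : a * b = 0) : a = 0 ∨ b = 0 := by
  have := nzd_Rsub Q N le_rfl
  rw [Rsub_top] at this
  exact this a trivial b trivial h

theorem span_ordMonomial (Q : QNA K R N r) (z : R) :
    ∃ c : (Fin N → ℕ) →₀ K, z = Finsupp.linearCombination K (ordMonomial Q.x) c := by
  have h1 := Rsub_le_span Q N le_rfl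
  rw [Rsub_top] at h1
  have h2 := h1 (show z ∈ _ from trivial)
  rw [Finsupp.mem_span_image_iff_linearCombination] at h2
  obtain ⟨c, _, hc⟩ := h2
  exact ⟨c, hc.symm⟩

theorem act_ordMonomial (Q : QNA K R N r) (ξ : Torus K r) (χ : Fin N → K)
    (hχ : ∀ l, Q.act ξ (Q.x l) = χ l • Q.x l) (f : Fin N → ℕ) :
    Q.act ξ (ordMonomial Q.x f) = (∏ l, χ l ^ f l) • ordMonomial Q.x f := by
  unfold ordMonomial
  rw [← List.prod_ofFn, List.ofFn_eq_map]
  generalize List.finRange N = L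
  induction L with
  | nil => simp
  | cons a L ih =>
    simp only [List.map_cons, List.prod_cons, map_mul, map_pow, hχ, ih, smul_pow]
    rw [smul_mul_smul_comm]

/-- Homogeneous elements are supported on monomials of the right weight. -/
theorem coeff_weight (Q : QNA K R N r) (ξ : Torus K r) (χ : Fin N → K)
    (hχ : ∀ l, Q.act ξ (Q.x l) = χ l • Q.x l) (c : (Fin N → ℕ) →₀ K) (s : K)
    (hc : Q.act ξ (Finsupp.linearCombination K (ordMonomial Q.x) c) =
      s • Finsupp.linearCombination K (ordMonomial Q.x) c) (f : Fin N → ℕ) (hf : c f ≠ 0) :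
    ∏ l, χ l ^ f l = s := by
  have h1 : ∑ g ∈ c.support, ((∏ l, χ l ^ g l - s) * c g) • ordMonomial Q.x g = 0 := by
    rw [Finsupp.linearCombination_apply, Finsupp.sum, map_sum, Finset.smul_sum] at hc
    rw [← sub_eq_zero, ← Finset.sum_sub_distrib] at hc
    rw [← hc]
    refine Finset.sum_congr rfl fun g _ => ?_
    rw [map_smul, act_ordMonomial Q ξ χ hχ, smul_smul, smul_smul, ← sub_smul]
    congr 1
    ring
  have h2 := linearIndependent_iff'.1 Q.pbw _ _ h1 f (Finsupp.mem_support_iff.2 hf)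
  exact sub_eq_zero.1 ((mul_eq_zero.1 h2).resolve_right hf)

end QNAStructure

section Exterior

variable {K : Type u} [Field K] {R : Type v} [Ring R] [Algebra K R]

/-- Pointwise left multiplication. -/
def opL (t : R) : Module.End K (Finset ℕ → R) where
  toFun F S := t * F S
  map_add' F G := by funext S; simp [mul_add]
  map_smul' c F := by funext S; simp

/-- The operator of left multiplication by `ξ_b` on the quantum exterior algebra. -/
def opX (p : K) (b : ℕ) : Module.End K (Finset ℕ → R) where
  toFun F S := if b ∈ S then p ^ (S.filter (· < b)).card • F (S.erase b) else 0
  map_add' F G := by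
    funext S
    by_cases h : b ∈ S <;> simp [h]
  map_smul' c F := by
    funext S
    by_cases h : b ∈ S <;> simp [h, smul_comm c]

theorem opL_apply (t : R) (F : Finset ℕ → R) (S : Finset ℕ) :
    opL (K := K) t F S = t * F S := rfl

theorem opX_apply (p : K) (b : ℕ) (F : Finset ℕ → R) (S : Finset ℕ) :
    opX p b F S = if b ∈ S then p ^ (S.filter (· < b)).card • F (S.erase b) else 0 := rfl

theorem opL_mul (s t : R) : opL (K := K) (s * t) = opL s * opL t := by
  ext F S
  simp [opL_apply, mul_assoc]

theorem opL_add (s t : R) : opL (K := K) (s + t) = opL s + opL t := by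
  ext F S
  simp [opL_apply, add_mul]

theorem opL_sub (s t : R) : opL (K := K) (s - t) = opL s - opL t := by
  ext F S
  simp [opL_apply, sub_mul]

theorem opL_smul (c : K) (t : R) : opL (K := K) (c • t) = c • opL t := by
  ext F S
  simp [opL_apply]

theorem opX_opL (p : K) (b : ℕ) (t : R) : opX p b * opL t = opL t * opX p b := by
  ext F S
  by_cases h : b ∈ S <;> simp [opL_apply, opX_apply, h]

theorem opX_sq (p : K) (b : ℕ) : opX (R := R) p b * opX p b = 0 := by
  ext F S
  simp [opX_apply]

theorem opX_opX (p : K) {b d : ℕ} (hbd : b < d) :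
    opX (R := R) p d * opX p b = p • (opX p b * opX p d) := by
  ext F S
  simp only [Module.End.mul_apply, LinearMap.smul_apply, Pi.smul_apply, opX_apply,
    Finset.mem_erase]
  by_cases hb : b ∈ S <;> by_cases hd : d ∈ S <;> simp only [hb, hd, hbd.ne, hbd.ne', ne_eq,
    not_false_eq_true, and_true, if_true, if_false, smul_zero, and_false]
  rw [smul_smul, smul_smul, smul_smul, Finset.erase_right_comm, ← pow_add, mul_assoc, ← pow_add,
    ← pow_succ']
  congr 2
  have h1 : ((S.erase d).filter (· < b)) = S.filter (· < b) := by
    ext s; simp only [Finset.mem_filter, Finset.mem_erase]; constructor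
    · tauto
    · rintro ⟨h1, h2⟩; exact ⟨⟨by omega, h1⟩, h2⟩
  have h2 : ((S.erase b).filter (· < d)) = (S.filter (· < d)).erase b := by
    ext s; simp only [Finset.mem_filter, Finset.mem_erase]; tauto
  have h3 : b ∈ S.filter (· < d) := by simp [hb, hbd]
  rw [h1, h2, Finset.card_erase_of_mem h3]
  have := Finset.card_pos.2 ⟨b, h3⟩
  omega

/-- `W_u = Σ_b u_b ξ_b`. -/
def opW (p : K) {k : ℕ} (u : Fin k → R) : Module.End K (Finset ℕ → R) :=
  ∑ b : Fin k, opL (u b) * opX p b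

theorem opW_castSucc (p : K) {k : ℕ} (u : Fin (k + 1) → R) :
    opW p u = opW p (fun b : Fin k => u b.castSucc) + opL (u (Fin.last k)) * opX p k := by
  unfold opW
  rw [Fin.sum_univ_castSucc]
  rfl

theorem opW_mul (p : K) {k : ℕ} (u v : Fin k → R) :
    opW p u * opW p v = ∑ z : Fin k × Fin k, opL (u z.1 * v z.2) * (opX p z.1 * opX p z.2) := by
  unfold opW
  rw [Finset.sum_mul_sum, Fintype.sum_prod_type]
  refine Finset.sum_congr rfl fun b _ => Finset.sum_congr rfl fun d _ => ?_
  rw [opL_mul, mul_assoc, ← mul_assoc (opX p _) (opL _), opX_opL]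
  simp only [mul_assoc]

theorem opX_opW (p : K) {k : ℕ} (u : Fin k → R) :
    opX p k * opW p u = p • (opW p u * opX p k) := by
  unfold opW
  rw [Finset.mul_sum, Finset.sum_mul, Finset.smul_sum]
  refine Finset.sum_congr rfl fun b _ => ?_
  rw [← mul_assoc, opX_opL, mul_assoc, opX_opX p b.2, mul_smul_comm, mul_assoc]

/-- Lower row anticommutes past upper row. -/
theorem opW_swap (q : Kˣ) {k : ℕ} (u v : Fin k → R)
    (h1 : ∀ b d, b < d → u b * v d = v d * u b)
    (h2 : ∀ b d, b < d → v b * u d = u d * v b + ((q : K) - (q : K)⁻¹) • (v d * u b)) :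
    opW (-(q : K)) u * opW (-(q : K)) v = -(q : K) • (opW (-(q : K)) v * opW (-(q : K)) u) := by
  have hneg : ∀ Z : Module.End K (Finset ℕ → R), (-(q : K)) • Z = -((q : K) • Z) :=
    fun Z => by ext F S; simp
  rw [hneg, eq_neg_iff_add_eq_zero, opW_mul, opW_mul, Finset.smul_sum,
    ← Finset.sum_add_distrib]
  have key : ∀ b d : Fin k, b < d →
      (opL (u b * v d) * (opX (-(q : K)) b * opX (-(q : K)) d) +
        (q : K) • (opL (v b * u d) * (opX (-(q : K)) b * opX (-(q : K)) d))) +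
      (opL (u d * v b) * (opX (-(q : K)) d * opX (-(q : K)) b) +
        (q : K) • (opL (v d * u b) * (opX (-(q : K)) d * opX (-(q : K)) b))) = 0 := by
    intro b d hbd
    rw [opX_opX _ hbd, h1 b d hbd, h2 b d hbd, opL_add, opL_smul]
    simp only [mul_smul_comm, add_mul, smul_mul_assoc, smul_add, smul_smul]
    have hq := q.ne_zero
    match_scalars
    · field_simp; ring
    · ring
  refine Finset.sum_involution (fun z _ => z.swap) ?_ ?_ ?_ ?_
  · rintro ⟨b, d⟩ _
    rcases lt_trichotomy b d with h | h | h
    · exact key b d h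
    · subst h; simp [opX_sq]
    · rw [add_comm]; exact key d b h
  · rintro ⟨b, d⟩ _ hne he
    apply hne
    have : d = b := congrArg Prod.fst he
    subst this
    simp [opX_sq]
  · simp
  · simp

/-- The main commutator computation. `us` is a list of row vectors of length `k + 1`. -/
theorem comm_identity (q : Kˣ) {k : ℕ} (w : Fin (k + 1) → R) (us : List (Fin (k + 1) → R))
    (h1 : ∀ u ∈ us, ∀ b d, b < d → w b * u d = u d * w b)
    (h2 : ∀ u ∈ us, ∀ b d, b < d → u b * w d = w d * u b + ((q : K) - (q : K)⁻¹) • (u d * w b)) :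
    ∃ H : Module.End K (Finset ℕ → R),
      (us.map (opW (-(q : K)))).prod =
        (us.map fun u => opW (-(q : K)) (fun b : Fin k => u b.castSucc)).prod +
          H * opX (-(q : K)) k ∧
      opL (w (Fin.last k)) * (us.map fun u => opW (-(q : K)) (fun b : Fin k => u b.castSucc)).prod -
        (us.map fun u => opW (-(q : K)) (fun b : Fin k => u b.castSucc)).prod *
          opL (w (Fin.last k)) =
        -((q : K) - (q : K)⁻¹) • (H * opW (-(q : K)) (fun b : Fin k => w b.castSucc)) ∧
      opW (-(q : K)) (fun b : Fin k => w b.castSucc) *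
        (us.map fun u => opW (-(q : K)) (fun b : Fin k => u b.castSucc)).prod =
        (-(q : K)) ^ us.length • ((us.map fun u => opW (-(q : K))
          (fun b : Fin k => u b.castSucc)).prod * opW (-(q : K)) (fun b : Fin k => w b.castSucc)) ∧
      opX (-(q : K)) k *
        (us.map fun u => opW (-(q : K)) (fun b : Fin k => u b.castSucc)).prod =
        (-(q : K)) ^ us.length • ((us.map fun u => opW (-(q : K))
          (fun b : Fin k => u b.castSucc)).prod * opX (-(q : K)) k) ∧
      opX (-(q : K)) k * (H * opX (-(q : K)) k) = 0 := by
  induction us with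
  | nil => exact ⟨0, by simp, by simp, by simp, by simp, by simp⟩
  | cons u us ih =>
    obtain ⟨H, e1, e2, e3, e4, e5⟩ := ih (fun u hu => h1 u (List.mem_cons_of_mem _ hu))
      (fun u hu => h2 u (List.mem_cons_of_mem _ hu))
    have h1u := h1 u List.mem_cons_self
    have h2u := h2 u List.mem_cons_self
    simp only [List.map_cons, List.prod_cons, List.length_cons]
    set P := (us.map fun u => opW (-(q : K)) (fun b : Fin k => u b.castSucc)).prod with hP
    set W' := opW (-(q : K)) (fun b : Fin k => u b.castSucc) with hW'
    set w' := opW (-(q : K)) (fun b : Fin k => w b.castSucc) with hw'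
    set X := opX (R := R) (-(q : K)) k with hX
    have hsw : w' * W' = -(q : K) • (W' * w') := opW_swap q _ _
      (fun b d hbd => h1u _ _ (by simpa using hbd)) (fun b d hbd => h2u _ _ (by simpa using hbd))
    have hXW : X * W' = -(q : K) • (W' * X) := opX_opW _ _
    have hcomm : opL (w (Fin.last k)) * W' = W' * opL (w (Fin.last k)) -
        ((q : K) - (q : K)⁻¹) • (opL (u (Fin.last k)) * w') := by
      rw [hW', hw']
      unfold opW
      rw [Finset.mul_sum, Finset.sum_mul, Finset.mul_sum, Finset.smul_sum,
        ← Finset.sum_sub_distrib]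
      refine Finset.sum_congr rfl fun b _ => ?_
      rw [mul_assoc, opX_opL, ← mul_assoc, ← mul_assoc, ← mul_assoc, ← opL_mul, ← opL_mul,
        ← opL_mul, h2u _ _ (Fin.castSucc_lt_last b), opL_add, opL_smul, add_mul, smul_mul_assoc,
        add_sub_cancel_right]
    have hXX : X * X = 0 := opX_sq _ _
    refine ⟨W' * H + (-(q : K)) ^ us.length • (opL (u (Fin.last k)) * P), ?_, ?_, ?_, ?_, ?_⟩
    · rw [e1, opW_castSucc, ← hW', ← hX]
      have : opL (K := K) (u (Fin.last k)) * X * (H * X) = 0 := by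
        rw [mul_assoc, e5, mul_zero]
      rw [add_mul, mul_add, mul_add, this, mul_assoc (opL _), e4, add_mul, smul_mul_assoc,
        mul_smul_comm]
      simp only [mul_assoc]
      abel
    · rw [← mul_assoc, hcomm, sub_mul, mul_assoc W', sub_eq_iff_eq_add.1 e2]
      rw [smul_mul_assoc, mul_assoc (opL _) w' P, e3]
      simp only [mul_add, add_mul, mul_smul_comm, smul_mul_assoc, smul_add, neg_smul, smul_smul,
        mul_assoc]
      module
    · rw [← mul_assoc, hsw, smul_mul_assoc, mul_assoc, e3, mul_smul_comm, smul_smul, mul_assoc,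
        pow_succ']
    · rw [← mul_assoc, hXW, smul_mul_assoc, mul_assoc, e4, mul_smul_comm, smul_smul, mul_assoc,
        pow_succ']
    · have h6 : X * (W' * H * X) = 0 := by
        rw [mul_assoc, ← mul_assoc X W', hXW, smul_mul_assoc, mul_assoc, e5, mul_zero, smul_zero]
      have h7 : X * (opL (u (Fin.last k)) * P * X) = 0 := by
        rw [mul_assoc, ← mul_assoc X (opL _), opX_opL, mul_assoc, ← mul_assoc X P, e4,
          smul_mul_assoc, mul_assoc, hXX]
        simp
      rw [add_mul, mul_add, h6, smul_mul_assoc, mul_smul_comm, h7, smul_zero, add_zero]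

end Exterior

section Evaluate

variable {K : Type u} [Field K] {R : Type v} [Ring R] [Algebra K R]

theorem opW_prod_expand (p : K) {n k : ℕ} (U : Fin n → Fin k → R) :
    (List.ofFn fun a => opW p (U a)).prod =
      ∑ f : Fin n → Fin k, opL (List.ofFn fun a => U a (f a)).prod *
        (List.ofFn fun a => opX p (f a : ℕ)).prod := by
  induction n with
  | zero =>
    simp
    ext F S
    simp [opL_apply]
  | succ n ih =>
    rw [List.ofFn_succ, List.prod_cons, ih, ← (Fin.consEquiv (fun _ => Fin k)).sum_comp,
      Fintype.sum_prod_type]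
    unfold opW
    rw [Finset.sum_mul_sum]
    refine Finset.sum_congr rfl fun b _ => Finset.sum_congr rfl fun f _ => ?_
    simp only [Fin.consEquiv, Equiv.coe_fn_mk, List.ofFn_succ, List.prod_cons, Fin.cons_zero,
      Fin.cons_succ, opL_mul]
    rw [mul_assoc, ← mul_assoc (opX p _) (opL _), opX_opL]
    simp only [mul_assoc]

/-- Inversion number of a function. -/
def finv {n : ℕ} (f : Fin n → ℕ) : ℕ :=
  ∑ a : Fin n, ∑ b : Fin n, if a < b ∧ f b < f a then 1 else 0

theorem finv_succ {n : ℕ} (f : Fin (n + 1) → ℕ) :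
    finv f = (Finset.univ.filter fun a : Fin n => f a.succ < f 0).card + finv (f ∘ Fin.succ) := by
  unfold finv
  rw [Fin.sum_univ_succ]
  congr 1
  · rw [Fin.sum_univ_succ]
    simp
  · refine Finset.sum_congr rfl fun a _ => ?_
    rw [Fin.sum_univ_succ]
    simp

theorem invCount_eq {n : ℕ} (σ : Equiv.Perm (Fin n)) :
    invCount σ = finv fun a => (σ a : ℕ) := by
  unfold invCount finv
  rw [Finset.card_filter, Fintype.sum_prod_type]
  rfl

theorem opX_prod_apply (p : K) {n : ℕ} (f : Fin n → ℕ) (S : Finset ℕ) :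
    (List.ofFn fun a => opX p (f a)).prod (Pi.single ∅ 1 : Finset ℕ → R) S =
      if Function.Injective f ∧ Finset.univ.image f = S then p ^ finv f • (1 : R) else 0 := by
  induction n generalizing S with
  | zero =>
    by_cases h : S = ∅
    · subst h
      simp [finv, Function.injective_of_subsingleton]
    · simp [h, Ne.symm h]
  | succ n ih =>
    rw [List.ofFn_succ, List.prod_cons, Module.End.mul_apply, opX_apply]
    have ih' := fun S => ih (fun a => f a.succ) S
    rw [ih']
    have hinj : Function.Injective f ↔
        Function.Injective (fun a : Fin n => f a.succ) ∧ ∀ a : Fin n, f a.succ ≠ f 0 := by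
      rw [← Fin.cons_self_tail f, Fin.cons_injective_iff]
      simp only [Fin.cons_zero, Fin.cons_succ, Set.mem_range, not_exists]
      tauto
    have himg : Finset.univ.image f = insert (f 0) (Finset.univ.image fun a : Fin n => f a.succ) := by
      ext s
      simp [Fin.exists_fin_succ, eq_comm]
    by_cases hS : f 0 ∈ S
    · rw [if_pos hS]
      by_cases hc : Function.Injective f ∧ Finset.univ.image f = S
      · have h2 := hinj.1 hc.1
        have hnot : f 0 ∉ Finset.univ.image fun a : Fin n => f a.succ := by
          simp; exact h2.2
        have hE : Finset.univ.image (fun a : Fin n => f a.succ) = S.erase (f 0) := by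
          rw [← hc.2, himg, Finset.erase_insert hnot]
        rw [if_pos hc, if_pos ⟨h2.1, hE⟩, smul_smul, ← pow_add, finv_succ]
        congr 3
        have : S.filter (· < f 0) =
            (Finset.univ.filter fun a : Fin n => f a.succ < f 0).image (fun a => f a.succ) := by
          rw [← hc.2, himg]
          ext s
          simp only [Finset.mem_filter, Finset.mem_insert, Finset.mem_image, Finset.mem_univ,
            true_and]
          constructor
          · rintro ⟨h | ⟨a, rfl⟩, h'⟩
            · omega
            · exact ⟨a, h', rfl⟩
          · rintro ⟨a, h, rfl⟩
            exact ⟨Or.inr ⟨a, rfl⟩, h⟩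
        rw [this, Finset.card_image_of_injective _ h2.1]
      · rw [if_neg hc, if_neg, smul_zero]
        rintro ⟨h1, h2⟩
        apply hc
        constructor
        · rw [hinj]
          refine ⟨h1, fun a ha => ?_⟩
          have : f a.succ ∈ S.erase (f 0) := by rw [← h2]; exact Finset.mem_image_of_mem _ (Finset.mem_univ a)
          rw [ha] at this
          simp at this
        · rw [himg, h2, Finset.insert_erase hS]
    · rw [if_neg hS, if_neg]
      rintro ⟨_, h⟩
      apply hS
      rw [← h]
      exact Finset.mem_image_of_mem _ (Finset.mem_univ 0)

theorem opW_prod_eval (p : K) {k : ℕ} (U : Fin k → Fin k → R) :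
    (List.ofFn fun a => opW p (U a)).prod (Pi.single ∅ 1 : Finset ℕ → R) (Finset.range k) =
      ∑ σ : Equiv.Perm (Fin k), p ^ invCount σ • (List.ofFn fun a => U a (σ a)).prod := by
  rw [opW_prod_expand, LinearMap.sum_apply, Finset.sum_apply]
  symm
  refine Finset.sum_of_injOn (fun σ : Equiv.Perm (Fin k) => (σ : Fin k → Fin k)) ?_ ?_ ?_ ?_
  · intro σ _ τ _ h
    exact Equiv.coe_fn_injective h
  · intro σ _; simp
  · intro f _ hf
    rw [Module.End.mul_apply, opL_apply, opX_prod_apply, if_neg, mul_zero]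
    rintro ⟨h, _⟩
    apply hf
    have hinj : Function.Injective f := fun a b e => h (congrArg Fin.val e)
    exact ⟨Equiv.ofBijective f (Finite.injective_iff_bijective.1 hinj), by simp, by ext; simp⟩
  · intro σ _
    rw [Module.End.mul_apply, opL_apply, opX_prod_apply, if_pos, invCount_eq, mul_smul_comm,
      mul_one]
    refine ⟨fun a b e => σ.injective (Fin.ext e), ?_⟩
    ext s
    simp only [Finset.mem_image, Finset.mem_univ, true_and, Finset.mem_range]
    constructor
    · rintro ⟨a, rfl⟩; exact (σ a).2
    · intro hs
      exact ⟨σ.symm ⟨s, hs⟩, by simp⟩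

theorem opW_apply (p : K) {k : ℕ} (u : Fin k → R) (F : Finset ℕ → R) (S : Finset ℕ) :
    opW p u F S = ∑ b : Fin k, u b * opX p (b : ℕ) F S := by
  unfold opW
  rw [LinearMap.sum_apply, Finset.sum_apply]
  rfl

theorem opW_prod_right (p : K) {k : ℕ} (us : List (Fin k → R)) (F : Finset ℕ → R) (t : R)
    (S : Finset ℕ) :
    (us.map (opW p)).prod (fun S => F S * t) S = (us.map (opW p)).prod F S * t := by
  induction us generalizing S with
  | nil => simp
  | cons u us ih =>
    have ih' : (us.map (opW p)).prod (fun S => F S * t) =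
      fun S => (us.map (opW p)).prod F S * t := funext ih
    rw [List.map_cons, List.prod_cons, Module.End.mul_apply, ih', Module.End.mul_apply,
      opW_apply, opW_apply, Finset.sum_mul]
    refine Finset.sum_congr rfl fun b _ => ?_
    rw [opX_apply, opX_apply]
    split_ifs
    · rw [mul_assoc, smul_mul_assoc]
    · simp

theorem opW_prod_support (p : K) {k : ℕ} (us : List (Fin k → R)) (F : Finset ℕ → R)
    (hF : ∀ S, k ∈ S → F S = 0) (S : Finset ℕ) (hS : k ∈ S) :
    (us.map (opW p)).prod F S = 0 := by
  induction us generalizing S with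
  | nil => simpa using hF S hS
  | cons u us ih =>
    rw [List.map_cons, List.prod_cons, Module.End.mul_apply, opW_apply]
    refine Finset.sum_eq_zero fun b _ => ?_
    rw [opX_apply, ih _ (Finset.mem_erase.2 ⟨b.2.ne', hS⟩)]
    simp

/-- Expansion of a quantum determinant along the last corner. -/
theorem qdet_succ (q : Kˣ) (hq2 : (q : K) - (q : K)⁻¹ ≠ 0) {k : ℕ}
    (U : Fin (k + 1) → Fin (k + 1) → R)
    (h1 : ∀ a : Fin k, ∀ b d, b < d →
      U (Fin.last k) b * U a.castSucc d = U a.castSucc d * U (Fin.last k) b)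
    (h2 : ∀ a : Fin k, ∀ b d, b < d → U a.castSucc b * U (Fin.last k) d =
      U (Fin.last k) d * U a.castSucc b +
        ((q : K) - (q : K)⁻¹) • (U a.castSucc d * U (Fin.last k) b))
    (D D' t : R)
    (hD : D = ∑ σ : Equiv.Perm (Fin (k + 1)), (-(q : K)) ^ invCount σ •
      (List.ofFn fun a => U a (σ a)).prod)
    (hD' : D' = ∑ σ : Equiv.Perm (Fin k), (-(q : K)) ^ invCount σ •
      (List.ofFn fun a => U a.castSucc (σ a).castSucc).prod)
    (ht : t = U (Fin.last k) (Fin.last k)) :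
    D = D' * t + ((q : K) * ((q : K) - (q : K)⁻¹)⁻¹) • (t * D' - D' * t) := by
  obtain ⟨H, e1, e2, -, e4, -⟩ := comm_identity q (U (Fin.last k))
    (List.ofFn fun a : Fin k => U a.castSucc)
    (by intro u hu; obtain ⟨a, rfl⟩ := (List.mem_ofFn' _ _).1 hu; exact h1 a)
    (by intro u hu; obtain ⟨a, rfl⟩ := (List.mem_ofFn' _ _).1 hu; exact h2 a)
  rw [← ht] at e2
  rw [← opW_prod_eval] at hD
  have hD'' : D' = _ := hD'.trans
    (opW_prod_eval (-(q : K)) (fun a b : Fin k => U a.castSucc b.castSucc)).symm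
  set e0 : Finset ℕ → R := Pi.single ∅ 1 with he0
  have hL : (List.ofFn fun a => opW (-(q : K)) (U a)).prod =
      ((List.ofFn fun a : Fin k => U a.castSucc).map (opW (-(q : K)))).prod *
        opW (-(q : K)) (U (Fin.last k)) := by
    rw [List.ofFn_succ', List.concat_eq_append, List.prod_append, List.map_ofFn]
    simp [Function.comp_def]
  have hP : ((List.ofFn fun a : Fin k => U a.castSucc).map
      fun u => opW (-(q : K)) (fun b : Fin k => u b.castSucc)).prod =
      ((List.ofFn fun (a b : Fin k) => U a.castSucc b.castSucc).map (opW (-(q : K)))).prod := by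
    rw [List.map_ofFn, List.map_ofFn]; rfl
  rw [hL, e1, opW_castSucc, ← ht] at hD
  rw [hP] at e1 e2 e4 hD
  have hD3 : D' = ((List.ofFn fun (a b : Fin k) => U a.castSucc b.castSucc).map
      (opW (-(q : K)))).prod e0 (Finset.range k) := by
    rw [hD'', List.map_ofFn]; rfl
  set us' := (List.ofFn fun (a b : Fin k) => U a.castSucc b.castSucc) with hus'
  set P := (us'.map (opW (-(q : K)))).prod with hPdef
  set w' := opW (-(q : K)) (fun b : Fin k => U (Fin.last k) b.castSucc) with hw'
  set X := opX (R := R) (-(q : K)) k with hX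
  have hXL : X * opL t = opL t * X := opX_opL _ _ _
  have hXw : X * w' = (-(q : K)) • (w' * X) := opX_opW _ _
  have hlen : (List.ofFn fun a : Fin k => U a.castSucc).length = k := by simp
  rw [hlen] at e4
  set Z := P * opL t + ((q : K) * ((q : K) - (q : K)⁻¹)⁻¹) • (opL t * P - P * opL t) with hZ
  have hHw : H * w' = (-((q : K) - (q : K)⁻¹)⁻¹) • (opL t * P - P * opL t) := by
    rw [e2, smul_smul, neg_mul_neg, inv_mul_cancel₀ hq2, one_smul]
  have hprod : (P + H * X) * (w' + opL t * X) = P * w' + Z * X := by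
    have a1 : H * X * w' = (-(q : K)) • (H * w' * X) := by
      rw [mul_assoc, hXw, mul_smul_comm, mul_assoc]
    have a2 : H * X * (opL t * X) = 0 := by
      rw [mul_assoc, ← mul_assoc X, hXL, mul_assoc (opL t), opX_sq]; simp
    rw [add_mul, mul_add, mul_add, a1, a2, hHw, smul_mul_assoc, smul_smul, hZ, add_mul,
      smul_mul_assoc, neg_mul_neg, add_zero, mul_assoc P (opL t) X, add_assoc]
  have hXZ : X * Z = (-(q : K)) ^ k • (Z * X) := by
    have b1 : X * (P * opL t) = (-(q : K)) ^ k • (P * opL t * X) := by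
      rw [← mul_assoc, e4, smul_mul_assoc, mul_assoc, hXL, mul_assoc]
    have b2 : X * (opL t * P) = (-(q : K)) ^ k • (opL t * P * X) := by
      rw [← mul_assoc, hXL, mul_assoc, e4, mul_smul_comm, mul_assoc]
    rw [hZ, mul_add, mul_smul_comm, mul_sub, b1, b2, add_mul, smul_mul_assoc, sub_mul, smul_add,
      smul_comm _ ((q : K) * _)]
    simp only [smul_sub]
  have hq0 : (-(q : K)) ^ k ≠ 0 := pow_ne_zero _ (neg_ne_zero.2 q.ne_zero)
  have hv1 : (P * w') e0 (Finset.range (k + 1)) = 0 := by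
    have := opW_prod_support (-(q : K)) (us' ++ [fun b : Fin k => U (Fin.last k) b.castSucc]) e0
      (by
        intro S hS
        rw [he0, Pi.single_eq_of_ne]
        rintro rfl
        simp at hS) (Finset.range (k + 1)) (by simp)
    simpa using this
  have hv2 : (Z * X) e0 (Finset.range (k + 1)) = Z e0 (Finset.range k) := by
    have c1 : (X * Z) e0 (Finset.range (k + 1)) = (-(q : K)) ^ k • Z e0 (Finset.range k) := by
      rw [Module.End.mul_apply, hX, opX_apply, if_pos (by simp)]
      have f1 : (Finset.range (k + 1)).filter (· < k) = Finset.range k := by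
        ext s; simp; omega
      have f2 : (Finset.range (k + 1)).erase k = Finset.range k := by
        ext s; simp; omega
      rw [f1, f2, Finset.card_range]
    rw [hXZ, LinearMap.smul_apply, Pi.smul_apply] at c1
    exact smul_right_injective R hq0 c1
  have hPt : ((P * opL (K := K) t : Module.End K (Finset ℕ → R)) e0) (Finset.range k) = D' * t := by
    have he : (opL (K := K) t) e0 = fun S => e0 S * t := by
      funext S
      rw [opL_apply, he0]
      by_cases hS : S = ∅
      · subst hS; simp
      · simp [hS]
    rw [hD3, ← opW_prod_right, Module.End.mul_apply, he]
  have htP : ((opL (K := K) t * P : Module.End K (Finset ℕ → R)) e0) (Finset.range k) = t * D' := by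
    rw [hD3, Module.End.mul_apply, opL_apply]
  rw [hD, hprod, LinearMap.add_apply, Pi.add_apply, hv1, hv2, zero_add, hZ, LinearMap.add_apply,
    Pi.add_apply, LinearMap.smul_apply, Pi.smul_apply, LinearMap.sub_apply, Pi.sub_apply, hPt, htP]

end Evaluate

section Relations

variable {K : Type u} [Field K] {q : Kˣ} {m n : ℕ}

theorem t_col {i k : Fin m} (j : Fin n) (h : i < k) :
    tGen K q m n i j * tGen K q m n k j = (q : K) • (tGen K q m n k j * tGen K q m n i j) := by
  have := RingQuot.mkAlgHom_rel K (qMatRel.col (K := K) (q := q) i k j h)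
  simp only [map_mul, map_smul] at this
  exact this

theorem t_row (i : Fin m) {j l : Fin n} (h : j < l) :
    tGen K q m n i j * tGen K q m n i l = (q : K) • (tGen K q m n i l * tGen K q m n i j) := by
  have := RingQuot.mkAlgHom_rel K (qMatRel.row (K := K) (q := q) i j l h)
  simp only [map_mul, map_smul] at this
  exact this

theorem t_comm {i k : Fin m} {j l : Fin n} (h : i < k) (h' : l < j) :
    tGen K q m n i j * tGen K q m n k l = tGen K q m n k l * tGen K q m n i j := by
  have := RingQuot.mkAlgHom_rel K (qMatRel.comm (K := K) (q := q) i k j l h h')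
  simp only [map_mul, map_smul] at this
  exact this

theorem t_serp {i k : Fin m} {j l : Fin n} (h : i < k) (h' : j < l) :
    tGen K q m n i j * tGen K q m n k l = tGen K q m n k l * tGen K q m n i j +
      ((q : K) - (q : K)⁻¹) • (tGen K q m n i l * tGen K q m n k j) := by
  have := RingQuot.mkAlgHom_rel K (qMatRel.serp (K := K) (q := q) i k j l h h')
  simp only [map_mul, map_smul, map_add] at this
  exact this

theorem qMinor_succ (hq2 : (q : K) - (q : K)⁻¹ ≠ 0) {k : ℕ}
    (I : Fin (k + 1) → Fin m) (J : Fin (k + 1) → Fin n) (hI : StrictMono I) (hJ : StrictMono J) :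
    qMinor K q m n (k + 1) I J =
      qMinor K q m n k (I ∘ Fin.castSucc) (J ∘ Fin.castSucc) *
        tGen K q m n (I (Fin.last k)) (J (Fin.last k)) +
      ((q : K) * ((q : K) - (q : K)⁻¹)⁻¹) •
        (tGen K q m n (I (Fin.last k)) (J (Fin.last k)) *
            qMinor K q m n k (I ∘ Fin.castSucc) (J ∘ Fin.castSucc) -
          qMinor K q m n k (I ∘ Fin.castSucc) (J ∘ Fin.castSucc) *
            tGen K q m n (I (Fin.last k)) (J (Fin.last k))) := by
  refine qdet_succ q hq2 (fun a b => tGen K q m n (I a) (J b)) ?_ ?_ _ _ _ ?_ ?_ rfl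
  · intro a b d h
    exact (t_comm (hI (Fin.castSucc_lt_last a)) (hJ h)).symm
  · intro a b d h
    exact t_serp (hI (Fin.castSucc_lt_last a)) (hJ h)
  · unfold qMinor
    simp only [List.ofFn_eq_map]
  · unfold qMinor
    simp only [List.ofFn_eq_map, Function.comp]

theorem solidMinor_eq (i : Fin m) (j : Fin n) (k : ℕ) (hk : min (i : ℕ) (j : ℕ) + 1 = k)
    (I : Fin k → Fin m) (J : Fin k → Fin n)
    (hI : ∀ a, (I a : ℕ) + (k - 1) = i + a) (hJ : ∀ a, (J a : ℕ) + (k - 1) = j + a) :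
    solidMinor K q m n i j = qMinor K q m n k I J := by
  subst hk
  unfold solidMinor
  congr 1
  · funext a
    apply Fin.ext
    have := hI a
    simp only
    omega
  · funext a
    apply Fin.ext
    have := hJ a
    simp only
    omega

theorem invCount_one {k : ℕ} : invCount (1 : Equiv.Perm (Fin k)) = 0 := by
  unfold invCount
  rw [Finset.card_eq_zero, Finset.filter_eq_empty_iff]
  rintro ⟨a, b⟩ _ ⟨h1, h2⟩
  exact lt_asymm h1 h2

theorem qMinor_one (I : Fin 1 → Fin m) (J : Fin 1 → Fin n) :
    qMinor K q m n 1 I J = tGen K q m n (I 0) (J 0) := by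
  unfold qMinor
  rw [Fintype.sum_unique]
  have : (default : Equiv.Perm (Fin 1)) = 1 := rfl
  simp [this, invCount_one, List.finRange_succ]

theorem solidMinor_zero (i : Fin m) (j : Fin n) (h : (i : ℕ) = 0 ∨ (j : ℕ) = 0) :
    solidMinor K q m n i j = tGen K q m n i j := by
  rw [solidMinor_eq i j 1 (by omega) (fun _ => i) (fun _ => j) (by simp) (by simp), qMinor_one]

theorem solidMinor_succ (hq2 : (q : K) - (q : K)⁻¹ ≠ 0) (i i' : Fin m) (j j' : Fin n)
    (hi : (i : ℕ) = i' + 1) (hj : (j : ℕ) = j' + 1) :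
    solidMinor K q m n i j = solidMinor K q m n i' j' * tGen K q m n i j +
      ((q : K) * ((q : K) - (q : K)⁻¹)⁻¹) • (tGen K q m n i j * solidMinor K q m n i' j' -
        solidMinor K q m n i' j' * tGen K q m n i j) := by
  obtain ⟨k, hk⟩ : ∃ k, k = min (i' : ℕ) (j' : ℕ) + 1 := ⟨_, rfl⟩
  have := i.2
  have := j.2
  let I : Fin (k + 1) → Fin m := fun a => ⟨i + a - k, by have := a.2; omega⟩
  let J : Fin (k + 1) → Fin n := fun a => ⟨j + a - k, by have := a.2; omega⟩
  have e1 : solidMinor K q m n i j = qMinor K q m n (k + 1) I J :=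
    solidMinor_eq _ _ _ (by omega) _ _ (by intro a; simp only [I]; omega)
      (by intro a; simp only [J]; omega)
  have e2 : solidMinor K q m n i' j' = qMinor K q m n k (I ∘ Fin.castSucc) (J ∘ Fin.castSucc) :=
    solidMinor_eq _ _ _ (by omega) _ _ (by intro a; simp [I]; omega)
      (by intro a; simp [J]; omega)
  have hIl : I (Fin.last k) = i := by apply Fin.ext; simp [I]
  have hJl : J (Fin.last k) = j := by apply Fin.ext; simp [J]
  have := qMinor_succ (q := q) hq2 I J
    (by intro a b h; rw [Fin.lt_def] at *; simp only [I]; omega)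
    (by intro a b h; rw [Fin.lt_def] at *; simp only [J]; omega)
  rw [hIl, hJl, ← e1, ← e2] at this
  exact this

end Relations

section Rep

variable {K : Type u} [Field K]

/-- Operators on sequences, giving a representation of `2 × 2` quantum matrices. -/
def repA (q : Kˣ) : Module.End K (ℕ → K) where
  toFun f s := (q : K)⁻¹ * ((q : K) ^ (2 * (s + 1)) - 1) * f (s + 1)
  map_add' f g := by funext s; simp [mul_add]
  map_smul' c f := by funext s; simp; ring

/-- The diagonal operator. -/
def repB (q : Kˣ) : Module.End K (ℕ → K) where
  toFun f s := (q : K) ^ s * f s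
  map_add' f g := by funext s; simp [mul_add]
  map_smul' c f := by funext s; simp; ring

/-- The shift operator. -/
def repD (K : Type u) [Field K] : Module.End K (ℕ → K) where
  toFun f s := if s = 0 then 0 else f (s - 1)
  map_add' f g := by funext s; by_cases h : s = 0 <;> simp [h]
  map_smul' c f := by funext s; by_cases h : s = 0 <;> simp [h]

theorem repA_apply (q : Kˣ) (f : ℕ → K) (s : ℕ) :
    repA q f s = (q : K)⁻¹ * ((q : K) ^ (2 * (s + 1)) - 1) * f (s + 1) := rfl

theorem repB_apply (q : Kˣ) (f : ℕ → K) (s : ℕ) : repB q f s = (q : K) ^ s * f s := rfl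

theorem repD_apply (f : ℕ → K) (s : ℕ) : repD K f s = if s = 0 then 0 else f (s - 1) := rfl

theorem rep_AB (q : Kˣ) : repA q * repB q = (q : K) • (repB q * repA q) := by
  refine LinearMap.ext fun f => funext fun s => ?_
  simp only [Module.End.mul_apply, LinearMap.smul_apply, Pi.smul_apply, smul_eq_mul, repA_apply,
    repB_apply]
  ring

theorem rep_BD (q : Kˣ) : repB q * repD K = (q : K) • (repD K * repB q) := by
  refine LinearMap.ext fun f => funext fun s => ?_
  simp only [Module.End.mul_apply, LinearMap.smul_apply, Pi.smul_apply, smul_eq_mul, repD_apply,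
    repB_apply]
  rcases s with _ | s
  · simp
  · simp; ring

theorem rep_AD (q : Kˣ) : repA q * repD K = repD K * repA q +
    ((q : K) - (q : K)⁻¹) • (repB q * repB q) := by
  refine LinearMap.ext fun f => funext fun s => ?_
  have hq := q.ne_zero
  simp only [Module.End.mul_apply, LinearMap.smul_apply, LinearMap.add_apply, Pi.add_apply,
    Pi.smul_apply, smul_eq_mul, repD_apply, repA_apply, repB_apply]
  rcases s with _ | s
  · simp; field_simp; tauto
  · simp; field_simp; ring

/-- `D A` is not a multiple of `A D`. -/
theorem rep_not (q : Kˣ) (hq : ∀ s : ℕ, s ≠ 0 → (q : K) ^ s ≠ 1) (c : K) :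
    repD K * repA q ≠ c • (repA q * repD K) := by
  intro h
  have h0 := congrFun (LinearMap.congr_fun h fun _ => 1) 0
  have h1 := congrFun (LinearMap.congr_fun h fun _ => 1) 1
  simp only [Module.End.mul_apply, LinearMap.smul_apply, Pi.smul_apply, smul_eq_mul, repD_apply,
    repA_apply] at h0 h1
  have e2 : (q : K) ^ 2 - 1 ≠ 0 := sub_ne_zero.2 (hq 2 (by norm_num))
  have hq0 := q.ne_zero
  have hc : c = 0 := by
    simp at h0
    tauto
  simp [hc] at h1
  tauto

/-- Images of the generators in the representation attached to the corner `(i0, j0)`. -/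
def repVal (q : Kˣ) (i0 j0 : ℕ) (a b : ℕ) : Module.End K (ℕ → K) :=
  if a = i0 ∧ b = j0 then repA q
  else if (a = i0 ∧ b = j0 + 1) ∨ (a = i0 + 1 ∧ b = j0) then repB q
  else if a = i0 + 1 ∧ b = j0 + 1 then repD K
  else if a < i0 ∧ b < j0 ∧ i0 + b = j0 + a then 1 else 0

theorem repVal_col (q : Kˣ) (i0 j0 : ℕ) {i k : ℕ} (j : ℕ) (h : i < k) :
    repVal q i0 j0 i j * repVal q i0 j0 k j =
      (q : K) • (repVal q i0 j0 k j * repVal q i0 j0 i j) := by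
  have := rep_AB q
  have := rep_BD q
  unfold repVal
  split_ifs <;> first | (exfalso; omega) | simp [*]

theorem repVal_row (q : Kˣ) (i0 j0 : ℕ) {j l : ℕ} (i : ℕ) (h : j < l) :
    repVal q i0 j0 i j * repVal q i0 j0 i l =
      (q : K) • (repVal q i0 j0 i l * repVal q i0 j0 i j) := by
  have := rep_AB q
  have := rep_BD q
  unfold repVal
  split_ifs <;> first | (exfalso; omega) | simp [*]

theorem repVal_comm (q : Kˣ) (i0 j0 : ℕ) {i k j l : ℕ} (h : i < k) (h' : l < j) :
    repVal q i0 j0 i j * repVal q i0 j0 k l = repVal q i0 j0 k l * repVal q i0 j0 i j := by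
  unfold repVal
  split_ifs <;> first | (exfalso; omega) | simp

theorem repVal_serp (q : Kˣ) (i0 j0 : ℕ) {i k j l : ℕ} (h : i < k) (h' : j < l) :
    repVal q i0 j0 i j * repVal q i0 j0 k l = repVal q i0 j0 k l * repVal q i0 j0 i j +
      ((q : K) - (q : K)⁻¹) • (repVal q i0 j0 i l * repVal q i0 j0 k j) := by
  by_cases hc : i = i0 ∧ k = i0 + 1 ∧ j = j0 ∧ l = j0 + 1
  · obtain ⟨rfl, rfl, rfl, rfl⟩ := hc
    simpa [repVal] using rep_AD q
  · have e1 : repVal q i0 j0 i l * repVal q i0 j0 k j = 0 := by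
      unfold repVal
      split_ifs <;> first | (exfalso; omega) | simp
    have e2 : repVal q i0 j0 i j * repVal q i0 j0 k l =
        repVal q i0 j0 k l * repVal q i0 j0 i j := by
      unfold repVal
      split_ifs <;> first | (exfalso; omega) | simp
    rw [e1, e2, smul_zero, add_zero]

/-- The representation. -/
def rep (q : Kˣ) (m n i0 j0 : ℕ) : RqMat K q m n →ₐ[K] Module.End K (ℕ → K) :=
  RingQuot.liftAlgHom K ⟨FreeAlgebra.lift K fun p : Fin m × Fin n => repVal q i0 j0 p.1 p.2, by
    intro x y hxy
    cases hxy with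
    | col i k j h => simpa using repVal_col q i0 j0 j h
    | row i j l h => simpa using repVal_row q i0 j0 i h
    | comm i k j l h h' => simpa using repVal_comm q i0 j0 h h'
    | serp i k j l h h' => simpa using repVal_serp q i0 j0 h h'⟩

theorem rep_tGen (q : Kˣ) (m n i0 j0 : ℕ) (i : Fin m) (j : Fin n) :
    rep q m n i0 j0 (tGen K q m n i j) = repVal q i0 j0 i j := by
  unfold rep tGen
  erw [RingQuot.liftAlgHom_mkAlgHom_apply]
  simp

theorem rep_solid (q : Kˣ) (m n : ℕ) (i : Fin m) (j : Fin n) :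
    rep q m n i j (solidMinor K q m n i j) = repA q := by
  unfold solidMinor qMinor
  rw [map_sum, Finset.sum_eq_single 1]
  · rw [map_smul, map_list_prod, invCount_one, pow_zero, one_smul, List.map_map,
      List.finRange_succ_last, List.map_append, List.prod_append, List.prod_eq_one]
    · simp only [List.map_cons, List.map_nil, List.prod_singleton, Function.comp, rep_tGen,
        one_mul, Equiv.Perm.coe_one, id]
      rw [repVal, if_pos]
      simp
    · intro x hx
      simp only [List.map_map, List.mem_map, Function.comp] at hx
      obtain ⟨a, -, rfl⟩ := hx
      have := a.2
      simp only [rep_tGen, repVal, Equiv.Perm.coe_one, id, Fin.val_castSucc]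
      split_ifs <;> first | (exfalso; omega) | rfl
  · intro σ _ hσ
    obtain ⟨a, ha⟩ : ∃ a, σ a ≠ a := by
      by_contra hcon
      push Not at hcon
      exact hσ (Equiv.ext hcon)
    have hav : (σ a : ℕ) ≠ a := fun e => ha (Fin.ext e)
    rw [map_smul, map_list_prod, List.prod_eq_zero, smul_zero]
    rw [List.map_map, List.mem_map]
    refine ⟨a, List.mem_finRange a, ?_⟩
    have := a.2
    have := (σ a).2
    simp only [rep_tGen, repVal, Function.comp]
    split_ifs <;> first | (exfalso; omega) | rfl
  · simp

theorem not_skew_solid {q : Kˣ} (hq : ∀ s : ℕ, s ≠ 0 → (q : K) ^ s ≠ 1) {m n : ℕ}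
    (i i' : Fin m) (j j' : Fin n) (hi : (i : ℕ) = i' + 1) (hj : (j : ℕ) = j' + 1) (c : K) :
    tGen K q m n i j * solidMinor K q m n i' j' ≠
      c • (solidMinor K q m n i' j' * tGen K q m n i j) := by
  intro h
  have := congrArg (rep q m n i' j') h
  rw [map_mul, map_smul, map_mul, rep_solid, rep_tGen] at this
  have e : repVal (K := K) q i' j' i j = repD K := by
    rw [hi, hj]; simp [repVal]
  rw [e] at this
  exact rep_not q hq c this

theorem not_skew_tGen {q : Kˣ} (hq : ∀ s : ℕ, s ≠ 0 → (q : K) ^ s ≠ 1) {m n : ℕ}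
    (i i' : Fin m) (j j' : Fin n) (hi : (i : ℕ) = i' + 1) (hj : (j : ℕ) = j' + 1) (c : K) :
    tGen K q m n i j * tGen K q m n i' j' ≠
      c • (tGen K q m n i' j' * tGen K q m n i j) := by
  intro h
  have := congrArg (rep q m n i' j') h
  rw [map_mul, map_smul, map_mul, rep_tGen, rep_tGen] at this
  have e : repVal (K := K) q i' j' i j = repD K := by
    rw [hi, hj]; simp [repVal]
  have e' : repVal (K := K) q i' j' i' j' = repA q := by
    simp [repVal]
  rw [e, e'] at this
  exact rep_not q hq c this

end Rep

section Weights

variable {K : Type u} [Field K] {q : Kˣ} {m n : ℕ}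

theorem pow_q_inj (hq : ∀ s : ℕ, s ≠ 0 → (q : K) ^ s ≠ 1) {a b : ℕ}
    (h : (q : K) ^ a = (q : K) ^ b) : a = b := by
  wlog hab : a ≤ b generalizing a b
  · exact (this h.symm (le_of_not_ge hab)).symm
  obtain ⟨d, rfl⟩ := Nat.exists_eq_add_of_le hab
  by_contra hne
  apply hq d (by omega)
  rw [pow_add] at h
  have := pow_ne_zero a q.ne_zero
  exact (mul_left_cancel₀ this (by rw [mul_one]; exact h)).symm

theorem ordMonomial_single {R : Type v} [Ring R] {N : ℕ} (x : Fin N → R) (s : Fin N) :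
    ordMonomial x (Pi.single s 1) = x s := by
  have := ordMonomial_mul x s 0 (by simp) 1
  rw [pow_one] at this
  rw [show (Pi.single s 1 : Fin N → ℕ) = Function.update (0 : Fin N → ℕ) s 1 from rfl, ← this]
  have h0 : ordMonomial x 0 = 1 := by simp [ordMonomial]
  rw [h0, one_mul]

theorem weight_unique (hq : ∀ s : ℕ, s ≠ 0 → (q : K) ^ s ≠ 1)
    (Q : QNA K (RqMat K q m n) (m * n) (m + n))
    (hx : ∀ (i : Fin m) (j : Fin n), Q.x (finProdFinEquiv (i, j)) = tGen K q m n i j)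
    (hact : ∀ (ξ : Torus K (m + n)) (i : Fin m) (j : Fin n),
      Q.act ξ (tGen K q m n i j) =
        ((ξ (Fin.castAdd n i) * (ξ (Fin.natAdd m j))⁻¹ : Kˣ) : K) • tGen K q m n i j)
    (i : Fin m) (j : Fin n) (b : RqMat K q m n)
    (hb : ∀ ξ : Torus K (m + n), Q.act ξ b =
      ((ξ (Fin.castAdd n i) * (ξ (Fin.natAdd m j))⁻¹ : Kˣ) : K) • b) :
    ∃ c : K, b = c • tGen K q m n i j := by
  obtain ⟨c, rfl⟩ := span_ordMonomial Q b
  have hχ : ∀ (ξ : Torus K (m + n)) (l : Fin (m * n)), Q.act ξ (Q.x l) =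
      ((ξ (Fin.castAdd n (finProdFinEquiv.symm l).1) *
        (ξ (Fin.natAdd m (finProdFinEquiv.symm l).2))⁻¹ : Kˣ) : K) • Q.x l := by
    intro ξ l
    obtain ⟨⟨a, b⟩, rfl⟩ := finProdFinEquiv.surjective l
    rw [hx, hact, Equiv.symm_apply_apply]
  have hsupp : ∀ f, c f ≠ 0 → f = Pi.single (finProdFinEquiv (i, j)) 1 := by
    intro f hf
    have hw := fun ξ => coeff_weight Q ξ _ (hχ ξ) c _ (hb ξ) f hf
    have hrow : ∀ i' : Fin m, ∑ j' : Fin n, f (finProdFinEquiv (i', j')) =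
        if i = i' then 1 else 0 := by
      intro i'
      apply pow_q_inj hq
      have := hw (Pi.mulSingle (Fin.castAdd n i') q)
      rw [← finProdFinEquiv.prod_comp, Fintype.prod_prod_type, Finset.prod_eq_single i'] at this
      · simp only [Equiv.symm_apply_apply, Pi.mulSingle_eq_same] at this
        have h1 : ∀ j', (Pi.mulSingle (Fin.castAdd n i') q : Torus K (m + n)) (Fin.natAdd m j') = 1 := by
          intro j'
          rw [Pi.mulSingle_eq_of_ne]
          intro h
          have := congrArg Fin.val h
          simp at this
          omega
        simp only [h1, inv_one, mul_one] at this
        rw [Finset.prod_pow_eq_pow_sum] at this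
        rw [this]
        by_cases h : i = i'
        · subst h; simp
        · rw [if_neg h, Pi.mulSingle_eq_of_ne]
          · simp
          · simpa using h
      · intro b _ hbi
        apply Finset.prod_eq_one
        intro j' _
        simp only [Equiv.symm_apply_apply]
        rw [Pi.mulSingle_eq_of_ne, Pi.mulSingle_eq_of_ne]
        · simp
        · intro h
          have := congrArg Fin.val h
          simp at this
          omega
        · simpa using hbi
      · simp
    have hcol : ∀ j' : Fin n, ∑ i' : Fin m, f (finProdFinEquiv (i', j')) =
        if j = j' then 1 else 0 := by
      intro j'
      apply pow_q_inj hq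
      have := hw (Pi.mulSingle (Fin.natAdd m j') q⁻¹)
      rw [← finProdFinEquiv.prod_comp, Fintype.prod_prod_type_right,
        Finset.prod_eq_single j'] at this
      · simp only [Equiv.symm_apply_apply, Pi.mulSingle_eq_same] at this
        have h1 : ∀ i', (Pi.mulSingle (Fin.natAdd m j') q⁻¹ : Torus K (m + n)) (Fin.castAdd n i') = 1 := by
          intro i'
          rw [Pi.mulSingle_eq_of_ne]
          intro h
          have := congrArg Fin.val h
          simp at this
          omega
        simp only [h1, inv_inv, one_mul] at this
        rw [Finset.prod_pow_eq_pow_sum] at this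
        rw [this]
        by_cases h : j = j'
        · subst h; simp
        · rw [if_neg h, Pi.mulSingle_eq_of_ne]
          · simp
          · simpa using h
      · intro b _ hbi
        apply Finset.prod_eq_one
        intro i' _
        simp only [Equiv.symm_apply_apply]
        rw [Pi.mulSingle_eq_of_ne, Pi.mulSingle_eq_of_ne]
        · simp
        · simpa using hbi
        · intro h
          have := congrArg Fin.val h
          simp at this
          omega
      · simp
    have hz : ∀ i' j', (i' ≠ i ∨ j' ≠ j) → f (finProdFinEquiv (i', j')) = 0 := by
      intro i' j' h
      rcases h with h | h
      · have := hrow i'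
        rw [if_neg (Ne.symm h), Finset.sum_eq_zero_iff] at this
        exact this j' (Finset.mem_univ _)
      · have := hcol j'
        rw [if_neg (Ne.symm h), Finset.sum_eq_zero_iff] at this
        exact this i' (Finset.mem_univ _)
    have h1 : f (finProdFinEquiv (i, j)) = 1 := by
      have := hrow i
      rw [if_pos rfl, Finset.sum_eq_single j] at this
      · exact this
      · intro b _ hb; exact hz _ _ (Or.inr hb)
      · simp
    funext l
    obtain ⟨⟨a, b⟩, rfl⟩ := finProdFinEquiv.surjective l
    by_cases hab : a = i ∧ b = j
    · obtain ⟨rfl, rfl⟩ := hab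
      rw [h1, Pi.single_eq_same]
    · rw [hz a b (by tauto), Pi.single_eq_of_ne]
      intro h
      have := finProdFinEquiv.injective h
      simp only [Prod.mk.injEq] at this
      exact hab this
  refine ⟨c (Pi.single (finProdFinEquiv (i, j)) 1), ?_⟩
  rw [Finsupp.linearCombination_apply, Finsupp.sum,
    Finset.sum_eq_single (Pi.single (finProdFinEquiv (i, j)) 1), ordMonomial_single, hx]
  · intro f hf hne
    exact absurd (hsupp f (Finsupp.mem_support_iff.1 hf)) hne
  · intro h
    rw [Finsupp.notMem_support_iff.1 h, zero_smul]

theorem skew_of_prime (hq : ∀ s : ℕ, s ≠ 0 → (q : K) ^ s ≠ 1)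
    (Q : QNA K (RqMat K q m n) (m * n) (m + n))
    (hx : ∀ (i : Fin m) (j : Fin n), Q.x (finProdFinEquiv (i, j)) = tGen K q m n i j)
    (hact : ∀ (ξ : Torus K (m + n)) (i : Fin m) (j : Fin n),
      Q.act ξ (tGen K q m n i j) =
        ((ξ (Fin.castAdd n i) * (ξ (Fin.natAdd m j))⁻¹ : Kˣ) : K) • tGen K q m n i j)
    (i : Fin m) (j : Fin n) (B : Subalgebra K (RqMat K q m n)) (y : RqMat K q m n)
    (hB : tGen K q m n i j ∈ B) (hy : IsPrimeIn K B y) (f : Fin (m + n) → ℤ)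
    (hf : IsEigenWith K Q.act f y) :
    ∃ c : K, tGen K q m n i j * y = c • (y * tGen K q m n i j) := by
  obtain ⟨-, hy0, -, hn, -, -⟩ := hy
  obtain ⟨b, -, hb⟩ := hn _ hB
  obtain ⟨c, rfl⟩ := weight_unique hq Q hx hact i j b (by
    intro ξ
    have h1 := congrArg (Q.act ξ) hb
    rw [map_mul, map_mul, hact, hf ξ, smul_mul_assoc, mul_smul_comm, smul_mul_assoc, hb,
      smul_comm] at h1
    have h2 := smul_right_injective _ (Units.ne_zero (∏ i, ξ i ^ f i)) h1
    rw [← mul_smul_comm, ← sub_eq_zero, ← mul_sub] at h2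
    rcases noZeroDiv Q h2 with h | h
    · exact absurd h hy0
    · exact (sub_eq_zero.1 h).symm)
  exact ⟨c, by rw [hb, mul_smul_comm]⟩

end Weights

section Scalars

variable {K : Type u} [Field K]

theorem indep_one {R : Type v} [Ring R] [Algebra K R] {N r : ℕ} (Q : QNA K R N r) (k : Fin N)
    {a : R} (ha : a ∈ Rsub K Q.x k) (h : a * Q.x k ∈ Rsub K Q.x k) : a = 0 := by
  refine (oreData Q k).indep 1 a ha ?_
  rw [pow_one, mem_Fil_one]
  exact h

theorem h_act {R : Type v} [Ring R] [Algebra K R] {N r : ℕ} (Q : QNA K R N r) (l k : Fin N)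
    (hlk : l < k) (ν : K)
    (h : Q.x k * Q.x l - ν • (Q.x l * Q.x k) ∈ Rsub K Q.x k) :
    Q.act (Q.h k) (Q.x l) = ν • Q.x l := by
  have hl := x_mem_Rsub (K := K) Q.x l (k := k) hlk
  have hs := Q.stable k _ hl
  unfold skewDelta at hs
  rw [← sub_eq_zero]
  apply indep_one Q k
  · exact Subalgebra.sub_mem _ (act_mem_Rsub Q _ _ hl) (Subalgebra.smul_mem _ hl _)
  · have := Subalgebra.sub_mem _ h hs
    convert this using 1
    rw [sub_mul, smul_mul_assoc]
    abel

theorem x_ne_zero {R : Type v} [Ring R] [Algebra K R] {N r : ℕ} (Q : QNA K R N r) (k : Fin N) :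
    Q.x k ≠ 0 := by
  rw [← ordMonomial_single Q.x k]
  exact Q.pbw.ne_zero _

variable {q : Kˣ} {m n : ℕ}

theorem idx_lt {i a : Fin m} {j b : Fin n} :
    (finProdFinEquiv (a, b) : Fin (m * n)) < finProdFinEquiv (i, j) ↔ a < i ∨ (a = i ∧ b < j) := by
  rw [Fin.lt_def, Fin.lt_def, Fin.lt_def, Fin.ext_iff]
  simp only [finProdFinEquiv_apply_val]
  have hb := b.2
  have hj := j.2
  constructor
  · intro h
    by_contra hc
    push Not at hc
    rcases Nat.lt_or_ge (i : ℕ) a with h1 | h1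
    · have : n * (i + 1) ≤ n * a := Nat.mul_le_mul_left _ h1
      rw [Nat.mul_add] at this
      omega
    · have h2 : (a : ℕ) = i := le_antisymm h1 hc.1
      have := hc.2 h2
      rw [h2] at h
      omega
  · rintro (h | ⟨h, h'⟩)
    · have : n * (a + 1) ≤ n * i := Nat.mul_le_mul_left _ h
      rw [Nat.mul_add] at this
      omega
    · rw [h]; omega

/-- The standing hypotheses. -/
structure Ctx (q : Kˣ) (Q : QNA K (RqMat K q m n) (m * n) (m + n)) : Prop where
  hq : ∀ s : ℕ, s ≠ 0 → (q : K) ^ s ≠ 1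
  hx : ∀ (i : Fin m) (j : Fin n), Q.x (finProdFinEquiv (i, j)) = tGen K q m n i j
  hact : ∀ (ξ : Torus K (m + n)) (i : Fin m) (j : Fin n),
      Q.act ξ (tGen K q m n i j) =
        ((ξ (Fin.castAdd n i) * (ξ (Fin.natAdd m j))⁻¹ : Kˣ) : K) • tGen K q m n i j

variable {Q : QNA K (RqMat K q m n) (m * n) (m + n)}

theorem t_mem (C : Ctx q Q) {i a : Fin m} {j b : Fin n} (h : a < i ∨ (a = i ∧ b < j)) :
    tGen K q m n a b ∈ Rsub K Q.x (finProdFinEquiv (i, j) : Fin (m * n)) := by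
  rw [← C.hx]
  exact x_mem_Rsub _ _ (idx_lt.2 h)

theorem h_row (C : Ctx q Q) (i : Fin m) {j b : Fin n} (h : b < j) :
    Q.act (Q.h (finProdFinEquiv (i, j))) (tGen K q m n i b) = (q : K)⁻¹ • tGen K q m n i b := by
  have := h_act Q (finProdFinEquiv (i, b)) (finProdFinEquiv (i, j)) (idx_lt.2 (Or.inr ⟨rfl, h⟩))
    (q : K)⁻¹ (by
      rw [C.hx, C.hx, t_row i h, smul_smul, inv_mul_cancel₀ q.ne_zero, one_smul, sub_self]
      exact Subalgebra.zero_mem _)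
  rwa [C.hx] at this

theorem h_col (C : Ctx q Q) {i a : Fin m} (j : Fin n) (h : a < i) :
    Q.act (Q.h (finProdFinEquiv (i, j))) (tGen K q m n a j) = (q : K)⁻¹ • tGen K q m n a j := by
  have := h_act Q (finProdFinEquiv (a, j)) (finProdFinEquiv (i, j)) (idx_lt.2 (Or.inl h))
    (q : K)⁻¹ (by
      rw [C.hx, C.hx, t_col j h, smul_smul, inv_mul_cancel₀ q.ne_zero, one_smul, sub_self]
      exact Subalgebra.zero_mem _)
  rwa [C.hx] at this

theorem h_comm (C : Ctx q Q) {i a : Fin m} {j b : Fin n} (h : a < i) (h' : j < b) :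
    Q.act (Q.h (finProdFinEquiv (i, j))) (tGen K q m n a b) = tGen K q m n a b := by
  have := h_act Q (finProdFinEquiv (a, b)) (finProdFinEquiv (i, j)) (idx_lt.2 (Or.inl h))
    1 (by
      rw [C.hx, C.hx, t_comm h h', one_smul, sub_self]
      exact Subalgebra.zero_mem _)
  rwa [C.hx, one_smul] at this

theorem h_serp (C : Ctx q Q) {i a : Fin m} {j b : Fin n} (h : a < i) (h' : b < j) :
    Q.act (Q.h (finProdFinEquiv (i, j))) (tGen K q m n a b) = tGen K q m n a b := by
  have := h_act Q (finProdFinEquiv (a, b)) (finProdFinEquiv (i, j)) (idx_lt.2 (Or.inl h))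
    1 (by
      rw [C.hx, C.hx, t_serp h h', one_smul, sub_add_cancel_left]
      exact Subalgebra.neg_mem _ (Subalgebra.smul_mem _
        (Subalgebra.mul_mem _ (t_mem C (Or.inl h)) (t_mem C (Or.inr ⟨rfl, h'⟩))) _))
  rwa [C.hx, one_smul] at this

theorem t_ne_zero (C : Ctx q Q) (i : Fin m) (j : Fin n) : tGen K q m n i j ≠ 0 := by
  rw [← C.hx]; exact x_ne_zero Q _

theorem h_scalar (C : Ctx q Q) (ξ : Torus K (m + n)) {i : Fin m} {j : Fin n} {c : K}
    (h : Q.act ξ (tGen K q m n i j) = c • tGen K q m n i j) :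
    (ξ (Fin.castAdd n i) : K) * (ξ (Fin.natAdd m j) : K)⁻¹ = c := by
  rw [C.hact] at h
  have := smul_left_injective K (t_ne_zero C i j) h
  simpa using this

theorem h_self (C : Ctx q Q) {i i' : Fin m} {j j' : Fin n} (hi : i' < i) (hj : j' < j) :
    Q.act (Q.h (finProdFinEquiv (i, j))) (tGen K q m n i j) =
      ((q : K)⁻¹ * (q : K)⁻¹) • tGen K q m n i j := by
  have e1 := h_scalar C _ (h_row C i hj)
  have e2 := h_scalar C _ (h_col C j hi)
  have e3 := h_scalar C (c := 1) _ ((h_serp C hi hj).trans (one_smul _ _).symm)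
  rw [C.hact]
  congr 1
  push_cast
  set ξ := Q.h (finProdFinEquiv (i, j))
  have n1 := (ξ (Fin.castAdd n i')).ne_zero
  have n2 := (ξ (Fin.natAdd m j')).ne_zero
  have n3 := (ξ (Fin.natAdd m j)).ne_zero
  have e4 : (ξ (Fin.castAdd n i') : K) = (ξ (Fin.natAdd m j') : K) := by
    field_simp at e3; exact e3
  rw [e4] at e2
  calc _ = ((ξ (Fin.castAdd n i) : K) * (ξ (Fin.natAdd m j') : K)⁻¹) *
      ((ξ (Fin.natAdd m j') : K) * (ξ (Fin.natAdd m j) : K)⁻¹) := by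
        field_simp
    _ = _ := by rw [e1, e2]

theorem delta_zero_edge (C : Ctx q Q) {i : Fin m} {j : Fin n} (h : (i : ℕ) = 0 ∨ (j : ℕ) = 0) :
    deltaZero K Q (finProdFinEquiv (i, j)) := by
  intro a ha
  unfold skewDelta
  rw [sub_eq_zero]
  unfold Rsub at ha
  induction ha using Algebra.adjoin_induction with
  | mem z hz =>
    obtain ⟨l, hl, rfl⟩ := hz
    obtain ⟨⟨a, b⟩, rfl⟩ := finProdFinEquiv.surjective l
    have hl' := idx_lt.1 (show (finProdFinEquiv (a, b) : Fin (m * n)) < finProdFinEquiv (i, j) from hl)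
    rw [C.hx, C.hx]
    rcases hl' with h1 | ⟨rfl, h1⟩
    · rcases lt_trichotomy b j with h2 | h2 | h2
      · rw [Fin.lt_def] at h1 h2
        omega
      · subst h2
        rw [h_col C b h1, smul_mul_assoc, t_col b h1, smul_smul, inv_mul_cancel₀ q.ne_zero,
          one_smul]
      · rw [h_comm C h1 h2, t_comm h1 h2]
    · rw [h_row C a h1, smul_mul_assoc, t_row a h1, smul_smul, inv_mul_cancel₀ q.ne_zero,
        one_smul]
  | algebraMap s => rw [AlgEquiv.commutes]; exact (Algebra.commutes _ _).symm
  | add x y _ _ h1 h2 => rw [mul_add, map_add, add_mul, h1, h2]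
  | mul x y _ _ h1 h2 => rw [← mul_assoc, h1, mul_assoc, h2, map_mul, mul_assoc]

theorem delta_ne_inner (C : Ctx q Q) {i i' : Fin m} {j j' : Fin n}
    (hi : (i : ℕ) = i' + 1) (hj : (j : ℕ) = j' + 1) :
    ¬ deltaZero K Q (finProdFinEquiv (i, j)) := by
  intro h
  have h1 : i' < i := by rw [Fin.lt_def]; omega
  have h2 : j' < j := by rw [Fin.lt_def]; omega
  have := h _ (t_mem C (a := i') (b := j') (Or.inl h1))
  unfold skewDelta at this
  rw [sub_eq_zero, h_serp C h1 h2, C.hx] at this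
  exact not_skew_tGen C.hq i i' j j' hi hj 1 (by rw [one_smul]; exact this)

theorem h_solid (C : Ctx q Q) {i i' : Fin m} {j j' : Fin n} (hi : i' < i) (hj : j' < j) :
    Q.act (Q.h (finProdFinEquiv (i, j))) (solidMinor K q m n i' j') = solidMinor K q m n i' j' := by
  unfold solidMinor qMinor
  rw [map_sum]
  refine Finset.sum_congr rfl fun σ _ => ?_
  rw [map_smul, map_list_prod, List.map_map]
  congr 2
  refine List.map_congr_left fun a _ => ?_
  have := a.2
  have := (σ a).2
  apply h_serp C <;> rw [Fin.lt_def] at * <;> simp only <;> omega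

end Scalars

section PrimeSeq

variable {K : Type u} [Field K] {R : Type v} [Ring R] [Algebra K R] {N r : ℕ}
  {Q : QNA K R N r} {η : Fin N → ℤ} {c y : Fin N → R}

theorem y_prime (hs : IsPrimeSeq K Q η c y) (l : Fin N) :
    IsPrimeIn K (Rsub K Q.x ((l : ℕ) + 1)) (y l) :=
  ((hs.prime_iff l (y l)).2 ⟨l, le_rfl, fun l' h h' => absurd (h.trans_le h') (lt_irrefl _),
    1, by simp⟩).1

theorem y_ne_zero (hs : IsPrimeSeq K Q η c y) (l : Fin N) : y l ≠ 0 := (y_prime hs l).2.1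

theorem y_mem (hs : IsPrimeSeq K Q η c y) (l : Fin N) {k : ℕ} (h : (l : ℕ) < k) :
    y l ∈ Rsub K Q.x k :=
  Rsub_mono Q.x h (y_prime hs l).1

theorem pred_cases (η : Fin N → ℤ) (k : Fin N) :
    (predIdx η k = ⊥ ∧ ∀ l, l < k → η l ≠ η k) ∨
    ∃ p : Fin N, predIdx η k = (p : WithBot (Fin N)) ∧ p < k ∧ η p = η k ∧
      ∀ l, l < k → η l = η k → l ≤ p := by
  unfold predIdx
  rcases h : (Finset.univ.filter fun l => l < k ∧ η l = η k).max with _ | p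
  · left
    refine ⟨rfl, fun l hl he => ?_⟩
    have h' := Finset.max_eq_bot.1 h
    have : l ∈ (Finset.univ.filter fun l => l < k ∧ η l = η k) := by simp [hl, he]
    rw [h'] at this
    simp at this
  · right
    have h1 := Finset.mem_of_max h
    simp only [Finset.mem_filter, Finset.mem_univ, true_and] at h1
    refine ⟨p, rfl, h1.1, h1.2, fun l hl he => ?_⟩
    exact Finset.le_max_of_eq (by simp [hl, he]) h

theorem y_notMem (hs : IsPrimeSeq K Q η c y) (l : Fin N) : y l ∉ Rsub K Q.x l := by
  intro hmem
  have h1 : (1 : R) ≠ 0 := one_ne_zero_QNA Q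
  by_cases hd : deltaZero K Q l
  · rw [hs.rec_delta_zero l hd] at hmem
    exact h1 (indep_one Q l (Subalgebra.one_mem _) (by rwa [one_mul]))
  · have e := hs.rec_delta_ne l hd
    have hc := hs.c_mem l hd
    have key : ∀ w : R, w ∈ Rsub K Q.x l → y l = w * Q.x l - c l → w = 0 := by
      intro w hw e
      apply indep_one Q l hw
      rw [eq_sub_iff_add_eq] at e
      rw [← e]
      exact Subalgebra.add_mem _ hmem hc
    rcases pred_cases η l with ⟨hp, -⟩ | ⟨p, hp, hpl, -, -⟩
    · rw [hp] at e
      exact h1 (key 1 (Subalgebra.one_mem _) e)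
    · rw [hp] at e
      exact y_ne_zero hs p (key (y p) (y_mem hs p hpl) e)

theorem y_inj (hs : IsPrimeSeq K Q η c y) {l l' : Fin N} {t : Kˣ} (e : y l = (t : K) • y l') :
    l = l' := by
  rcases lt_trichotomy l l' with h | h | h
  · exfalso
    apply y_notMem hs l'
    have : y l' = ((t : K)⁻¹) • y l := by
      rw [e, smul_smul, inv_mul_cancel₀ t.ne_zero, one_smul]
    rw [this]
    exact Subalgebra.smul_mem _ (y_mem hs l h) _
  · exact h
  · exfalso
    apply y_notMem hs l
    rw [e]
    exact Subalgebra.smul_mem _ (y_mem hs l' h) _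

theorem edge_new (hs : IsPrimeSeq K Q η c y) (k : Fin N) (hd : deltaZero K Q k) (l : Fin N)
    (hl : l < k) : η l ≠ η k := by
  rcases pred_cases η k with ⟨-, h⟩ | ⟨p, -, hpk, hη, hmax⟩
  · exact h l hl
  · exfalso
    have hk0 : (k : ℕ) - 1 + 1 = k := by have : (p : ℕ) < k := hpk; omega
    let k' : Fin N := ⟨(k : ℕ) - 1, by have := k.2; omega⟩
    have hp1 : IsPrimeIn K (Rsub K Q.x ((k' : ℕ) + 1)) (y p) := by
      refine ((hs.prime_iff k' (y p)).2 ⟨p, ?_, ?_, 1, by simp⟩).1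
      · rw [Fin.le_def]; show (p : ℕ) ≤ k - 1
        have : (p : ℕ) < k := hpk
        omega
      · intro l' h1 h2 h3
        rw [Fin.le_def] at h2
        have h2' : (l' : ℕ) ≤ k - 1 := h2
        have := hmax l' (by rw [Fin.lt_def]; omega) (h3.trans hη)
        exact absurd (h1.trans_le this) (lt_irrefl _)
    have hp2 : IsPrimeIn K (Rsub K Q.x (k : ℕ)) (y p) := by
      have e : ((k' : ℕ) + 1) = k := hk0
      rwa [e] at hp1
    obtain ⟨f, hf⟩ := hs.homog p
    have hp3 := (oreData Q k).prime_lift (nzd_Rsub Q k k.2.le) hp2 (by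
      intro a ha
      have := hd a ha
      unfold skewDelta at this
      exact sub_eq_zero.1 this) (hf (Q.h k))
    obtain ⟨l', h1, h2, t, ht⟩ := (hs.prime_iff k (y p)).1 ⟨hp3, f, hf⟩
    have := y_inj hs ht
    subst this
    exact h2 k hpk le_rfl hη.symm

end PrimeSeq

section Main

variable {K : Type u} [Field K] {q : Kˣ} {m n : ℕ}
  {Q : QNA K (RqMat K q m n) (m * n) (m + n)} {η : Fin (m * n) → ℤ}
  {c y : Fin (m * n) → RqMat K q m n}

/-- The algebraic computation determining `y_k`. -/
theorem inner_calc {R : Type v} [Ring R] [Algebra K R] {A B : Subalgebra K R} {x : R}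
    {σ : R ≃ₐ[K] R} (h : OreData A B x σ) (s : K) (hs : s ≠ 1) (u d : R) (hu : u ∈ A) (hd : d ∈ A)
    (hu0 : u ≠ 0) (hσu : σ u = u) (hσx : σ x = s • x) (t : K) (hσ : σ (u * x - d) = t • (u * x - d))
    (c : K) (hc : x * (u * x - d) = c • ((u * x - d) * x)) :
    d = (s - 1)⁻¹ • (x * u - u * x) := by
  have ind1 : ∀ a ∈ A, a * x ∈ A → a = 0 := by
    intro a ha h'
    exact h.indep 1 a ha (by rw [pow_one, mem_Fil_one]; exact h')
  have smul0 : ∀ a : K, a • u = 0 → a = 0 := by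
    intro a ha
    exact (smul_eq_zero.1 ha).resolve_right hu0
  have hts : s - t = 0 := by
    apply smul0
    apply ind1 _ (A.smul_mem hu _)
    have : (s - t) • u * x = σ d - t • d := by
      rw [map_sub, map_mul, hσu, hσx, mul_smul_comm, smul_sub] at hσ
      rw [smul_mul_assoc, sub_smul]
      rw [sub_eq_sub_iff_add_eq_add] at hσ ⊢
      rw [hσ, add_comm]
    rw [this]
    exact A.sub_mem (h.σA d hd) (A.smul_mem hd _)
  have hts' : t = s := (sub_eq_zero.1 hts).symm
  subst hts'
  have hσd : σ d = t • d := by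
    rw [map_sub, map_mul, hσu, hσx, mul_smul_comm, smul_sub] at hσ
    exact sub_right_injective hσ
  have k1 := h.comm u hu
  have k2 := h.comm d hd
  rw [hσu] at k1
  rw [hσd] at k2
  obtain ⟨e1, he1⟩ : ∃ e, e = x * u - u * x := ⟨_, rfl⟩
  obtain ⟨e2, he2⟩ : ∃ e, e = x * d - t • d * x := ⟨_, rfl⟩
  rw [← he1] at k1
  rw [← he2] at k2
  have hxu : x * u = u * x + e1 := by rw [he1]; abel
  have hxd : x * d = t • (d * x) + e2 := by rw [he2, smul_mul_assoc]; abel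
  have main : ((1 - c) • u) * x ^ 2 + ((e1 - t • d + c • d) * x - e2) = 0 := by
    rw [mul_sub, ← mul_assoc, hxu, hxd] at hc
    have hc' := sub_eq_zero.2 hc
    rw [← hc', pow_two]
    simp only [sub_mul, add_mul, smul_mul_assoc, sub_smul, one_smul, smul_sub, mul_assoc]
    abel
  have m1 : e1 - t • d + c • d ∈ A :=
    A.add_mem (A.sub_mem k1 (A.smul_mem hd _)) (A.smul_mem hd _)
  have hc1 : 1 - c = 0 := by
    apply smul0
    apply h.indep 2 _ (A.smul_mem hu _)
    rw [eq_neg_of_add_eq_zero_left main]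
    apply Submodule.neg_mem
    apply mem_Fil_succ.2
    exact ⟨_, m1, -e2, mem_Fil_one.2 (A.neg_mem k2), by rw [pow_one, sub_eq_add_neg]⟩
  have hc2 : c = 1 := (sub_eq_zero.1 hc1).symm
  subst hc2
  rw [sub_self, zero_smul, zero_mul, zero_add, sub_eq_zero] at main
  have hz := ind1 _ m1 (by rw [main]; exact k2)
  rw [← he1]
  have hs' : t - 1 ≠ 0 := sub_ne_zero.2 hs
  have : e1 = (t - 1) • d := by
    rw [one_smul] at hz
    rw [sub_smul, one_smul]
    have := eq_neg_of_add_eq_zero_left hz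
    rw [sub_eq_iff_eq_add] at this
    rw [this]; abel
  rw [this, smul_smul, inv_mul_cancel₀ hs', one_smul]

/-- The inductive statement at `k`. -/
def Good (q : Kˣ) (η : Fin (m * n) → ℤ) (y : Fin (m * n) → RqMat K q m n) (i : Fin m) (j : Fin n) :
    Prop :=
  y (finProdFinEquiv (i, j)) = solidMinor K q m n i j ∧
  ∀ (a : Fin m) (b : Fin n), (finProdFinEquiv (a, b) : Fin (m * n)) < finProdFinEquiv (i, j) →
    (η (finProdFinEquiv (a, b)) = η (finProdFinEquiv (i, j)) ↔ (b : ℤ) - a = (j : ℤ) - i)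

theorem good_edge (C : Ctx q Q) (hs : IsPrimeSeq K Q η c y) {i : Fin m} {j : Fin n}
    (h : (i : ℕ) = 0 ∨ (j : ℕ) = 0) : Good q η y i j := by
  have hd := delta_zero_edge C h
  constructor
  · rw [hs.rec_delta_zero _ hd, C.hx, solidMinor_zero i j h]
  · intro a b hlt
    have hne := edge_new hs _ hd _ hlt
    have hlt' := idx_lt.1 hlt
    rw [Fin.lt_def, Fin.lt_def, Fin.ext_iff] at hlt'
    constructor
    · intro e; exact absurd e hne
    · intro e; exfalso; omega

theorem good_inner (C : Ctx q Q) (hs : IsPrimeSeq K Q η c y) {i i' : Fin m} {j j' : Fin n}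
    (hi : (i : ℕ) = i' + 1) (hj : (j : ℕ) = j' + 1)
    (ih : ∀ a b, (finProdFinEquiv (a, b) : Fin (m * n)) < finProdFinEquiv (i, j) →
      Good q η y a b) : Good q η y i j := by
  have hi' : i' < i := by rw [Fin.lt_def]; omega
  have hj' : j' < j := by rw [Fin.lt_def]; omega
  have hpk : (finProdFinEquiv (i', j') : Fin (m * n)) < finProdFinEquiv (i, j) :=
    idx_lt.2 (Or.inl hi')
  have hyp : y (finProdFinEquiv (i', j')) = solidMinor K q m n i' j' := (ih i' j' hpk).1
  have hmid : ∀ l : Fin (m * n), finProdFinEquiv (i', j') < l → l < finProdFinEquiv (i, j) →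
      η l ≠ η (finProdFinEquiv (i', j')) := by
    intro l h1 h2 h3
    obtain ⟨⟨a, b⟩, rfl⟩ := finProdFinEquiv.surjective l
    have := ((ih a b h2).2 i' j' h1).1 h3.symm
    have h1' := idx_lt.1 h1
    have h2' := idx_lt.1 h2
    rw [Fin.lt_def, Fin.lt_def, Fin.ext_iff] at h1' h2'
    omega
  have hηp : η (finProdFinEquiv (i', j')) = η (finProdFinEquiv (i, j)) := by
    by_contra hne
    obtain ⟨hp, f, hf⟩ := (hs.prime_iff (finProdFinEquiv (i, j)) (y (finProdFinEquiv (i', j')))).2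
      ⟨finProdFinEquiv (i', j'), hpk.le, by
        intro l h1 h2
        rcases h2.lt_or_eq with h3 | h3
        · exact hmid l h1 h3
        · rw [h3]; exact fun e => hne e.symm, 1, by simp⟩
    obtain ⟨c', hc'⟩ := skew_of_prime C.hq Q C.hx C.hact i j _ _
      (by rw [← C.hx]; exact x_mem_Rsub _ _ (Nat.lt_succ_self _)) hp f hf
    rw [hyp] at hc'
    exact not_skew_solid C.hq i i' j j' hi hj c' hc'
  have hpred : predIdx η (finProdFinEquiv (i, j)) =
      ((finProdFinEquiv (i', j') : Fin (m * n)) : WithBot (Fin (m * n))) := by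
    rcases pred_cases η (finProdFinEquiv (i, j)) with ⟨-, h⟩ | ⟨p, hp, hp1, hp2, hp3⟩
    · exact absurd hηp (h _ hpk)
    · rw [hp]
      congr 1
      rcases (hp3 _ hpk hηp).lt_or_eq with h | h
      · exact absurd (hp2.trans hηp.symm) (hmid p h hp1)
      · exact h.symm
  have hd := delta_ne_inner C hi hj
  have hrec := hs.rec_delta_ne _ hd
  rw [hpred] at hrec
  have hrec' : y (finProdFinEquiv (i, j)) = solidMinor K q m n i' j' * tGen K q m n i j -
      c (finProdFinEquiv (i, j)) := by
    rw [hrec, ← hyp, ← C.hx]; rfl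
  have hq0 := q.ne_zero
  have hq2 : (q : K) ^ 2 - 1 ≠ 0 := sub_ne_zero.2 (C.hq 2 (by norm_num))
  have hqq : (q : K) - (q : K)⁻¹ ≠ 0 := by
    intro h
    apply hq2
    field_simp at h
    simpa using h
  constructor
  · obtain ⟨f, hf⟩ := hs.homog (finProdFinEquiv (i, j))
    obtain ⟨c', hc'⟩ := skew_of_prime C.hq Q C.hx C.hact i j _ _
      (by rw [← C.hx]; exact x_mem_Rsub _ _ (Nat.lt_succ_self _))
      (y_prime hs (finProdFinEquiv (i, j))) f hf
    have hf' := hf (Q.h (finProdFinEquiv (i, j)))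
    rw [hrec'] at hc' hf'
    have ho := oreData Q (finProdFinEquiv (i, j))
    rw [C.hx] at ho
    have hcc := inner_calc ho ((q : K)⁻¹ * (q : K)⁻¹) (by
        intro h
        apply hq2
        field_simp at h
        rw [← h]; ring)
      (solidMinor K q m n i' j') (c (finProdFinEquiv (i, j)))
      (by rw [← hyp]; exact y_mem hs _ hpk) (hs.c_mem _ hd)
      (by rw [← hyp]; exact y_ne_zero hs _) (h_solid C hi' hj') (h_self C hi' hj') _ hf' c' hc'
    rw [hrec', hcc, solidMinor_succ hqq i i' j j' hi hj, sub_eq_add_neg, ← neg_smul]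
    congr 2
    have : (q : K)⁻¹ * (q : K)⁻¹ - 1 = -((q : K) - (q : K)⁻¹) * (q : K)⁻¹ := by
      field_simp; ring
    rw [this, mul_inv, inv_inv, ← neg_inv]
    ring
  · intro a b hlt
    rw [← hηp]
    have hlt' := idx_lt.1 hlt
    rcases lt_trichotomy (finProdFinEquiv (a, b) : Fin (m * n)) (finProdFinEquiv (i', j')) with h | h | h
    · rw [(ih i' j' hpk).2 a b h]
      omega
    · have := finProdFinEquiv.injective h
      simp only [Prod.mk.injEq] at this
      obtain ⟨rfl, rfl⟩ := this
      simp; omega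
    · constructor
      · intro e; exact absurd e (hmid _ h hlt)
      · intro e
        exfalso
        have h' := idx_lt.1 h
        rw [Fin.lt_def, Fin.lt_def, Fin.ext_iff] at h' hlt'
        omega

theorem good_all (C : Ctx q Q) (hs : IsPrimeSeq K Q η c y) (k : Fin (m * n)) :
    ∀ i j, k = finProdFinEquiv (i, j) → Good q η y i j := by
  induction k using WellFoundedLT.induction with
  | ind k ih =>
    rintro i j rfl
    by_cases h : (i : ℕ) = 0 ∨ (j : ℕ) = 0
    · exact good_edge C hs h
    · push Not at h
      have h1 := i.2
      have h2 := j.2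
      exact good_inner C hs (i' := ⟨i - 1, by omega⟩) (j' := ⟨j - 1, by omega⟩)
        (by simp only; omega) (by simp only; omega) fun a b hab => ih _ hab a b rfl

theorem good_eta (C : Ctx q Q) (hs : IsPrimeSeq K Q η c y) (i i' : Fin m) (j j' : Fin n) :
    η (finProdFinEquiv (i, j)) = η (finProdFinEquiv (i', j')) ↔
        ((j : ℤ) - (i : ℤ) = (j' : ℤ) - (i' : ℤ)) := by
  rcases lt_trichotomy (finProdFinEquiv (i, j) : Fin (m * n)) (finProdFinEquiv (i', j')) with h | h | h
  · exact (good_all C hs _ i' j' rfl).2 i j h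
  · have := finProdFinEquiv.injective h
    simp only [Prod.mk.injEq] at this
    obtain ⟨rfl, rfl⟩ := this
    simp
  · rw [eq_comm, (good_all C hs _ i j rfl).2 i' j' h, eq_comm]

theorem rank_eq (C : Ctx q Q) (hs : IsPrimeSeq K Q η c y) (hm : 0 < m) (hn : 0 < n) :
    (Finset.univ.image η).card = m + n - 1 := by
  have e2 : (Finset.univ.image fun p : Fin m × Fin n => (p.2 : ℤ) - (p.1 : ℤ)) =
      Finset.Icc (-((m : ℤ) - 1)) ((n : ℤ) - 1) := by
    ext z
    simp only [Finset.mem_image, Finset.mem_univ, true_and, Prod.exists, Finset.mem_Icc]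
    constructor
    · rintro ⟨a, b, rfl⟩
      have := a.2
      have := b.2
      omega
    · rintro ⟨h1, h2⟩
      rcases le_total 0 z with h | h
      · exact ⟨⟨0, hm⟩, ⟨z.toNat, by omega⟩, by simp; omega⟩
      · exact ⟨⟨(-z).toNat, by omega⟩, ⟨0, hn⟩, by simp; omega⟩
  have e3 : (Finset.univ.image η).card =
      (Finset.univ.image fun p : Fin m × Fin n => (p.2 : ℤ) - (p.1 : ℤ)).card := by
    have hη : Finset.univ.image η =
        Finset.univ.image fun p : Fin m × Fin n => η (finProdFinEquiv p) := by
      ext z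
      simp only [Finset.mem_image, Finset.mem_univ, true_and]
      exact (finProdFinEquiv.surjective.exists (p := fun a => η a = z))
    rw [hη]
    classical
    apply le_antisymm
    · have : (Finset.univ.image fun p : Fin m × Fin n => η (finProdFinEquiv p)) ⊆
          (Finset.univ.image fun p : Fin m × Fin n => (p.2 : ℤ) - (p.1 : ℤ)).image
            (fun z => if h : ∃ p : Fin m × Fin n, (p.2 : ℤ) - (p.1 : ℤ) = z
              then η (finProdFinEquiv h.choose) else 0) := by
        intro z hz
        obtain ⟨p, -, rfl⟩ := Finset.mem_image.1 hz
        refine Finset.mem_image.2 ⟨_, Finset.mem_image.2 ⟨p, Finset.mem_univ _, rfl⟩, ?_⟩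
        have hex : ∃ p' : Fin m × Fin n, (p'.2 : ℤ) - (p'.1 : ℤ) = (p.2 : ℤ) - (p.1 : ℤ) := ⟨p, rfl⟩
        rw [dif_pos hex]
        exact (good_eta C hs hex.choose.1 p.1 hex.choose.2 p.2).2 hex.choose_spec
      exact (Finset.card_le_card this).trans Finset.card_image_le
    · have : (Finset.univ.image fun p : Fin m × Fin n => (p.2 : ℤ) - (p.1 : ℤ)) ⊆
          (Finset.univ.image fun p : Fin m × Fin n => η (finProdFinEquiv p)).image
            (fun z => if h : ∃ p : Fin m × Fin n, η (finProdFinEquiv p) = z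
              then (h.choose.2 : ℤ) - (h.choose.1 : ℤ) else 0) := by
        intro z hz
        obtain ⟨p, -, rfl⟩ := Finset.mem_image.1 hz
        refine Finset.mem_image.2 ⟨_, Finset.mem_image.2 ⟨p, Finset.mem_univ _, rfl⟩, ?_⟩
        have hex : ∃ p' : Fin m × Fin n, η (finProdFinEquiv p') = η (finProdFinEquiv p) := ⟨p, rfl⟩
        rw [dif_pos hex]
        exact (good_eta C hs hex.choose.1 p.1 hex.choose.2 p.2).1 hex.choose_spec
      exact (Finset.card_le_card this).trans Finset.card_image_le
  rw [e3, e2, Int.card_Icc]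
  omega

end Main

/-- **Prime elements of quantum matrices are solid quantum minors.**
For the algebra `R_q[M_{m×n}]` (with `q` not a root of unity) viewed as a quantum
nilpotent algebra of dimension `mn` via `x_{(i-1)n+j} = t_{ij}`, the canonical sequence
of homogeneous prime elements from the prime element theorem consists of the solid
quantum minors `y_{(i-1)n+j} = Δ_{[i−min(i,j)+1,i],[j−min(i,j)+1,j]}`, the function `η`
may be chosen as `η((i-1)n+j) = j − i` (i.e. its level sets are those of `(i,j) ↦ j − i`),
and consequently the rank of `R_q[M_{m×n}]` — the cardinality of the range of `η` —
equals `m + n − 1`. -/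
theorem quantum_matrices_prime_elements
    {K : Type u} [Field K] (q : Kˣ) (hq : ∀ s : ℕ, s ≠ 0 → (q : K) ^ s ≠ 1)
    (m n : ℕ) (hm : 0 < m) (hn : 0 < n)
    (Q : QNA K (RqMat K q m n) (m * n) (m + n))
    (hx : ∀ (i : Fin m) (j : Fin n), Q.x (finProdFinEquiv (i, j)) = tGen K q m n i j)
    (hact : ∀ (ξ : Torus K (m + n)) (i : Fin m) (j : Fin n),
      Q.act ξ (tGen K q m n i j) =
        ((ξ (Fin.castAdd n i) * (ξ (Fin.natAdd m j))⁻¹ : Kˣ) : K) • tGen K q m n i j)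
    (η : Fin (m * n) → ℤ) (c y : Fin (m * n) → RqMat K q m n)
    (hseq : IsPrimeSeq K Q η c y) :
    (∀ (i : Fin m) (j : Fin n), y (finProdFinEquiv (i, j)) = solidMinor K q m n i j) ∧
    (∀ (i i' : Fin m) (j j' : Fin n),
      η (finProdFinEquiv (i, j)) = η (finProdFinEquiv (i', j')) ↔
        ((j : ℤ) - (i : ℤ) = (j' : ℤ) - (i' : ℤ))) ∧
    (Finset.univ.image η).card = m + n - 1 := by
  have C : Ctx q Q := ⟨hq, hx, hact⟩
  exact ⟨fun i j => (good_all C hseq _ i j rfl).1, good_eta C hseq, rank_eq C hseq hm hn⟩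
end
end
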